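/- Let H > 0 and let Ω ⊆ ℝ² be an open connected set. Let C ⊆ ∂Ω be a nonempty relatively open arc of the boundary whose exterior curvature is at least 2H, in the sense that for every P ∈ C there exist a point z_P ∈ ℝ² with |P − z_P| = 1/(2H) and an open neighborhood V_P of P such that Ω ∩ V_P ⊆ {Q : |Q − z_P| < 1/(2H)}. Let (u_n) be a sequence of solutions of (CMC) on Ω, each continuous on Ω ∪ C, and let M ∈ ℝ be such that |u_n| ≤ M on C for every n. Then no divergence line of (u_n) has an endpoint at a point of C: for every divergence line L of (u_n), the closure of L in ℝ² does not meet C. -/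

import Mathlib

/-!
Let `X = ∇u / W`, so that `|X| < 1` and `div X = 2 H`. Suppose that a divergence line `L` ends at
`P ∈ C`. After a choice of orientation, `L` contains an arc `0 < θ < θ₁` issued from `P` of a circle
of radius `R = 1 / (2 H)`, on which the radial component `X_r` of `X` tends to `1` along a
subsequence. The curvature hypothesis gives a disc of radius `R` with `P` on its boundary which
contains `Ω` near `P`; since `L` enters it, `Ω` lies near `P` in a sector of opening less than `π`,
cut in two by `L`. The contradiction comes from two opposite estimates of the set where `|u|` is
large, next to an interior sub-arc of `L`.

*Upper bound* (`Corner.integral_weight_le`). For each sign `ς = ±1`, consider the side `ς` of `L`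
(outside or inside its circle) and the field `Y = χ β(u) (e_A + ς X)`, where `β(u)` is a smooth
indicator of `ς u > m`, with `m` greater than the bound on `C`, at scale `T`; `e_A` is the unit
radial field from a point `A` close to `P`; and `χ` is a function of `|x - A|` which cuts the corner
off. The field vanishes near `C`, so it extends by zero across the boundary of `Ω`. One has
`div Y ≥ 2 H χ β(u) - O(1 / T)`: the term in `∇χ` is nonnegative because `|e_A| = 1` and `|X| < 1`,
the one in `β'(u)` is at least `-|β'(u)| χ`, of order `1 / T`, because `∇u · X ≥ W - 1`, and
`div e_A = 1 / |x - A|` is at least `4 H`. The flux of `Y` through `L` is at most the integral of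
`χ β(u) (1 - X_r)`, which tends to `0` along the subsequence. Hence the integral of `χ β(u)` is at
most `O(1 / T) + o(1)` on either side of `L`.

*Lower bound* (`Strip.exists_lt_deficit_zero`). In a polar rectangle around a sub-arc of `L`, the
divergence theorem shows that the deficit `y(x) = ∫ ζ (1 - X_r)` at depth `x` inside the circle is
`O(y(0) + x²)`, while the proportion of large values of `|u|` on nearby circles is controlled by the
integral of `β(u)` over both sides. If both `y(0)` and that integral are small, then most of each
circle at depth `x ≥ √y(0)` carries moderate values of `u`, and, since `W² ≥ 1 / (2 (1 - X_r))`, an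
area density of order at least `1 / x`. Integrating in `x` gives a weighted area of the graph, at
heights of order `T`, which diverges logarithmically as `y(0) → 0`; but the divergence theorem for
`T arctan(u / T) X` bounds this area by a multiple of `T + 1`. So `y(0)` is bounded below, although
`y(0) → 0` along a divergence line.
-/

open Real MeasureTheory Filter Set

noncomputable section

/-- Euclidean norm on `ℝ × ℝ`. -/
def enorm2 (p : ℝ × ℝ) : ℝ := Real.sqrt (p.1 ^ 2 + p.2 ^ 2)

/-- Partial derivative in the `x` direction. -/
def pdx (u : ℝ × ℝ → ℝ) (p : ℝ × ℝ) : ℝ := fderiv ℝ u p (1, 0)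

/-- Partial derivative in the `y` direction. -/
def pdy (u : ℝ × ℝ → ℝ) (p : ℝ × ℝ) : ℝ := fderiv ℝ u p (0, 1)

/-- The area element `W_u = √(1 + |∇u|²)`. -/
def Wgraph (u : ℝ × ℝ → ℝ) (p : ℝ × ℝ) : ℝ :=
  Real.sqrt (1 + (pdx u p) ^ 2 + (pdy u p) ^ 2)

/-- Upward unit normal of the graph of `u`. -/
def normalVec (u : ℝ × ℝ → ℝ) (p : ℝ × ℝ) : ℝ × ℝ × ℝ :=
  (-pdx u p / Wgraph u p, -pdy u p / Wgraph u p, 1 / Wgraph u p)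

/-- `u` is a (C²) solution of the constant mean curvature `H` equation on `Ω`. -/
def IsCMCSolution (H : ℝ) (Ω : Set (ℝ × ℝ)) (u : ℝ × ℝ → ℝ) : Prop :=
  ContDiffOn ℝ 2 u Ω ∧ ∀ p ∈ Ω,
    (1 + (pdy u p) ^ 2) * pdx (fun q => pdx u q) p
      - 2 * (pdx u p) * (pdy u p) * pdy (fun q => pdx u q) p
      + (1 + (pdx u p) ^ 2) * pdy (fun q => pdy u q) p
    = 2 * H * (1 + (pdx u p) ^ 2 + (pdy u p) ^ 2) ^ ((3 : ℝ) / 2)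

/-- `C` is a divergence line of the sequence `u` on `Ω`. -/
def IsDivergenceLine (H : ℝ) (Ω : Set (ℝ × ℝ)) (u : ℕ → ℝ × ℝ → ℝ)
    (C : Set (ℝ × ℝ)) : Prop :=
  ∃ z₁ : ℝ × ℝ, C ⊆ Ω ∧ (∀ q ∈ C, enorm2 (q - z₁) = 1 / (2 * H)) ∧
    IsConnected C ∧ C.Nontrivial ∧
    ∃ φ : ℕ → ℕ, StrictMono φ ∧ ∀ Q ∈ C,
      Tendsto (fun n => normalVec (u (φ n)) Q) atTop
        (nhds (2 * H * (z₁.1 - Q.1), 2 * H * (z₁.2 - Q.2), 0))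

/-! ### Planar vector fields -/

/-- Euclidean inner product of `ℝ × ℝ`, whose own norm is the sup norm. -/
def planeDot (v w : ℝ × ℝ) : ℝ := v.1 * w.1 + v.2 * w.2

local infixl:70 " ⬝ " => planeDot

/-- Euclidean gradient of a function on `ℝ × ℝ`. -/
def planeGrad (f : ℝ × ℝ → ℝ) (q : ℝ × ℝ) : ℝ × ℝ := (pdx f q, pdy f q)

/-- Divergence of a vector field on `ℝ × ℝ`. -/
def planeDiv (Y : ℝ × ℝ → ℝ × ℝ) (q : ℝ × ℝ) : ℝ :=
  (fderiv ℝ Y q (1, 0)).1 + (fderiv ℝ Y q (0, 1)).2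

section PlaneDot

variable (v v' w : ℝ × ℝ) (a : ℝ)

lemma planeDot_comm : v ⬝ w = w ⬝ v := by simp only [planeDot]; ring

lemma planeDot_smul_left : (a • v) ⬝ w = a * (v ⬝ w) := by
  simp only [planeDot, Prod.smul_fst, Prod.smul_snd, smul_eq_mul]; ring

lemma planeDot_smul_right : v ⬝ (a • w) = a * (v ⬝ w) := by
  rw [planeDot_comm, planeDot_smul_left, planeDot_comm]

lemma planeDot_add_left : (v + v') ⬝ w = v ⬝ w + v' ⬝ w := by
  simp only [planeDot, Prod.fst_add, Prod.snd_add]; ring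

lemma planeDot_add_right : w ⬝ (v + v') = w ⬝ v + w ⬝ v' := by
  simp only [planeDot, Prod.fst_add, Prod.snd_add]; ring

lemma planeDot_self_nonneg : 0 ≤ v ⬝ v := add_nonneg (mul_self_nonneg _) (mul_self_nonneg _)

lemma enorm2_sq : enorm2 v ^ 2 = v ⬝ v := by
  rw [enorm2, Real.sq_sqrt (by positivity), planeDot]; ring

lemma planeDot_sq_le : (v ⬝ w) ^ 2 ≤ (v ⬝ v) * (w ⬝ w) := by
  simp only [planeDot]; nlinarith [sq_nonneg (v.1 * w.2 - v.2 * w.1)]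

lemma planeDot_eq_add_of_orthonormal {e f : ℝ × ℝ} (he : e ⬝ e = 1) (hf : f ⬝ f = 1)
    (hef : e ⬝ f = 0) : v ⬝ w = (v ⬝ e) * (w ⬝ e) + (v ⬝ f) * (w ⬝ f) := by
  simp only [planeDot] at *
  set Δ := e.1 * f.2 - e.2 * f.1
  have hΔ_sq : Δ ^ 2 = 1 := by
    linear_combination hf + (f.1 * f.1 + f.2 * f.2) * he - (e.1 * f.1 + e.2 * f.2) * hef
  have hf₁ : f.1 = -(e.2 * Δ) := by linear_combination e.1 * hef - f.1 * he
  have hf₂ : f.2 = e.1 * Δ := by linear_combination e.2 * hef - f.2 * he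
  rw [hf₁, hf₂]
  linear_combination (-(v.1 * w.1 + v.2 * w.2)) * he
    - (v.1 * e.2 - v.2 * e.1) * (w.1 * e.2 - w.2 * e.1) * hΔ_sq

end PlaneDot

lemma planeGrad_comp {f : ℝ × ℝ → ℝ} {g : ℝ → ℝ} {q : ℝ × ℝ} (hf : DifferentiableAt ℝ f q)
    (hg : DifferentiableAt ℝ g (f q)) :
    planeGrad (fun x => g (f x)) q = deriv g (f q) • planeGrad f q := by
  have h : HasFDerivAt (fun x => g (f x)) (deriv g (f q) • fderiv ℝ f q) q :=
    hg.hasDerivAt.comp_hasFDerivAt q hf.hasFDerivAt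
  simp only [planeGrad, pdx, pdy, h.fderiv, smul_apply, Prod.smul_mk]

lemma planeGrad_mul {f g : ℝ × ℝ → ℝ} {q : ℝ × ℝ} (hf : DifferentiableAt ℝ f q)
    (hg : DifferentiableAt ℝ g q) :
    planeGrad (fun x => f x * g x) q = f q • planeGrad g q + g q • planeGrad f q := by
  simp only [planeGrad, pdx, pdy, fderiv_fun_mul hf hg, add_apply,
    smul_apply, Prod.smul_mk, Prod.mk_add_mk]

lemma planeDiv_smul {f : ℝ × ℝ → ℝ} {Y : ℝ × ℝ → ℝ × ℝ} {q : ℝ × ℝ} (hf : DifferentiableAt ℝ f q)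
    (hY : DifferentiableAt ℝ Y q) :
    planeDiv (fun x => f x • Y x) q = f q * planeDiv Y q + planeGrad f q ⬝ Y q := by
  simp only [planeDiv, fderiv_fun_smul hf hY, add_apply,
    smul_apply, ContinuousLinearMap.smulRight_apply, Prod.fst_add, Prod.snd_add,
    Prod.smul_fst, Prod.smul_snd, smul_eq_mul, planeDot, planeGrad, pdx, pdy]
  ring

lemma planeDiv_add {Y Z : ℝ × ℝ → ℝ × ℝ} {q : ℝ × ℝ} (hY : DifferentiableAt ℝ Y q)
    (hZ : DifferentiableAt ℝ Z q) :
    planeDiv (fun x => Y x + Z x) q = planeDiv Y q + planeDiv Z q := by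
  simp only [planeDiv, fderiv_fun_add hY hZ, add_apply, Prod.fst_add,
    Prod.snd_add]
  ring

lemma planeDiv_eq_of_orthonormal {e f : ℝ × ℝ} (he : e ⬝ e = 1) (hf : f ⬝ f = 1)
    (hef : e ⬝ f = 0) (Y : ℝ × ℝ → ℝ × ℝ) (q : ℝ × ℝ) :
    planeDiv Y q = fderiv ℝ Y q e ⬝ e + fderiv ℝ Y q f ⬝ f := by
  have hfderiv (v : ℝ × ℝ) : fderiv ℝ Y q v
      = v.1 • fderiv ℝ Y q (1, 0) + v.2 • fderiv ℝ Y q (0, 1) := by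
    rw [← map_smul, ← map_smul, ← map_add]
    simp
  have h₁₁ := planeDot_eq_add_of_orthonormal (1, 0) (1, 0) he hf hef
  have h₁₂ := planeDot_eq_add_of_orthonormal (1, 0) (0, 1) he hf hef
  have h₂₂ := planeDot_eq_add_of_orthonormal (0, 1) (0, 1) he hf hef
  rw [hfderiv e, hfderiv f, planeDiv]
  simp only [planeDot, Prod.fst_add, Prod.snd_add, Prod.smul_fst, Prod.smul_snd, smul_eq_mul]
    at h₁₁ h₁₂ h₂₂ ⊢
  linear_combination (fderiv ℝ Y q (1, 0)).1 * h₁₁ + (fderiv ℝ Y q (0, 1)).2 * h₂₂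
    + ((fderiv ℝ Y q (1, 0)).2 + (fderiv ℝ Y q (0, 1)).1) * h₁₂

/-! ### The slope field of a graph -/

/-- The field `X = ∇u / W_u`, minus the horizontal part of the unit normal of the graph of `u`. -/
def slopeField (u : ℝ × ℝ → ℝ) (q : ℝ × ℝ) : ℝ × ℝ := (Wgraph u q)⁻¹ • planeGrad u q

section SlopeField

variable (u : ℝ × ℝ → ℝ) (q : ℝ × ℝ)

lemma Wgraph_pos : 0 < Wgraph u q := Real.sqrt_pos.2 (by positivity)

lemma Wgraph_sq : Wgraph u q ^ 2 = 1 + planeGrad u q ⬝ planeGrad u q := by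
  rw [Wgraph, Real.sq_sqrt (by positivity), planeDot, planeGrad]
  ring

lemma one_le_Wgraph : 1 ≤ Wgraph u q := by
  rw [Wgraph, Real.one_le_sqrt, add_assoc]
  exact le_add_of_nonneg_right (by positivity)

lemma Wgraph_smul_slopeField : Wgraph u q • slopeField u q = planeGrad u q :=
  smul_inv_smul₀ (Wgraph_pos u q).ne' _

lemma one_sub_slopeField_dot_self_mul :
    (1 - slopeField u q ⬝ slopeField u q) * Wgraph u q ^ 2 = 1 := by
  have h := Wgraph_sq u q
  rw [← Wgraph_smul_slopeField, planeDot_smul_left, planeDot_smul_right] at h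
  linear_combination h

lemma slopeField_dot_self_lt_one : slopeField u q ⬝ slopeField u q < 1 := by
  have h := one_sub_slopeField_dot_self_mul u q
  have : 0 < 1 - slopeField u q ⬝ slopeField u q :=
    pos_of_mul_pos_left (h ▸ one_pos) (sq_nonneg _)
  linarith

lemma planeGrad_dot_slopeField_nonneg : 0 ≤ planeGrad u q ⬝ slopeField u q := by
  rw [slopeField, planeDot_smul_right]
  exact mul_nonneg (inv_nonneg.2 (Wgraph_pos u q).le) (planeDot_self_nonneg _)

lemma Wgraph_sub_one_le : Wgraph u q - 1 ≤ planeGrad u q ⬝ slopeField u q := by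
  have hW := Wgraph_pos u q
  have hdot : planeGrad u q ⬝ slopeField u q = Wgraph u q - (Wgraph u q)⁻¹ := by
    rw [slopeField, planeDot_smul_right]
    field_simp
    linear_combination -Wgraph_sq u q
  rw [hdot]
  linarith [inv_le_one_of_one_le₀ (one_le_Wgraph u q)]

end SlopeField

namespace IsCMCSolution

variable {H : ℝ} {Ω : Set (ℝ × ℝ)} {u : ℝ × ℝ → ℝ} {q : ℝ × ℝ}

lemma contDiffAt (hu : IsCMCSolution H Ω u) (hΩ : IsOpen Ω) (hq : q ∈ Ω) : ContDiffAt ℝ 2 u q :=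
  hu.1.contDiffAt (hΩ.mem_nhds hq)

lemma contDiffAt_pdx (hu : IsCMCSolution H Ω u) (hΩ : IsOpen Ω) (hq : q ∈ Ω) :
    ContDiffAt ℝ 1 (pdx u) q :=
  ((hu.contDiffAt hΩ hq).fderiv_right (by norm_num)).clm_apply contDiffAt_const

lemma contDiffAt_pdy (hu : IsCMCSolution H Ω u) (hΩ : IsOpen Ω) (hq : q ∈ Ω) :
    ContDiffAt ℝ 1 (pdy u) q :=
  ((hu.contDiffAt hΩ hq).fderiv_right (by norm_num)).clm_apply contDiffAt_const

lemma contDiffAt_planeGrad (hu : IsCMCSolution H Ω u) (hΩ : IsOpen Ω) (hq : q ∈ Ω) :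
    ContDiffAt ℝ 1 (planeGrad u) q :=
  (hu.contDiffAt_pdx hΩ hq).prodMk (hu.contDiffAt_pdy hΩ hq)

lemma contDiffAt_Wgraph (hu : IsCMCSolution H Ω u) (hΩ : IsOpen Ω) (hq : q ∈ Ω) :
    ContDiffAt ℝ 1 (Wgraph u) q :=
  ((contDiffAt_const.add ((hu.contDiffAt_pdx hΩ hq).pow 2)).add
    ((hu.contDiffAt_pdy hΩ hq).pow 2)).sqrt (by positivity)

lemma contDiffAt_slopeField (hu : IsCMCSolution H Ω u) (hΩ : IsOpen Ω) (hq : q ∈ Ω) :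
    ContDiffAt ℝ 1 (slopeField u) q :=
  ((hu.contDiffAt_Wgraph hΩ hq).inv (Wgraph_pos u q).ne').smul (hu.contDiffAt_planeGrad hΩ hq)

lemma pdx_pdy_eq_pdy_pdx (hu : IsCMCSolution H Ω u) (hΩ : IsOpen Ω) (hq : q ∈ Ω) :
    pdx (pdy u) q = pdy (pdx u) q := by
  have hC2 := hu.contDiffAt hΩ hq
  have hd : DifferentiableAt ℝ (fderiv ℝ u) q :=
    (hC2.fderiv_right (m := 1) (by norm_num)).differentiableAt (by norm_num)
  have hsnd (v w : ℝ × ℝ) :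
      fderiv ℝ (fun x => fderiv ℝ u x v) q w = fderiv ℝ (fderiv ℝ u) q w v := by
    rw [fderiv_clm_apply hd (differentiableAt_const v)]
    simp
  exact (hsnd _ _).trans (((hC2.isSymmSndFDerivAt (by simp)).eq _ _).trans (hsnd _ _).symm)

lemma Wgraph_mul_fderiv_Wgraph (hu : IsCMCSolution H Ω u) (hΩ : IsOpen Ω) (hq : q ∈ Ω)
    (v : ℝ × ℝ) : Wgraph u q * fderiv ℝ (Wgraph u) q v
      = pdx u q * fderiv ℝ (pdx u) q v + pdy u q * fderiv ℝ (pdy u) q v := by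
  have hx := ((hu.contDiffAt_pdx hΩ hq).differentiableAt one_ne_zero).hasFDerivAt
  have hy := ((hu.contDiffAt_pdy hΩ hq).differentiableAt one_ne_zero).hasFDerivAt
  have hW : HasFDerivAt (Wgraph u) ((1 / (2 * Wgraph u q)) •
      ((2 • pdx u q ^ (2 - 1)) • fderiv ℝ (pdx u) q + (2 • pdy u q ^ (2 - 1)) • fderiv ℝ (pdy u) q))
      q := (((hx.pow 2).const_add 1).add (hy.pow 2)).sqrt (by simp only [Pi.add_apply]; positivity)
  have hpos := (Wgraph_pos u q).ne'
  rw [hW.fderiv]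
  simp only [smul_apply, add_apply, smul_eq_mul, nsmul_eq_mul]
  field_simp
  ring

lemma planeDiv_slopeField (hu : IsCMCSolution H Ω u) (hΩ : IsOpen Ω) (hq : q ∈ Ω) :
    planeDiv (slopeField u) q = 2 * H := by
  have hX := (hu.contDiffAt_slopeField hΩ hq).differentiableAt one_ne_zero
  have hW := (hu.contDiffAt_Wgraph hΩ hq).differentiableAt one_ne_zero
  have hpos := Wgraph_pos u q
  have hlaplace : pdx (pdx u) q + pdy (pdy u) q
      = Wgraph u q * planeDiv (slopeField u) q + planeGrad (Wgraph u) q ⬝ slopeField u q := by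
    rw [← planeDiv_smul hW hX, funext (Wgraph_smul_slopeField u), planeDiv,
      DifferentiableAt.fderiv_prodMk]
    · rfl
    · exact (hu.contDiffAt_pdx hΩ hq).differentiableAt one_ne_zero
    · exact (hu.contDiffAt_pdy hΩ hq).differentiableAt one_ne_zero
  have hWx : Wgraph u q * pdx (Wgraph u) q = pdx u q * pdx (pdx u) q + pdy u q * pdx (pdy u) q :=
    hu.Wgraph_mul_fderiv_Wgraph hΩ hq (1, 0)
  have hWy : Wgraph u q * pdy (Wgraph u) q = pdx u q * pdy (pdx u) q + pdy u q * pdy (pdy u) q :=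
    hu.Wgraph_mul_fderiv_Wgraph hΩ hq (0, 1)
  have hsymm := hu.pdx_pdy_eq_pdy_pdx hΩ hq
  have hpde := hu.2 q hq
  have hpow : (1 + pdx u q ^ 2 + pdy u q ^ 2) ^ ((3 : ℝ) / 2) = Wgraph u q ^ 3 := by
    rw [Wgraph, Real.sqrt_eq_rpow, ← Real.rpow_mul_natCast (by positivity)]
    norm_num
  have hdot : Wgraph u q * (planeGrad (Wgraph u) q ⬝ slopeField u q)
      = pdx (Wgraph u) q * pdx u q + pdy (Wgraph u) q * pdy u q := by
    rw [← planeDot_smul_right, Wgraph_smul_slopeField]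
    rfl
  have hsq : Wgraph u q ^ 2 = 1 + pdx u q ^ 2 + pdy u q ^ 2 := Real.sq_sqrt (by positivity)
  rw [hpow] at hpde
  apply mul_left_cancel₀ (pow_ne_zero 3 hpos.ne')
  linear_combination hpde - Wgraph u q ^ 2 * hlaplace - Wgraph u q * hdot
    + (pdx (pdx u) q + pdy (pdy u) q) * hsq - pdx u q * hWx - pdy u q * hWy
    - pdx u q * pdy u q * hsymm

lemma contDiffAt_comp_smul_slopeField (hu : IsCMCSolution H Ω u) (hΩ : IsOpen Ω) (hq : q ∈ Ω)
    {β : ℝ → ℝ} (hβ : ContDiff ℝ 1 β) : ContDiffAt ℝ 1 (fun x => β (u x) • slopeField u x) q :=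
  (hβ.contDiffAt.comp q ((hu.contDiffAt hΩ hq).of_le one_le_two)).smul
    (hu.contDiffAt_slopeField hΩ hq)

lemma planeDiv_comp_smul_slopeField (hu : IsCMCSolution H Ω u) (hΩ : IsOpen Ω) (hq : q ∈ Ω)
    {β : ℝ → ℝ} (hβ : DifferentiableAt ℝ β (u q)) :
    planeDiv (fun x => β (u x) • slopeField u x) q
      = 2 * H * β (u q) + deriv β (u q) * (planeGrad u q ⬝ slopeField u q) := by
  have hdiff := (hu.contDiffAt hΩ hq).differentiableAt two_ne_zero
  rw [planeDiv_smul (f := fun x => β (u x)) (hβ.comp q hdiff)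
    ((hu.contDiffAt_slopeField hΩ hq).differentiableAt one_ne_zero), hu.planeDiv_slopeField hΩ hq,
    planeGrad_comp hdiff hβ, planeDot_smul_left]
  ring

end IsCMCSolution

/-! ### Divergence theorem in polar coordinates -/

lemma hasDerivAt_planeDot {f g : ℝ → ℝ × ℝ} {f' g' : ℝ × ℝ} {t : ℝ} (hf : HasDerivAt f f' t)
    (hg : HasDerivAt g g' t) : HasDerivAt (fun s => f s ⬝ g s) (f' ⬝ g t + f t ⬝ g') t := by
  have hfst {h : ℝ → ℝ × ℝ} {h' : ℝ × ℝ} (hh : HasDerivAt h h' t) :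
      HasDerivAt (fun s => (h s).1) h'.1 t := by simpa using hh.hasFDerivAt.fst.hasDerivAt
  have hsnd {h : ℝ → ℝ × ℝ} {h' : ℝ × ℝ} (hh : HasDerivAt h h' t) :
      HasDerivAt (fun s => (h s).2) h'.2 t := by simpa using hh.hasFDerivAt.snd.hasDerivAt
  refine (((hfst hf).mul (hfst hg)).add ((hsnd hf).mul (hsnd hg))).congr_deriv ?_
  simp only [planeDot]
  ring

lemma contDiffAt_planeDot {E : Type*} [NormedAddCommGroup E] [NormedSpace ℝ E] {f g : E → ℝ × ℝ}
    {x : E} {n : WithTop ℕ∞} (hf : ContDiffAt ℝ n f x) (hg : ContDiffAt ℝ n g x) :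
    ContDiffAt ℝ n (fun y => f y ⬝ g y) x :=
  (hf.fst.mul hg.fst).add (hf.snd.mul hg.snd)

lemma continuousOn_planeDot {E : Type*} [TopologicalSpace E] {f g : E → ℝ × ℝ} {s : Set E}
    (hf : ContinuousOn f s) (hg : ContinuousOn g s) : ContinuousOn (fun y => f y ⬝ g y) s :=
  (hf.fst.mul hg.fst).add (hf.snd.mul hg.snd)

lemma integral_partials_eq_boundary {f g : ℝ × ℝ → ℝ} {a b c d : ℝ}
    (hf : ∀ x ∈ uIcc a b ×ˢ uIcc c d, ContDiffAt ℝ 1 f x)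
    (hg : ∀ x ∈ uIcc a b ×ˢ uIcc c d, ContDiffAt ℝ 1 g x) :
    (∫ t in a..b, ∫ θ in c..d, deriv (fun s => f (s, θ)) t + deriv (fun s => g (t, s)) θ)
      = (((∫ t in a..b, g (t, d)) - ∫ t in a..b, g (t, c)) + ∫ θ in c..d, f (b, θ))
        - ∫ θ in c..d, f (a, θ) := by
  have hsub : Ioo (min a b) (max a b) ×ˢ Ioo (min c d) (max c d) ⊆ uIcc a b ×ˢ uIcc c d :=
    prod_mono Ioo_subset_Icc_self Ioo_subset_Icc_self
  have hdiff {h : ℝ × ℝ → ℝ} (hh : ∀ x ∈ uIcc a b ×ˢ uIcc c d, ContDiffAt ℝ 1 h x) :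
      ∀ x ∈ uIcc a b ×ˢ uIcc c d, HasFDerivAt h (fderiv ℝ h x) x := fun x hx =>
    ((hh x hx).differentiableAt one_ne_zero).hasFDerivAt
  have hcont {h : ℝ × ℝ → ℝ} (hh : ∀ x ∈ uIcc a b ×ˢ uIcc c d, ContDiffAt ℝ 1 h x) (v : ℝ × ℝ) :
      ContinuousOn (fun x => fderiv ℝ h x v) (uIcc a b ×ˢ uIcc c d) := fun x hx =>
    (((hh x hx).continuousAt_fderiv one_ne_zero).clm_apply continuousAt_const).continuousWithinAt
  rw [← integral2_divergence_prod_of_hasFDerivAt f g (fderiv ℝ f) (fderiv ℝ g) a c b d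
    (fun x hx => (hf x hx).continuousAt.continuousWithinAt)
    (fun x hx => (hg x hx).continuousAt.continuousWithinAt)
    (fun x hx => hdiff hf x (hsub hx)) (fun x hx => hdiff hg x (hsub hx))
    (((hcont hf _).add (hcont hg _)).integrableOn_compact (isCompact_uIcc.prod isCompact_uIcc))]
  refine intervalIntegral.integral_congr fun t ht => intervalIntegral.integral_congr fun θ hθ => ?_
  have hft : HasDerivAt (fun s => f (s, θ)) (fderiv ℝ f (t, θ) (1, 0)) t :=
    (hdiff hf (t, θ) ⟨ht, hθ⟩).comp_hasDerivAt t ((hasDerivAt_id t).prodMk (hasDerivAt_const t θ))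
  have hgθ : HasDerivAt (fun s => g (t, s)) (fderiv ℝ g (t, θ) (0, 1)) θ :=
    (hdiff hg (t, θ) ⟨ht, hθ⟩).comp_hasDerivAt θ ((hasDerivAt_const θ t).prodMk (hasDerivAt_id θ))
  simp only [hft.deriv, hgθ.deriv]

/-- Polar coordinates adapted to a circle of centre `z` and radius `R`: the angle is measured from
the unit vector `e₁` towards the orthogonal unit vector `e₂`, hence in either sense. -/
structure Frame where
  z : ℝ × ℝ
  e₁ : ℝ × ℝ
  e₂ : ℝ × ℝ
  R : ℝ
  e₁_dot_self : e₁ ⬝ e₁ = 1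
  e₂_dot_self : e₂ ⬝ e₂ = 1
  e₁_dot_e₂ : e₁ ⬝ e₂ = 0
  R_pos : 0 < R

namespace Frame

variable (F : Frame) (ς t θ : ℝ)

/-- The radial unit vector at angle `θ`. -/
def radial (θ : ℝ) : ℝ × ℝ := cos θ • F.e₁ + sin θ • F.e₂

/-- The angular unit vector at angle `θ`, the derivative of `radial`. -/
def angular (θ : ℝ) : ℝ × ℝ := -sin θ • F.e₁ + cos θ • F.e₂

/-- The point at angle `θ` on the circle of radius `R + ς t`; for `ς = ±1`, `t` is the distance to
the reference circle, counted positively outwards or inwards. -/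
def point (ς t θ : ℝ) : ℝ × ℝ := F.z + (F.R + ς * t) • F.radial θ

lemma radial_dot_radial : F.radial θ ⬝ F.radial θ = 1 := by
  have h₂₁ := planeDot_comm F.e₁ F.e₂ ▸ F.e₁_dot_e₂
  simp only [radial, planeDot_add_left, planeDot_add_right, planeDot_smul_left, planeDot_smul_right,
    F.e₁_dot_self, F.e₂_dot_self, F.e₁_dot_e₂, h₂₁]
  linear_combination sin_sq_add_cos_sq θ

lemma angular_dot_angular : F.angular θ ⬝ F.angular θ = 1 := by
  have h₂₁ := planeDot_comm F.e₁ F.e₂ ▸ F.e₁_dot_e₂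
  simp only [angular, planeDot_add_left, planeDot_add_right, planeDot_smul_left,
    planeDot_smul_right, F.e₁_dot_self, F.e₂_dot_self, F.e₁_dot_e₂, h₂₁]
  linear_combination sin_sq_add_cos_sq θ

lemma radial_dot_angular : F.radial θ ⬝ F.angular θ = 0 := by
  have h₂₁ := planeDot_comm F.e₁ F.e₂ ▸ F.e₁_dot_e₂
  simp only [radial, angular, planeDot_add_left, planeDot_add_right, planeDot_smul_left,
    planeDot_smul_right, F.e₁_dot_self, F.e₂_dot_self, F.e₁_dot_e₂, h₂₁]
  ring

lemma hasDerivAt_radial : HasDerivAt F.radial (F.angular θ) θ :=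
  ((hasDerivAt_cos θ).smul_const F.e₁).add ((hasDerivAt_sin θ).smul_const F.e₂)

lemma hasDerivAt_angular : HasDerivAt F.angular (-F.radial θ) θ :=
  (((hasDerivAt_sin θ).neg.smul_const F.e₁).add ((hasDerivAt_cos θ).smul_const F.e₂)).congr_deriv
    (by simp only [radial, neg_add, neg_smul])

lemma contDiff_radial : ContDiff ℝ 1 F.radial :=
  (contDiff_cos.smul contDiff_const).add (contDiff_sin.smul contDiff_const)

lemma contDiff_angular : ContDiff ℝ 1 F.angular :=
  (contDiff_sin.neg.smul contDiff_const).add (contDiff_cos.smul contDiff_const)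

@[fun_prop]
lemma continuous_radial : Continuous F.radial := F.contDiff_radial.continuous

@[fun_prop]
lemma continuous_angular : Continuous F.angular := F.contDiff_angular.continuous

lemma contDiff_point : ContDiff ℝ 1 (fun x : ℝ × ℝ => F.point ς x.1 x.2) :=
  contDiff_const.add ((contDiff_const.add (contDiff_const.mul contDiff_fst)).smul
    (F.contDiff_radial.comp contDiff_snd))

lemma continuous_point : Continuous (fun x : ℝ × ℝ => F.point ς x.1 x.2) :=
  (F.contDiff_point ς).continuous

lemma hasDerivAt_point_fst : HasDerivAt (fun s => F.point ς s θ) (ς • F.radial θ) t := by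
  have hr : HasDerivAt (fun s => F.R + ς * s) ς t := by
    simpa using ((hasDerivAt_id t).const_mul ς).const_add F.R
  exact (hr.smul_const (F.radial θ)).const_add F.z

lemma hasDerivAt_point_snd :
    HasDerivAt (fun s => F.point ς t s) ((F.R + ς * t) • F.angular θ) θ :=
  ((F.hasDerivAt_radial θ).const_smul (F.R + ς * t)).const_add F.z

section PolarDivergence

variable {F ς t θ} {Y : ℝ × ℝ → ℝ × ℝ} {κ ζ : ℝ → ℝ}

lemma hasDerivAt_radial_flux (hY : DifferentiableAt ℝ Y (F.point ς t θ))
    (hκ : DifferentiableAt ℝ κ t) (hς : ς ^ 2 = 1) :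
    HasDerivAt (fun s => (F.R + ς * s) * κ s * ζ θ * (ς * (Y (F.point ς s θ) ⬝ F.radial θ)))
      (κ t * ζ θ * (Y (F.point ς t θ) ⬝ F.radial θ)
        + (F.R + ς * t) * deriv κ t * ζ θ * (ς * (Y (F.point ς t θ) ⬝ F.radial θ))
        + (F.R + ς * t) * κ t * ζ θ *
          (fderiv ℝ Y (F.point ς t θ) (F.radial θ) ⬝ F.radial θ)) t := by
  have hr : HasDerivAt (fun s => F.R + ς * s) ς t := by
    simpa using ((hasDerivAt_id t).const_mul ς).const_add F.R
  have hYr : HasDerivAt (fun s => Y (F.point ς s θ) ⬝ F.radial θ)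
      (ς * (fderiv ℝ Y (F.point ς t θ) (F.radial θ) ⬝ F.radial θ)) t :=
    (hasDerivAt_planeDot (hY.hasFDerivAt.comp_hasDerivAt t (F.hasDerivAt_point_fst ς t θ))
      (hasDerivAt_const t (F.radial θ))).congr_deriv
      (by rw [map_smul, planeDot_smul_left]; simp [planeDot])
  refine (((hr.mul hκ.hasDerivAt).mul_const (ζ θ)).mul (hYr.const_mul ς)).congr_deriv ?_
  simp only [Pi.mul_apply]
  linear_combination (κ t * ζ θ * (Y (F.point ς t θ) ⬝ F.radial θ) + (F.R + ς * t) * κ t * ζ θ *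
    (fderiv ℝ Y (F.point ς t θ) (F.radial θ) ⬝ F.radial θ)) * hς

lemma hasDerivAt_angular_flux (hY : DifferentiableAt ℝ Y (F.point ς t θ))
    (hζ : DifferentiableAt ℝ ζ θ) :
    HasDerivAt (fun s => κ t * ζ s * (Y (F.point ς t s) ⬝ F.angular s))
      (κ t * deriv ζ θ * (Y (F.point ς t θ) ⬝ F.angular θ)
        + (F.R + ς * t) * κ t * ζ θ *
          (fderiv ℝ Y (F.point ς t θ) (F.angular θ) ⬝ F.angular θ)
        - κ t * ζ θ * (Y (F.point ς t θ) ⬝ F.radial θ)) θ := by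
  have hYθ := hasDerivAt_planeDot
    (hY.hasFDerivAt.comp_hasDerivAt θ (F.hasDerivAt_point_snd ς t θ)) (F.hasDerivAt_angular θ)
  refine ((hζ.hasDerivAt.const_mul (κ t)).mul hYθ).congr_deriv ?_
  simp only [map_smul, planeDot_smul_left, ← neg_one_smul ℝ (F.radial θ), planeDot_smul_right,
    Function.comp_apply]
  ring

/-- Divergence theorem on a polar rectangle for the field `κ(t) ζ(θ) Y`. -/
lemma integral_polar_divergence (hς : ς ^ 2 = 1) (hκ : ContDiff ℝ 1 κ) (hζ : ContDiff ℝ 1 ζ)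
    {a b c d : ℝ} (hY : ∀ t ∈ uIcc a b, ∀ θ ∈ uIcc c d, ContDiffAt ℝ 1 Y (F.point ς t θ)) :
    (∫ t in a..b, ∫ θ in c..d,
        ((F.R + ς * t) * κ t * ζ θ * planeDiv Y (F.point ς t θ)
          + (F.R + ς * t) * deriv κ t * ζ θ * (ς * (Y (F.point ς t θ) ⬝ F.radial θ))
          + κ t * deriv ζ θ * (Y (F.point ς t θ) ⬝ F.angular θ)))
      = (((∫ t in a..b, κ t * ζ d * (Y (F.point ς t d) ⬝ F.angular d))
            - ∫ t in a..b, κ t * ζ c * (Y (F.point ς t c) ⬝ F.angular c))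
          + ∫ θ in c..d, (F.R + ς * b) * κ b * ζ θ * (ς * (Y (F.point ς b θ) ⬝ F.radial θ)))
        - ∫ θ in c..d, (F.R + ς * a) * κ a * ζ θ * (ς * (Y (F.point ς a θ) ⬝ F.radial θ)) := by
  have hκ' : ContDiff ℝ 1 (fun x : ℝ × ℝ => κ x.1) := hκ.comp contDiff_fst
  have hζ' : ContDiff ℝ 1 (fun x : ℝ × ℝ => ζ x.2) := hζ.comp contDiff_snd
  have hY' : ∀ x ∈ uIcc a b ×ˢ uIcc c d,
      ContDiffAt ℝ 1 (fun x : ℝ × ℝ => Y (F.point ς x.1 x.2)) x := fun x hx =>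
    (hY x.1 hx.1 x.2 hx.2).comp x (F.contDiff_point ς).contDiffAt
  rw [← integral_partials_eq_boundary
    (f := fun x => (F.R + ς * x.1) * κ x.1 * ζ x.2 *
      (ς * (Y (F.point ς x.1 x.2) ⬝ F.radial x.2)))
    (g := fun x => κ x.1 * ζ x.2 * (Y (F.point ς x.1 x.2) ⬝ F.angular x.2))]
  · refine intervalIntegral.integral_congr fun t ht =>
      intervalIntegral.integral_congr fun θ hθ => ?_
    have hYd := (hY t ht θ hθ).differentiableAt one_ne_zero
    simp only [(hasDerivAt_radial_flux (ζ := ζ) hYd (hκ.differentiable one_ne_zero t) hς).deriv,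
      (hasDerivAt_angular_flux (κ := κ) hYd (hζ.differentiable one_ne_zero θ)).deriv,
      planeDiv_eq_of_orthonormal (F.radial_dot_radial θ) (F.angular_dot_angular θ)
        (F.radial_dot_angular θ)]
    ring
  · exact fun x hx => ((((contDiff_const.add (contDiff_const.mul contDiff_fst)).mul hκ').mul
      hζ').contDiffAt.mul (contDiffAt_const.mul
      (contDiffAt_planeDot (hY' x hx) (F.contDiff_radial.comp contDiff_snd).contDiffAt)))
  · exact fun x hx => (hκ'.mul hζ').contDiffAt.mul
      (contDiffAt_planeDot (hY' x hx) (F.contDiff_angular.comp contDiff_snd).contDiffAt)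

end PolarDivergence

end Frame

/-! ### Iterated integrals of continuous functions on a rectangle -/

section IteratedIntegral

variable {a b c d : ℝ} {f g : ℝ → ℝ → ℝ}

lemma intervalIntegrable_slice (hcd : c ≤ d)
    (hg : ContinuousOn (fun x : ℝ × ℝ => g x.1 x.2) (Icc a b ×ˢ Icc c d)) {t : ℝ}
    (ht : t ∈ Icc a b) : IntervalIntegrable (g t) volume c d :=
  ContinuousOn.intervalIntegrable_of_Icc hcd <|
    hg.comp (f := fun θ => ((t, θ) : ℝ × ℝ)) (by fun_prop) fun _ hθ => ⟨ht, hθ⟩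

lemma continuousOn_integral_slice (hab : a ≤ b) (hcd : c ≤ d)
    (hg : ContinuousOn (fun x : ℝ × ℝ => g x.1 x.2) (Icc a b ×ˢ Icc c d)) :
    ContinuousOn (fun t => ∫ θ in c..d, g t θ) (Icc a b) := by
  have hproj : Continuous fun x : ℝ × ℝ =>
      g (projIcc a b hab x.1) (projIcc c d hcd x.2) :=
    hg.comp_continuous (f := fun x : ℝ × ℝ =>
      (((projIcc a b hab x.1 : ℝ), (projIcc c d hcd x.2 : ℝ)) : ℝ × ℝ)) (by fun_prop)
      fun x => ⟨(projIcc a b hab x.1).2, (projIcc c d hcd x.2).2⟩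
  refine (intervalIntegral.continuous_parametric_intervalIntegral_of_continuous'
    (f := fun t θ => g (projIcc a b hab t) (projIcc c d hcd θ)) hproj c d).continuousOn.congr
    fun t ht => intervalIntegral.integral_congr fun θ hθ => ?_
  rw [uIcc_of_le hcd] at hθ
  simp only [projIcc_of_mem hab ht, projIcc_of_mem hcd hθ]

lemma intervalIntegrable_integral_slice (hab : a ≤ b) (hcd : c ≤ d)
    (hg : ContinuousOn (fun x : ℝ × ℝ => g x.1 x.2) (Icc a b ×ˢ Icc c d)) :
    IntervalIntegrable (fun t => ∫ θ in c..d, g t θ) volume a b :=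
  (continuousOn_integral_slice hab hcd hg).intervalIntegrable_of_Icc hab

lemma iteratedIntegral_mono (hab : a ≤ b) (hcd : c ≤ d)
    (hf : ContinuousOn (fun x : ℝ × ℝ => f x.1 x.2) (Icc a b ×ˢ Icc c d))
    (hg : ContinuousOn (fun x : ℝ × ℝ => g x.1 x.2) (Icc a b ×ˢ Icc c d))
    (h : ∀ t ∈ Icc a b, ∀ θ ∈ Icc c d, f t θ ≤ g t θ) :
    (∫ t in a..b, ∫ θ in c..d, f t θ) ≤ ∫ t in a..b, ∫ θ in c..d, g t θ :=
  intervalIntegral.integral_mono_on hab (intervalIntegrable_integral_slice hab hcd hf)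
    (intervalIntegrable_integral_slice hab hcd hg) fun t ht =>
    intervalIntegral.integral_mono_on hcd (intervalIntegrable_slice hcd hf ht)
      (intervalIntegrable_slice hcd hg ht) (h t ht)

lemma iteratedIntegral_add (hab : a ≤ b) (hcd : c ≤ d)
    (hf : ContinuousOn (fun x : ℝ × ℝ => f x.1 x.2) (Icc a b ×ˢ Icc c d))
    (hg : ContinuousOn (fun x : ℝ × ℝ => g x.1 x.2) (Icc a b ×ˢ Icc c d)) :
    (∫ t in a..b, ∫ θ in c..d, (f t θ + g t θ))
      = (∫ t in a..b, ∫ θ in c..d, f t θ) + ∫ t in a..b, ∫ θ in c..d, g t θ := by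
  rw [← intervalIntegral.integral_add (intervalIntegrable_integral_slice hab hcd hf)
    (intervalIntegrable_integral_slice hab hcd hg)]
  refine intervalIntegral.integral_congr fun t ht => ?_
  rw [uIcc_of_le hab] at ht
  exact intervalIntegral.integral_add (intervalIntegrable_slice hcd hf ht)
    (intervalIntegrable_slice hcd hg ht)

lemma iteratedIntegral_le_const (hab : a ≤ b) (hcd : c ≤ d) {e : ℝ}
    (hf : ContinuousOn (fun x : ℝ × ℝ => f x.1 x.2) (Icc a b ×ˢ Icc c d))
    (h : ∀ t ∈ Icc a b, ∀ θ ∈ Icc c d, f t θ ≤ e) :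
    (∫ t in a..b, ∫ θ in c..d, f t θ) ≤ (b - a) * (d - c) * e := by
  refine (iteratedIntegral_mono hab hcd hf continuousOn_const h).trans_eq ?_
  simp only [intervalIntegral.integral_const, smul_eq_mul]
  ring

end IteratedIntegral

/-! ### Polar components of the slope field -/

namespace Frame

variable (F : Frame) (u : ℝ × ℝ → ℝ) (ς t θ : ℝ)

lemma point_eq_point_one : F.point ς t θ = F.point 1 (ς * t) θ := by
  simp only [point, one_mul]

/-- Radial component of the slope field of `u`. -/
def Xr : ℝ := slopeField u (F.point ς t θ) ⬝ F.radial θ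

/-- Angular component of the slope field of `u`. -/
def Xt : ℝ := slopeField u (F.point ς t θ) ⬝ F.angular θ

lemma Xr_sq_add_Xt_sq : F.Xr u ς t θ ^ 2 + F.Xt u ς t θ ^ 2
    = slopeField u (F.point ς t θ) ⬝ slopeField u (F.point ς t θ) := by
  rw [planeDot_eq_add_of_orthonormal _ _ (F.radial_dot_radial θ) (F.angular_dot_angular θ)
    (F.radial_dot_angular θ), Xr, Xt]
  ring

lemma Xr_sq_add_Xt_sq_lt_one : F.Xr u ς t θ ^ 2 + F.Xt u ς t θ ^ 2 < 1 :=
  (F.Xr_sq_add_Xt_sq u ς t θ).trans_lt (slopeField_dot_self_lt_one u _)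

lemma abs_Xr_le_one : |F.Xr u ς t θ| ≤ 1 := by
  rw [← sq_le_one_iff_abs_le_one]
  linarith [F.Xr_sq_add_Xt_sq_lt_one u ς t θ, sq_nonneg (F.Xt u ς t θ)]

lemma abs_Xt_le_one : |F.Xt u ς t θ| ≤ 1 := by
  rw [← sq_le_one_iff_abs_le_one]
  linarith [F.Xr_sq_add_Xt_sq_lt_one u ς t θ, sq_nonneg (F.Xr u ς t θ)]

lemma Xr_le_one : F.Xr u ς t θ ≤ 1 := (abs_le.1 (F.abs_Xr_le_one u ς t θ)).2

lemma Xt_sq_le : F.Xt u ς t θ ^ 2 ≤ 2 * (1 - F.Xr u ς t θ) := by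
  nlinarith [F.Xr_sq_add_Xt_sq_lt_one u ς t θ, sq_nonneg (1 - F.Xr u ς t θ)]

lemma one_le_two_mul_one_sub_Xr_mul_Wgraph_sq :
    1 ≤ 2 * (1 - F.Xr u ς t θ) * Wgraph u (F.point ς t θ) ^ 2 := by
  refine (one_sub_slopeField_dot_self_mul u (F.point ς t θ)).symm.trans_le ?_
  rw [← F.Xr_sq_add_Xt_sq]
  gcongr
  nlinarith [sq_nonneg (1 - F.Xr u ς t θ), sq_nonneg (F.Xt u ς t θ)]

end Frame

lemma tangent_line_le_of_one_le_mul_sq {h δ W : ℝ} (hh : 0 < h) (hW : 0 < W)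
    (hδ : 1 ≤ 2 * δ * W ^ 2) : 3 / (2 * h) - δ / h ^ 3 ≤ W := by
  have hδ' : 1 / (2 * W ^ 2) ≤ δ := by
    rw [div_le_iff₀ (by positivity)]; linarith
  have hcubic : W - (3 / (2 * h) - (1 / (2 * W ^ 2)) / h ^ 3)
      = (W * h - 1) ^ 2 * (2 * (W * h) + 1) / (2 * W ^ 2 * h ^ 3) := by
    field_simp
    ring
  calc 3 / (2 * h) - δ / h ^ 3 ≤ 3 / (2 * h) - (1 / (2 * W ^ 2)) / h ^ 3 := by gcongr
    _ ≤ W := by rw [← sub_nonneg, hcubic]; positivity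

/-- Since `W ≥ (2 (1 - X_r))^(-1/2)`, which is convex in `1 - X_r`, the area element lies above
the tangent line at `1 - X_r = h² / 2`. -/
lemma Frame.tangent_line_le_Wgraph (F : Frame) (u : ℝ × ℝ → ℝ) (ς t θ : ℝ) {h : ℝ} (hh : 0 < h) :
    3 / (2 * h) - (1 - F.Xr u ς t θ) / h ^ 3 ≤ Wgraph u (F.point ς t θ) :=
  tangent_line_le_of_one_le_mul_sq hh (Wgraph_pos u _)
    (F.one_le_two_mul_one_sub_Xr_mul_Wgraph_sq u ς t θ)

/-! ### The deficit in a strip around an arc -/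

/-- A polar rectangle around an arc of the circle of radius `R = 1 / (2 H)`, contained in `Ω`,
together with an angular cut-off `ζ` vanishing at both ends. -/
structure Strip (H : ℝ) (Ω : Set (ℝ × ℝ)) where
  F : Frame
  s₀ : ℝ
  c : ℝ
  d : ℝ
  K : ℝ
  ζ : ℝ → ℝ
  isOpen : IsOpen Ω
  two_mul_H_mul_R : 2 * H * F.R = 1
  s₀_pos : 0 < s₀
  s₀_le : s₀ ≤ F.R / 2
  c_le_d : c ≤ d
  contDiff_ζ : ContDiff ℝ 1 ζ
  ζ_nonneg : ∀ θ ∈ Icc c d, 0 ≤ ζ θ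
  ζ_le_one : ∀ θ ∈ Icc c d, ζ θ ≤ 1
  ζ_c : ζ c = 0
  ζ_d : ζ d = 0
  K_pos : 0 < K
  deriv_ζ_sq_le : ∀ θ ∈ Icc c d, deriv ζ θ ^ 2 ≤ K * ζ θ
  integral_ζ_pos : 0 < ∫ θ in c..d, ζ θ
  point_one_mem : ∀ t ∈ Icc (-s₀) s₀, ∀ θ ∈ Icc c d, F.point 1 t θ ∈ Ω

lemma abs_le_add_div_of_sq_le {p K m w : ℝ} (hK : 0 ≤ K) (hm : 0 < m) (hw : 0 ≤ w)
    (hp : p ^ 2 ≤ 2 * K * w) : |p| ≤ K * m / 2 + w / m := by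
  refine abs_le_of_sq_le_sq (hp.trans ?_) (by positivity)
  have hsq : (K * m / 2 + w / m) ^ 2 = (K * m / 2 - w / m) ^ 2 + 2 * K * w := by
    field_simp
    ring
  rw [hsq]
  exact le_add_of_nonneg_left (sq_nonneg _)

lemma mul_mem_Icc_neg_of_sq_eq_one {ς s t : ℝ} (hς : ς ^ 2 = 1) (ht : t ∈ Icc (-s) s) :
    ς * t ∈ Icc (-s) s := by
  rcases sq_eq_one_iff.1 hς with rfl | rfl
  · rwa [one_mul]
  · constructor <;> linarith [ht.1, ht.2]

namespace Strip

variable {H : ℝ} {Ω : Set (ℝ × ℝ)} (S : Strip H Ω) {u : ℝ × ℝ → ℝ} {ς t θ a b : ℝ}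

/-- Total mass of the cut-off. -/
def mass : ℝ := ∫ θ in S.c..S.d, S.ζ θ

/-- The deficit `∫ ζ (1 - X_r)` at signed depth `t`; it measures how far the graph of `u` is from
being vertical along the circle of radius `R + t`. -/
def deficit (u : ℝ × ℝ → ℝ) (t : ℝ) : ℝ := ∫ θ in S.c..S.d, S.ζ θ * (1 - S.F.Xr u 1 t θ)

lemma H_pos (S : Strip H Ω) : 0 < H := by
  have h : 0 < 2 * H := pos_of_mul_pos_left (S.two_mul_H_mul_R ▸ one_pos) S.F.R_pos.le
  linarith

lemma point_mem (hς : ς ^ 2 = 1) (ht : t ∈ Icc (-S.s₀) S.s₀) (hθ : θ ∈ Icc S.c S.d) :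
    S.F.point ς t θ ∈ Ω := by
  rw [S.F.point_eq_point_one]
  exact S.point_one_mem _ (mul_mem_Icc_neg_of_sq_eq_one hς ht) _ hθ

lemma continuousOn_comp_point (hς : ς ^ 2 = 1) {E : Type*} [TopologicalSpace E]
    {f : ℝ × ℝ → E} (hf : ∀ q ∈ Ω, ContinuousAt f q) (hab : Icc a b ⊆ Icc (-S.s₀) S.s₀) :
    ContinuousOn (fun x : ℝ × ℝ => f (S.F.point ς x.1 x.2)) (Icc a b ×ˢ Icc S.c S.d) :=
  ContinuousOn.comp (fun q hq => (hf q hq).continuousWithinAt)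
    (S.F.continuous_point ς).continuousOn fun _ hx => S.point_mem hς (hab hx.1) hx.2

lemma continuousOn_Xr (hu : IsCMCSolution H Ω u) (hς : ς ^ 2 = 1)
    (hab : Icc a b ⊆ Icc (-S.s₀) S.s₀) :
    ContinuousOn (fun x : ℝ × ℝ => S.F.Xr u ς x.1 x.2) (Icc a b ×ˢ Icc S.c S.d) :=
  continuousOn_planeDot (S.continuousOn_comp_point hς
    (fun _ hq => (hu.contDiffAt_slopeField S.isOpen hq).continuousAt) hab) (by fun_prop)

lemma continuousOn_Xt (hu : IsCMCSolution H Ω u) (hς : ς ^ 2 = 1)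
    (hab : Icc a b ⊆ Icc (-S.s₀) S.s₀) :
    ContinuousOn (fun x : ℝ × ℝ => S.F.Xt u ς x.1 x.2) (Icc a b ×ˢ Icc S.c S.d) :=
  continuousOn_planeDot (S.continuousOn_comp_point hς
    (fun _ hq => (hu.contDiffAt_slopeField S.isOpen hq).continuousAt) hab) (by fun_prop)

lemma continuousOn_grad_dot_slope (hu : IsCMCSolution H Ω u) (hς : ς ^ 2 = 1)
    (hab : Icc a b ⊆ Icc (-S.s₀) S.s₀) :
    ContinuousOn (fun x : ℝ × ℝ => planeGrad u (S.F.point ς x.1 x.2) ⬝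
      slopeField u (S.F.point ς x.1 x.2)) (Icc a b ×ˢ Icc S.c S.d) :=
  S.continuousOn_comp_point (f := fun q => planeGrad u q ⬝ slopeField u q) hς
    (fun _ hq => (contDiffAt_planeDot (hu.contDiffAt_planeGrad S.isOpen hq)
      (hu.contDiffAt_slopeField S.isOpen hq)).continuousAt) hab

lemma continuousOn_Wgraph (hu : IsCMCSolution H Ω u) (hς : ς ^ 2 = 1)
    (hab : Icc a b ⊆ Icc (-S.s₀) S.s₀) :
    ContinuousOn (fun x : ℝ × ℝ => Wgraph u (S.F.point ς x.1 x.2)) (Icc a b ×ˢ Icc S.c S.d) :=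
  S.continuousOn_comp_point hς (fun _ hq => (hu.contDiffAt_Wgraph S.isOpen hq).continuousAt) hab

lemma continuousOn_solution (hu : IsCMCSolution H Ω u) (hς : ς ^ 2 = 1)
    (hab : Icc a b ⊆ Icc (-S.s₀) S.s₀) :
    ContinuousOn (fun x : ℝ × ℝ => u (S.F.point ς x.1 x.2)) (Icc a b ×ˢ Icc S.c S.d) :=
  S.continuousOn_comp_point hς (fun _ hq => (hu.contDiffAt S.isOpen hq).continuousAt) hab

lemma abs_deriv_ζ_le (hθ : θ ∈ Icc S.c S.d) : |deriv S.ζ θ| ≤ 1 + S.K := by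
  have hK := S.K_pos
  refine abs_le_of_sq_le_sq ((S.deriv_ζ_sq_le θ hθ).trans ?_) (by linarith)
  nlinarith [S.ζ_le_one θ hθ]

lemma continuous_deriv_ζ : Continuous (deriv S.ζ) := S.contDiff_ζ.continuous_deriv le_rfl

lemma continuousOn_deficit_integrand (hu : IsCMCSolution H Ω u) (hς : ς ^ 2 = 1)
    (hab : Icc a b ⊆ Icc (-S.s₀) S.s₀) :
    ContinuousOn (fun x : ℝ × ℝ => S.ζ x.2 * (1 - S.F.Xr u ς x.1 x.2))
      (Icc a b ×ˢ Icc S.c S.d) := by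
  have hXr := S.continuousOn_Xr hu hς hab
  have hζ := S.contDiff_ζ.continuous
  fun_prop

lemma deficit_nonneg (u : ℝ × ℝ → ℝ) (t : ℝ) : 0 ≤ S.deficit u t :=
  intervalIntegral.integral_nonneg S.c_le_d fun θ hθ =>
    mul_nonneg (S.ζ_nonneg θ hθ) (sub_nonneg.2 (S.F.Xr_le_one u 1 t θ))

lemma continuousOn_deficit (hu : IsCMCSolution H Ω u) :
    ContinuousOn (S.deficit u) (Icc (-S.s₀) S.s₀) :=
  continuousOn_integral_slice (g := fun t θ => S.ζ θ * (1 - S.F.Xr u 1 t θ))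
    (by linarith [S.s₀_pos]) S.c_le_d (S.continuousOn_deficit_integrand hu (one_pow 2) subset_rfl)

lemma intervalIntegrable_deficit_integrand (hu : IsCMCSolution H Ω u)
    (ht : t ∈ Icc (-S.s₀) S.s₀) :
    IntervalIntegrable (fun θ => S.ζ θ * (1 - S.F.Xr u 1 t θ)) volume S.c S.d :=
  intervalIntegrable_slice (g := fun t θ => S.ζ θ * (1 - S.F.Xr u 1 t θ)) S.c_le_d
    (S.continuousOn_deficit_integrand hu (one_pow 2) subset_rfl) ht

lemma integral_ζ_mul_Xr (hu : IsCMCSolution H Ω u) (ht : t ∈ Icc (-S.s₀) S.s₀) :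
    ∫ θ in S.c..S.d, S.ζ θ * S.F.Xr u 1 t θ = S.mass - S.deficit u t := by
  rw [mass, deficit, ← intervalIntegral.integral_sub
    (S.contDiff_ζ.continuous.intervalIntegrable _ _) (S.intervalIntegrable_deficit_integrand hu ht)]
  exact intervalIntegral.integral_congr fun θ _ => by ring

/-- Divergence theorem in the strip for the field `κ ζ β(u) X`. -/
lemma integral_divergence (hu : IsCMCSolution H Ω u) (hς : ς ^ 2 = 1) {κ β : ℝ → ℝ}
    (hκ : ContDiff ℝ 1 κ) (hβ : ContDiff ℝ 1 β) (hab : a ≤ b)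
    (hsub : Icc a b ⊆ Icc (-S.s₀) S.s₀) :
    (∫ t in a..b, ∫ θ in S.c..S.d,
        ((S.F.R + ς * t) * κ t * S.ζ θ * (2 * H * β (u (S.F.point ς t θ))
            + deriv β (u (S.F.point ς t θ)) *
              (planeGrad u (S.F.point ς t θ) ⬝ slopeField u (S.F.point ς t θ)))
          + (S.F.R + ς * t) * deriv κ t * S.ζ θ *
            (ς * (β (u (S.F.point ς t θ)) * S.F.Xr u ς t θ))
          + κ t * deriv S.ζ θ * (β (u (S.F.point ς t θ)) * S.F.Xt u ς t θ)))
      = (S.F.R + ς * b) * κ b * ς *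
          (∫ θ in S.c..S.d, S.ζ θ * (β (u (S.F.point ς b θ)) * S.F.Xr u ς b θ))
        - (S.F.R + ς * a) * κ a * ς *
          ∫ θ in S.c..S.d, S.ζ θ * (β (u (S.F.point ς a θ)) * S.F.Xr u ς a θ) := by
  unfold Frame.Xr Frame.Xt
  have hside (t : ℝ) : (∫ θ in S.c..S.d, (S.F.R + ς * t) * κ t * S.ζ θ *
      (ς * (β (u (S.F.point ς t θ)) * (slopeField u (S.F.point ς t θ) ⬝ S.F.radial θ))))
      = (S.F.R + ς * t) * κ t * ς * ∫ θ in S.c..S.d,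
        S.ζ θ * (β (u (S.F.point ς t θ)) * (slopeField u (S.F.point ς t θ) ⬝ S.F.radial θ)) := by
    rw [← intervalIntegral.integral_const_mul]
    exact intervalIntegral.integral_congr fun θ _ => by ring
  have hdiv := S.F.integral_polar_divergence (Y := fun x => β (u x) • slopeField u x) hς hκ
    S.contDiff_ζ (a := a) (b := b) (c := S.c) (d := S.d) fun t ht θ hθ => by
      rw [uIcc_of_le hab] at ht
      rw [uIcc_of_le S.c_le_d] at hθ
      exact hu.contDiffAt_comp_smul_slopeField S.isOpen (S.point_mem hς (hsub ht) hθ) hβ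
  simp only [planeDot_smul_left, S.ζ_c, S.ζ_d, mul_zero, zero_mul,
    intervalIntegral.integral_zero, sub_zero, zero_add, hside] at hdiv
  rw [← hdiv]
  refine intervalIntegral.integral_congr fun t ht => intervalIntegral.integral_congr fun θ hθ => ?_
  rw [uIcc_of_le hab] at ht
  rw [uIcc_of_le S.c_le_d] at hθ
  simp only [hu.planeDiv_comp_smul_slopeField S.isOpen (S.point_mem hς (hsub ht) hθ)
    (hβ.differentiable one_ne_zero _)]

lemma abs_integral_deriv_ζ_mul_Xt_le (hu : IsCMCSolution H Ω u) {m : ℝ} (hm : 0 < m)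
    (ht : t ∈ Icc (-S.s₀) S.s₀) :
    |∫ θ in S.c..S.d, deriv S.ζ θ * S.F.Xt u 1 t θ|
      ≤ S.K * m * (S.d - S.c) / 2 + S.deficit u t / m := by
  have hint : IntervalIntegrable (fun θ => S.ζ θ * (1 - S.F.Xr u 1 t θ) / m) volume S.c S.d :=
    (S.intervalIntegrable_deficit_integrand hu ht).div_const m
  have hbound : ∀ θ ∈ Ioc S.c S.d, ‖deriv S.ζ θ * S.F.Xt u 1 t θ‖
      ≤ S.K * m / 2 + S.ζ θ * (1 - S.F.Xr u 1 t θ) / m := fun θ hθ => by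
    have hθ' := Ioc_subset_Icc_self hθ
    have hζ := S.ζ_nonneg θ hθ'
    refine abs_le_add_div_of_sq_le S.K_pos.le hm
      (mul_nonneg hζ (sub_nonneg.2 (S.F.Xr_le_one u 1 t θ))) ?_
    calc (deriv S.ζ θ * S.F.Xt u 1 t θ) ^ 2 = deriv S.ζ θ ^ 2 * S.F.Xt u 1 t θ ^ 2 := mul_pow _ _ _
      _ ≤ S.K * S.ζ θ * (2 * (1 - S.F.Xr u 1 t θ)) :=
          mul_le_mul (S.deriv_ζ_sq_le θ hθ') (S.F.Xt_sq_le u 1 t θ) (sq_nonneg _)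
            (mul_nonneg S.K_pos.le hζ)
      _ = 2 * S.K * (S.ζ θ * (1 - S.F.Xr u 1 t θ)) := by ring
  refine (intervalIntegral.norm_integral_le_of_norm_le S.c_le_d (Eventually.of_forall hbound)
    (intervalIntegrable_const.add hint)).trans_eq ?_
  rw [intervalIntegral.integral_add intervalIntegrable_const hint,
    intervalIntegral.integral_const, intervalIntegral.integral_div, smul_eq_mul, ← deficit]
  ring

lemma sub_mul_deficit_neg_le (hu : IsCMCSolution H Ω u) {x : ℝ} (hx : x ∈ Icc 0 S.s₀) :
    (S.F.R - x) * S.deficit u (-x) ≤ S.F.R * S.deficit u 0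
      + ∫ t in (-x)..0, ∫ θ in S.c..S.d, deriv S.ζ θ * S.F.Xt u 1 t θ := by
  have hx0 : -x ≤ 0 := neg_nonpos.2 hx.1
  have hsub : Icc (-x) 0 ⊆ Icc (-S.s₀) S.s₀ :=
    Icc_subset_Icc (neg_le_neg hx.2) S.s₀_pos.le
  have hζ := S.contDiff_ζ.continuous
  have hζ' := S.continuous_deriv_ζ
  have hXt := S.continuousOn_Xt hu (one_pow 2) hsub
  have hdiv := S.integral_divergence hu (ς := 1) (one_pow 2) (κ := fun _ => 1) (β := fun _ => 1)
    contDiff_const contDiff_const hx0 hsub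
  simp only [deriv_const, mul_one, one_mul, zero_mul, mul_zero, add_zero] at hdiv
  rw [iteratedIntegral_add (f := fun t θ => (S.F.R + t) * S.ζ θ * (2 * H))
    (g := fun t θ => deriv S.ζ θ * S.F.Xt u 1 t θ) hx0 S.c_le_d (by fun_prop) (by fun_prop),
    S.integral_ζ_mul_Xr hu (hsub (right_mem_Icc.2 hx0)),
    S.integral_ζ_mul_Xr hu (hsub (left_mem_Icc.2 hx0))] at hdiv
  have harea : (∫ t in (-x)..0, ∫ θ in S.c..S.d, (S.F.R + t) * S.ζ θ * (2 * H))
      = S.mass * (2 * H) * (S.F.R * x - x ^ 2 / 2) := by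
    simp only [intervalIntegral.integral_mul_const, intervalIntegral.integral_const_mul]
    rw [← mass, intervalIntegral.integral_add (by simp) (by simp)]
    simp only [intervalIntegral.integral_const, integral_id, smul_eq_mul]
    ring
  rw [harea] at hdiv
  have hquad : 0 ≤ S.mass * (2 * H) * x ^ 2 / 2 := by
    have := S.integral_ζ_pos.le
    have := S.H_pos
    unfold mass
    positivity
  linear_combination hquad - hdiv + S.mass * x * S.two_mul_H_mul_R

lemma deficit_neg_le_half_add (hu : IsCMCSolution H Ω u) {s B : ℝ} (hs : 0 < s) (hs₀ : s ≤ S.s₀)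
    (hB : ∀ x ∈ Icc 0 s, S.deficit u (-x) ≤ B) {x : ℝ} (hx : x ∈ Icc 0 s) :
    S.deficit u (-x)
      ≤ B / 2 + (2 * S.deficit u 0 + 4 * S.K * (S.d - S.c) / S.F.R ^ 2 * s ^ 2) := by
  have hR := S.F.R_pos
  have hK := S.K_pos
  have hcd := sub_nonneg.2 S.c_le_d
  have hB0 : 0 ≤ B := (S.deficit_nonneg u _).trans (hB x hx)
  set m := 4 * s / S.F.R with hm
  have hm0 : 0 < m := by positivity
  have hflux : (∫ t in (-x)..0, ∫ θ in S.c..S.d, deriv S.ζ θ * S.F.Xt u 1 t θ)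
      ≤ (S.K * m * (S.d - S.c) / 2 + B / m) * |0 - -x| := by
    refine (Real.le_norm_self _).trans
      (intervalIntegral.norm_integral_le_of_norm_le_const fun t ht => ?_)
    rw [uIoc_of_le (neg_nonpos.2 hx.1)] at ht
    have hdef : S.deficit u t ≤ B := by
      simpa using hB (-t) ⟨by linarith [ht.2], by linarith [ht.1, hx.2]⟩
    have ht' : t ∈ Icc (-S.s₀) S.s₀ := ⟨by linarith [ht.1, hx.2], by linarith [ht.2]⟩
    refine (S.abs_integral_deriv_ζ_mul_Xt_le hu hm0 ht').trans ?_
    gcongr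
  have hside : (S.K * m * (S.d - S.c) / 2 + B / m) * |0 - -x|
      ≤ S.F.R / 2 * (4 * S.K * (S.d - S.c) / S.F.R ^ 2 * s ^ 2 + B / 2) := by
    rw [sub_neg_eq_add, zero_add, abs_of_nonneg hx.1]
    calc _ ≤ (S.K * m * (S.d - S.c) / 2 + B / m) * s := by gcongr; exact hx.2
      _ = _ := by rw [hm]; field_simp; ring
  have hhalf : S.F.R / 2 * S.deficit u (-x) ≤ (S.F.R - x) * S.deficit u (-x) :=
    mul_le_mul_of_nonneg_right (by linarith [hx.2, S.s₀_le]) (S.deficit_nonneg u _)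
  have hid := S.sub_mul_deficit_neg_le hu ⟨hx.1, hx.2.trans hs₀⟩
  refine le_of_mul_le_mul_left ?_ (half_pos hR)
  linarith

/-- The divergence theorem bounds the deficit by half of its maximum over the depths up to `s`, plus
half of the right-hand side. -/
lemma deficit_neg_le (hu : IsCMCSolution H Ω u) {s x : ℝ} (hs : 0 < s) (hs₀ : s ≤ S.s₀)
    (hx : x ∈ Icc 0 s) :
    S.deficit u (-x) ≤ 4 * S.deficit u 0 + 8 * S.K * (S.d - S.c) / S.F.R ^ 2 * s ^ 2 := by
  have hcont : ContinuousOn (fun x => S.deficit u (-x)) (Icc 0 s) :=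
    (S.continuousOn_deficit hu).comp (by fun_prop) fun x hx =>
      ⟨by linarith [hx.2], by linarith [hx.1, S.s₀_pos]⟩
  obtain ⟨x₀, hx₀, hmax⟩ := isCompact_Icc.exists_isMaxOn ⟨0, left_mem_Icc.2 hs.le⟩ hcont
  have hhalf := S.deficit_neg_le_half_add hu hs hs₀ (fun x hx => hmax hx) hx₀
  calc S.deficit u (-x) ≤ S.deficit u (-x₀) := hmax hx
    _ ≤ 2 * (2 * S.deficit u 0 + 4 * S.K * (S.d - S.c) / S.F.R ^ 2 * s ^ 2) := by linarith
    _ = _ := by ring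

end Strip

/-! ### Large values in a strip -/

/-- The cut-off `x² / (1 + x²)` on `x ≥ 0`, extended by `0`: a bounded nondecreasing `C¹` function
vanishing exactly on `(-∞, 0]`. -/
def softStep (x : ℝ) : ℝ := max x 0 ^ 2 / (1 + max x 0 ^ 2)

lemma hasDerivAt_max_zero_sq (x : ℝ) :
    HasDerivAt (fun x : ℝ => max x 0 ^ 2) (2 * max x 0) x := by
  rcases lt_trichotomy x 0 with hx | rfl | hx
  · rw [max_eq_right hx.le, mul_zero]
    refine (hasDerivAt_const x (0 : ℝ)).congr_of_eventuallyEq ?_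
    filter_upwards [Iio_mem_nhds hx] with y hy
    rw [max_eq_right hy.le, zero_pow two_ne_zero]
  · rw [max_self, mul_zero, hasDerivAt_iff_isLittleO]
    simp only [max_self, smul_zero, sub_zero, ne_eq, OfNat.ofNat_ne_zero, not_false_eq_true,
      zero_pow]
    refine (Asymptotics.IsBigO.of_norm_le (g := fun x : ℝ => x ^ 2) fun x => ?_).trans_isLittleO
      (by simpa using Asymptotics.isLittleO_pow_id (𝕜 := ℝ) (n := 2) one_lt_two)
    rw [norm_pow, norm_of_nonneg (le_max_right x 0), ← sq_abs x]
    exact pow_le_pow_left₀ (le_max_right x 0) (max_le (le_abs_self x) (abs_nonneg x)) 2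
  · rw [max_eq_left hx.le]
    refine HasDerivAt.congr_of_eventuallyEq (f := fun x => x ^ 2)
      (by simpa using hasDerivAt_pow 2 x) ?_
    filter_upwards [Ioi_mem_nhds hx] with y hy
    rw [max_eq_left hy.le]

lemma contDiff_max_zero_sq : ContDiff ℝ 1 (fun x : ℝ => max x 0 ^ 2) := by
  rw [contDiff_one_iff_deriv]
  refine ⟨fun x => (hasDerivAt_max_zero_sq x).differentiableAt, ?_⟩
  rw [funext fun x => (hasDerivAt_max_zero_sq x).deriv]
  fun_prop

lemma contDiff_softStep : ContDiff ℝ 1 softStep :=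
  contDiff_max_zero_sq.div (contDiff_const.add contDiff_max_zero_sq) fun _ => by positivity

lemma hasDerivAt_softStep (x : ℝ) :
    HasDerivAt softStep (2 * max x 0 / (1 + max x 0 ^ 2) ^ 2) x := by
  have hsq := hasDerivAt_max_zero_sq x
  exact (hsq.div (hsq.const_add 1) (by positivity)).congr_deriv (by congr 1; ring)

lemma softStep_nonneg (x : ℝ) : 0 ≤ softStep x := by unfold softStep; positivity

lemma softStep_le_one (x : ℝ) : softStep x ≤ 1 := by
  unfold softStep
  rw [div_le_one (by positivity)]
  linarith

lemma softStep_of_nonpos {x : ℝ} (hx : x ≤ 0) : softStep x = 0 := by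
  rw [softStep, max_eq_right hx, zero_pow two_ne_zero, zero_div]

lemma deriv_softStep_nonneg (x : ℝ) : 0 ≤ deriv softStep x := by
  rw [(hasDerivAt_softStep x).deriv]
  have := le_max_right x 0
  positivity

lemma deriv_softStep_le_one (x : ℝ) : deriv softStep x ≤ 1 := by
  rw [(hasDerivAt_softStep x).deriv, div_le_one (by positivity)]
  nlinarith [sq_nonneg (max x 0 - 1), sq_nonneg (max x 0), sq_nonneg (max x 0 ^ 2)]

lemma sq_div_one_add_sq_le_four_mul_softStep {w x : ℝ} (hw : |w| ≤ 2 * x) :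
    w ^ 2 / (1 + w ^ 2) ≤ 4 * softStep x := by
  have hx : 0 ≤ x := by linarith [abs_nonneg w]
  have hsq : w ^ 2 ≤ 4 * x ^ 2 := by
    rw [← sq_abs]
    calc |w| ^ 2 ≤ (2 * x) ^ 2 := by gcongr
      _ = 4 * x ^ 2 := by ring
  rw [softStep, max_eq_left hx, ← mul_div_assoc, div_le_div_iff₀ (by positivity) (by positivity)]
  nlinarith [sq_nonneg x, mul_nonneg (sq_nonneg w) (sq_nonneg x)]

/-- Smooth indicator, at scale `T`, of the set where `ς v` is much larger than `m`. -/
def levelStep (ς m T v : ℝ) : ℝ := softStep ((ς * v - m) / T)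

lemma contDiff_levelStep (ς m T : ℝ) : ContDiff ℝ 1 (levelStep ς m T) :=
  contDiff_softStep.comp (by fun_prop)

lemma hasDerivAt_levelStep (ς m T v : ℝ) :
    HasDerivAt (levelStep ς m T) (deriv softStep ((ς * v - m) / T) * (ς / T)) v := by
  have hinner : HasDerivAt (fun v => (ς * v - m) / T) (ς / T) v := by
    simpa using (((hasDerivAt_id v).const_mul ς).sub_const m).div_const T
  exact (hasDerivAt_softStep _).differentiableAt.hasDerivAt.comp v hinner

/-- Weight concentrated on the values `v` which are at most of order `T`. -/
def lowWeight (T v : ℝ) : ℝ := 1 / (1 + (v / T) ^ 2)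

lemma lowWeight_nonneg (T v : ℝ) : 0 ≤ lowWeight T v := by unfold lowWeight; positivity

lemma lowWeight_le_one (T v : ℝ) : lowWeight T v ≤ 1 :=
  div_le_one_of_le₀ (le_add_of_nonneg_right (sq_nonneg _)) (by positivity)

lemma continuous_lowWeight (T : ℝ) : Continuous (lowWeight T) :=
  continuous_const.div (by fun_prop) fun _ => by positivity

lemma one_sub_lowWeight_le_levelStep {m T : ℝ} (hT : 0 < T) (v : ℝ) :
    1 - lowWeight T v
      ≤ 4 * (levelStep 1 m T v + levelStep (-1) m T v) + 4 * m ^ 2 / T ^ 2 := by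
  have hpos := softStep_nonneg ((1 * v - m) / T)
  have hneg := softStep_nonneg ((-1 * v - m) / T)
  have hm : 0 ≤ 4 * m ^ 2 / T ^ 2 := by positivity
  have hlhs : 1 - lowWeight T v = (v / T) ^ 2 / (1 + (v / T) ^ 2) := by
    unfold lowWeight
    field_simp
    ring
  rw [hlhs]
  unfold levelStep
  rcases le_or_gt |v| (2 * m) with hsmall | hlarge
  · have hsq : (v / T) ^ 2 ≤ 4 * m ^ 2 / T ^ 2 := by
      rw [div_pow, ← sq_abs]
      gcongr
      calc |v| ^ 2 ≤ (2 * m) ^ 2 := by gcongr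
        _ = 4 * m ^ 2 := by ring
    have hdiv : (v / T) ^ 2 / (1 + (v / T) ^ 2) ≤ (v / T) ^ 2 :=
      div_le_self (sq_nonneg _) (by linarith [sq_nonneg (v / T)])
    linarith
  · have hscale {w : ℝ} (hw : |v| ≤ 2 * w) : |v / T| ≤ 2 * (w / T) := by
      rw [abs_div, abs_of_pos hT, ← mul_div_assoc]
      gcongr
    rcases abs_cases v with ⟨habs, -⟩ | ⟨habs, -⟩
    · linarith [sq_div_one_add_sq_le_four_mul_softStep
        (hscale (w := 1 * v - m) (by linarith))]
    · linarith [sq_div_one_add_sq_le_four_mul_softStep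
        (hscale (w := -1 * v - m) (by linarith))]

lemma neg_mul_flux_le {H R s K ς r k z z' b b' g x y : ℝ} (hς : ς ^ 2 = 1) (hH : 0 ≤ H)
    (hR : 2 * H * R = 1) (hr : r ∈ Icc 0 (2 * R)) (hk : k ∈ Icc 0 (2 * s)) (hz : z ∈ Icc 0 1)
    (hz' : |z'| ≤ K) (hb : 0 ≤ b) (hb' : 0 ≤ ς * b') (hg : 0 ≤ g) (hx : x ≤ 1) (hy : |y| ≤ 1) :
    -ς * (r * k * z * (2 * H * b + b' * g) + r * -1 * z * (ς * (b * x)) + k * z' * (b * y))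
      ≤ (2 * R + 4 * s + 2 * s * K) * b := by
  obtain ⟨hr0, hr1⟩ := hr
  obtain ⟨hk0, hk1⟩ := hk
  obtain ⟨hz0, hz1⟩ := hz
  have hς1 : |ς| = 1 := by
    rcases sq_eq_one_iff.1 hς with rfl | rfl <;> simp
  have hs : 0 ≤ s := by linarith
  have hK : 0 ≤ K := (abs_nonneg _).trans hz'
  have hR0 : 0 ≤ R := by linarith
  have hradial : r * z * (b * x) ≤ 2 * R * b := by
    calc r * z * (b * x) ≤ r * z * (b * 1) := by gcongr
      _ ≤ 2 * R * 1 * (b * 1) := by gcongr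
      _ = 2 * R * b := by ring
  have hbulk : r * k * z * (-ς * (2 * H * b + b' * g)) ≤ 4 * s * b := by
    have hsign : -ς * (2 * H * b) ≤ 1 * (2 * H * b) := by
      gcongr
      linarith [neg_abs_le ς]
    calc r * k * z * (-ς * (2 * H * b + b' * g)) ≤ r * k * z * (2 * H * b) := by
          refine mul_le_mul_of_nonneg_left ?_ (by positivity)
          linarith [mul_nonneg hb' hg]
      _ ≤ 2 * R * (2 * s) * 1 * (2 * H * b) := by gcongr
      _ = 4 * s * b := by linear_combination 4 * s * b * hR
  have hangular : -ς * (k * z' * (b * y)) ≤ 2 * s * K * b := by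
    refine (le_abs_self _).trans ?_
    rw [abs_mul, abs_neg, hς1, abs_mul, abs_mul, abs_mul, abs_of_nonneg hk0, abs_of_nonneg hb]
    calc 1 * (k * |z'| * (b * |y|)) ≤ 1 * (2 * s * K * (b * 1)) := by gcongr
      _ = 2 * s * K * b := by ring
  calc _ = r * k * z * (-ς * (2 * H * b + b' * g)) + r * z * (b * x) + -ς * (k * z' * (b * y)) := by
        linear_combination r * z * (b * x) * hς
    _ ≤ _ := by linarith

namespace Strip

variable {H : ℝ} {Ω : Set (ℝ × ℝ)} (S : Strip H Ω) {u : ℝ × ℝ → ℝ} {ς s t t₀ : ℝ} {β : ℝ → ℝ}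

lemma R_add_mem_Icc (hς : ς ^ 2 = 1) (ht : t ∈ Icc (-S.s₀) S.s₀) :
    S.F.R + ς * t ∈ Icc (S.F.R / 2) (2 * S.F.R) := by
  obtain ⟨h₁, h₂⟩ := mul_mem_Icc_neg_of_sq_eq_one hς ht
  have := S.s₀_le
  have := S.F.R_pos
  constructor <;> linarith

/-- Bound for the divergence of `(s₀ - t) ζ β(u) X` relative to `β(u)`. -/
def fluxConst : ℝ := 2 * S.F.R + 4 * S.s₀ + 2 * S.s₀ * (1 + S.K)

lemma fluxConst_pos : 0 < S.fluxConst := by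
  have := S.s₀_pos
  have := S.F.R_pos
  have := S.K_pos
  unfold fluxConst
  positivity

/-- Mass of `β(u)` in the part of the strip at depth between `a` and `b`, on the side `ς`. -/
def bandMass (β : ℝ → ℝ) (u : ℝ × ℝ → ℝ) (ς a b : ℝ) : ℝ :=
  ∫ t in a..b, ∫ θ in S.c..S.d, β (u (S.F.point ς t θ))

lemma continuousOn_comp_solution (hu : IsCMCSolution H Ω u) (hς : ς ^ 2 = 1) (hβ : Continuous β)
    {a b : ℝ} (hab : Icc a b ⊆ Icc (-S.s₀) S.s₀) :
    ContinuousOn (fun x : ℝ × ℝ => β (u (S.F.point ς x.1 x.2))) (Icc a b ×ˢ Icc S.c S.d) :=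
  hβ.comp_continuousOn (S.continuousOn_solution hu hς hab)

lemma mul_integral_flux_le (hu : IsCMCSolution H Ω u) (hς : ς ^ 2 = 1) (hβ : ContDiff ℝ 1 β)
    (hβ0 : ∀ v, 0 ≤ β v) (hβ' : ∀ v, 0 ≤ ς * deriv β v) (ht₀ : t₀ ∈ Icc (-S.s₀) S.s₀) :
    (S.F.R + ς * t₀) * (S.s₀ - t₀) *
        (∫ θ in S.c..S.d, S.ζ θ * (β (u (S.F.point ς t₀ θ)) * S.F.Xr u ς t₀ θ))
      ≤ S.fluxConst * S.bandMass β u ς t₀ S.s₀ := by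
  have hsub : Icc t₀ S.s₀ ⊆ Icc (-S.s₀) S.s₀ := Icc_subset_Icc ht₀.1 le_rfl
  have hdiv := S.integral_divergence hu hς (κ := fun t => S.s₀ - t) (by fun_prop) hβ ht₀.2 hsub
  have hκ (t : ℝ) : deriv (fun t => S.s₀ - t) t = -1 := by rw [deriv_const_sub, deriv_id'']
  simp only [hκ, sub_self, mul_zero, zero_mul, zero_sub] at hdiv
  have hβu := S.continuousOn_comp_solution hu hς hβ.continuous hsub
  have hβ'u := S.continuousOn_comp_solution hu hς (hβ.continuous_deriv le_rfl) hsub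
  have hgrad := S.continuousOn_grad_dot_slope hu hς hsub
  have hXr := S.continuousOn_Xr hu hς hsub
  have hXt := S.continuousOn_Xt hu hς hsub
  have hζ := S.contDiff_ζ.continuous
  have hζ' := S.continuous_deriv_ζ
  have hflux : (S.F.R + ς * t₀) * (S.s₀ - t₀) *
      (∫ θ in S.c..S.d, S.ζ θ * (β (u (S.F.point ς t₀ θ)) * S.F.Xr u ς t₀ θ))
      = -ς * -((S.F.R + ς * t₀) * (S.s₀ - t₀) * ς *
      ∫ θ in S.c..S.d, S.ζ θ * (β (u (S.F.point ς t₀ θ)) * S.F.Xr u ς t₀ θ)) := by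
    linear_combination -(S.F.R + ς * t₀) * (S.s₀ - t₀) * hς *
      ∫ θ in S.c..S.d, S.ζ θ * (β (u (S.F.point ς t₀ θ)) * S.F.Xr u ς t₀ θ)
  rw [hflux, ← hdiv, bandMass]
  simp only [← intervalIntegral.integral_const_mul]
  have hcont : ContinuousOn (fun x : ℝ × ℝ => -ς *
      ((S.F.R + ς * x.1) * (S.s₀ - x.1) * S.ζ x.2 * (2 * H * β (u (S.F.point ς x.1 x.2))
        + deriv β (u (S.F.point ς x.1 x.2)) *
          (planeGrad u (S.F.point ς x.1 x.2) ⬝ slopeField u (S.F.point ς x.1 x.2)))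
      + (S.F.R + ς * x.1) * -1 * S.ζ x.2 * (ς * (β (u (S.F.point ς x.1 x.2)) * S.F.Xr u ς x.1 x.2))
      + (S.s₀ - x.1) * deriv S.ζ x.2 * (β (u (S.F.point ς x.1 x.2)) * S.F.Xt u ς x.1 x.2)))
      (Icc t₀ S.s₀ ×ˢ Icc S.c S.d) := by
    refine continuousOn_const.mul (((ContinuousOn.mul ?_ ((continuousOn_const.mul hβu).add
      (hβ'u.mul hgrad))).add (ContinuousOn.mul ?_ (continuousOn_const.mul (hβu.mul hXr)))).add
      (ContinuousOn.mul ?_ (hβu.mul hXt))) <;> fun_prop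
  refine iteratedIntegral_mono ht₀.2 S.c_le_d hcont (continuousOn_const.mul hβu)
    fun t ht θ hθ => ?_
  obtain ⟨hr, hr'⟩ := S.R_add_mem_Icc hς (hsub ht)
  exact neg_mul_flux_le hς S.H_pos.le S.two_mul_H_mul_R ⟨by linarith [S.F.R_pos], hr'⟩
    ⟨by linarith [ht.2], by linarith [ht.1, ht₀.1]⟩ ⟨S.ζ_nonneg θ hθ, S.ζ_le_one θ hθ⟩
    (S.abs_deriv_ζ_le hθ) (hβ0 _) (hβ' _) (planeGrad_dot_slopeField_nonneg u _)
    (S.F.Xr_le_one u ς t θ) (S.F.abs_Xt_le_one u ς t θ)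

lemma integral_flux_le (hu : IsCMCSolution H Ω u) (hς : ς ^ 2 = 1) (hβ : ContDiff ℝ 1 β)
    (hβ0 : ∀ v, 0 ≤ β v) (hβ' : ∀ v, 0 ≤ ς * deriv β v)
    (ht₀ : t₀ ∈ Icc (-(S.s₀ / 2)) (S.s₀ / 2)) :
    S.F.R * S.s₀ / 4 * (∫ θ in S.c..S.d, S.ζ θ * (β (u (S.F.point ς t₀ θ)) * S.F.Xr u ς t₀ θ))
      ≤ S.fluxConst * S.bandMass β u ς t₀ S.s₀ := by
  have hs₀ := S.s₀_pos
  have hR := S.F.R_pos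
  have ht₀' : t₀ ∈ Icc (-S.s₀) S.s₀ := Icc_subset_Icc (by linarith) (by linarith) ht₀
  rcases le_total (∫ θ in S.c..S.d, S.ζ θ * (β (u (S.F.point ς t₀ θ)) * S.F.Xr u ς t₀ θ)) 0
    with hneg | hpos
  · refine (mul_nonpos_of_nonneg_of_nonpos (by positivity) hneg).trans
      (mul_nonneg S.fluxConst_pos.le ?_)
    exact intervalIntegral.integral_nonneg ht₀'.2 fun t _ =>
      intervalIntegral.integral_nonneg S.c_le_d fun θ _ => hβ0 _
  · refine le_trans ?_ (S.mul_integral_flux_le hu hς hβ hβ0 hβ' ht₀')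
    gcongr
    calc S.F.R * S.s₀ / 4 = S.F.R / 2 * (S.s₀ / 2) := by ring
      _ ≤ _ := by
        gcongr
        · linarith [(S.R_add_mem_Icc hς ht₀').1]
        · exact (S.R_add_mem_Icc hς ht₀').1
        · linarith [ht₀.2]

lemma bandMass_le_add (hu : IsCMCSolution H Ω u) (hς : ς ^ 2 = 1) (hβ : Continuous β)
    (hβ0 : ∀ v, 0 ≤ β v) (hβ1 : ∀ v, β v ≤ 1) (hs : s ≤ S.s₀) (ht₀ : t₀ ∈ Icc (-s) s) :
    S.bandMass β u ς t₀ S.s₀ ≤ s * (S.d - S.c) + S.bandMass β u ς 0 S.s₀ := by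
  have hs0 : 0 ≤ s := by linarith [ht₀.1, ht₀.2]
  have hβu := S.continuousOn_comp_solution hu hς hβ (subset_refl (Icc (-S.s₀) S.s₀))
  have hleft : -s ∈ Icc (-S.s₀) S.s₀ := ⟨by linarith, by linarith⟩
  have hmid : (0 : ℝ) ∈ Icc (-S.s₀) S.s₀ := ⟨by linarith, by linarith⟩
  have hright : S.s₀ ∈ Icc (-S.s₀) S.s₀ := ⟨by linarith, le_rfl⟩
  have hint {a b : ℝ} (ha : a ∈ Icc (-S.s₀) S.s₀) (hb : b ∈ Icc (-S.s₀) S.s₀) :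
      IntervalIntegrable (fun t => ∫ θ in S.c..S.d, β (u (S.F.point ς t θ))) volume a b :=
    ((continuousOn_integral_slice (by linarith) S.c_le_d hβu).mono
      (uIcc_subset_Icc ha hb)).intervalIntegrable
  calc S.bandMass β u ς t₀ S.s₀ ≤ S.bandMass β u ς (-s) S.s₀ :=
        intervalIntegral.integral_mono_interval ht₀.1 (ht₀.2.trans hs) le_rfl
          (Eventually.of_forall fun t => intervalIntegral.integral_nonneg S.c_le_d fun θ _ => hβ0 _)
          (hint hleft hright)
    _ = S.bandMass β u ς (-s) 0 + S.bandMass β u ς 0 S.s₀ :=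
        (intervalIntegral.integral_add_adjacent_intervals (hint hleft hmid) (hint hmid hright)).symm
    _ ≤ s * (S.d - S.c) + S.bandMass β u ς 0 S.s₀ := by
        gcongr
        refine (iteratedIntegral_le_const (e := 1) (by linarith) S.c_le_d
          (hβu.mono (prod_mono (Icc_subset_Icc hleft.1 hmid.2) subset_rfl))
          fun _ _ _ _ => hβ1 _).trans_eq (by ring)

lemma integral_ζ_mul_comp_le (hu : IsCMCSolution H Ω u) (hς : ς ^ 2 = 1) (hβ : Continuous β)
    (hβ1 : ∀ v, β v ≤ 1) (ht₀ : t₀ ∈ Icc (-S.s₀) S.s₀) :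
    (∫ θ in S.c..S.d, S.ζ θ * β (u (S.F.point ς t₀ θ)))
      ≤ (∫ θ in S.c..S.d, S.ζ θ * (β (u (S.F.point ς t₀ θ)) * S.F.Xr u ς t₀ θ))
        + S.deficit u (ς * t₀) := by
  have hβu := S.continuousOn_comp_solution hu hς hβ (subset_refl (Icc (-S.s₀) S.s₀))
  have hXr := S.continuousOn_Xr hu hς (subset_refl (Icc (-S.s₀) S.s₀))
  have hζ : ContinuousOn (fun x : ℝ × ℝ => S.ζ x.2) (Icc (-S.s₀) S.s₀ ×ˢ Icc S.c S.d) :=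
    (S.contDiff_ζ.continuous.comp continuous_snd).continuousOn
  have hflux := intervalIntegrable_slice
    (g := fun t θ => S.ζ θ * (β (u (S.F.point ς t θ)) * S.F.Xr u ς t θ)) S.c_le_d
    (hζ.mul (hβu.mul hXr)) ht₀
  have hmass := intervalIntegrable_slice (g := fun t θ => S.ζ θ * β (u (S.F.point ς t θ)))
    S.c_le_d (hζ.mul hβu) ht₀
  have hdeficit := S.intervalIntegrable_deficit_integrand hu (mul_mem_Icc_neg_of_sq_eq_one hς ht₀)
  rw [deficit, ← intervalIntegral.integral_add hflux hdeficit]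
  refine intervalIntegral.integral_mono_on S.c_le_d hmass (hflux.add hdeficit) fun θ hθ => ?_
  rw [Frame.Xr, Frame.Xr, ← S.F.point_eq_point_one, ← Frame.Xr]
  have hgap : 0 ≤ S.ζ θ * ((1 - β (u (S.F.point ς t₀ θ))) * (1 - S.F.Xr u ς t₀ θ)) :=
    mul_nonneg (S.ζ_nonneg θ hθ)
      (mul_nonneg (sub_nonneg.2 (hβ1 _)) (sub_nonneg.2 (S.F.Xr_le_one u ς t₀ θ)))
  linarith

/-- Ratio between `∫ ζ β(u) X_r` on a circle of the strip and the mass of `β(u)` beyond it. -/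
def massConst : ℝ := S.fluxConst / (S.F.R * S.s₀ / 4)

lemma massConst_pos : 0 < S.massConst := by
  have := S.s₀_pos
  have := S.F.R_pos
  have := S.fluxConst_pos
  unfold massConst
  positivity

lemma integral_ζ_mul_comp_le_bandMass (hu : IsCMCSolution H Ω u) (hς : ς ^ 2 = 1)
    (hβ : ContDiff ℝ 1 β) (hβ0 : ∀ v, 0 ≤ β v) (hβ1 : ∀ v, β v ≤ 1)
    (hβ' : ∀ v, 0 ≤ ς * deriv β v) (hs : s ≤ S.s₀ / 2) (ht₀ : t₀ ∈ Icc (-s) s) :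
    (∫ θ in S.c..S.d, S.ζ θ * β (u (S.F.point ς t₀ θ)))
      ≤ S.massConst * (s * (S.d - S.c) + S.bandMass β u ς 0 S.s₀)
        + S.deficit u (ς * t₀) := by
  have hs₀ := S.s₀_pos
  have hR := S.F.R_pos
  refine (S.integral_ζ_mul_comp_le hu hς hβ.continuous hβ1
    (Icc_subset_Icc (by linarith) (by linarith) ht₀)).trans ?_
  gcongr
  rw [massConst, div_mul_eq_mul_div, le_div_iff₀ (by positivity), mul_comm]
  refine (S.integral_flux_le hu hς hβ hβ0 hβ'
    (Icc_subset_Icc (by linarith) hs ht₀)).trans ?_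
  gcongr
  · exact S.fluxConst_pos.le
  · exact S.bandMass_le_add hu hς hβ.continuous hβ0 hβ1 (by linarith) ht₀

end Strip

/-! ### The weighted area -/

/-- The bounded primitive of `lowWeight T`. -/
def lowPrimitive (T v : ℝ) : ℝ := T * arctan (v / T)

lemma hasDerivAt_lowPrimitive {T : ℝ} (hT : T ≠ 0) (v : ℝ) :
    HasDerivAt (lowPrimitive T) (lowWeight T v) v := by
  refine ((((hasDerivAt_id v).div_const T).arctan).const_mul T).congr_deriv ?_
  simp only [id_eq, lowWeight]
  field_simp

lemma deriv_lowPrimitive {T : ℝ} (hT : T ≠ 0) : deriv (lowPrimitive T) = lowWeight T :=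
  funext fun v => (hasDerivAt_lowPrimitive hT v).deriv

lemma contDiff_lowPrimitive (T : ℝ) : ContDiff ℝ 1 (lowPrimitive T) :=
  contDiff_const.mul (contDiff_arctan.comp (contDiff_id.div_const T))

lemma abs_lowPrimitive_le {T : ℝ} (hT : 0 ≤ T) (v : ℝ) : |lowPrimitive T v| ≤ 2 * T := by
  rw [lowPrimitive, abs_mul, abs_of_nonneg hT, mul_comm]
  gcongr
  rw [abs_le]
  constructor <;>
    linarith [neg_pi_div_two_lt_arctan (v / T), arctan_lt_pi_div_two (v / T), pi_lt_four]

lemma half_mul_area_le {H R K T r z z' b B g W y : ℝ} (hH : 0 ≤ H) (hR : 2 * H * R = 1)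
    (hr : r ∈ Icc (R / 2) R) (hz : z ∈ Icc 0 1) (hz' : |z'| ≤ K) (hb : b ∈ Icc 0 1)
    (hB : |B| ≤ 2 * T) (hW : W - 1 ≤ g) (hg : 0 ≤ g) (hy : |y| ≤ 1) :
    R / 2 * (z * (b * W)) ≤ r * z * (2 * H * B + b * g) + z' * (B * y)
      + (R / 2 + 2 * T + K * (2 * T)) := by
  obtain ⟨hr0, hr1⟩ := hr
  obtain ⟨hz0, hz1⟩ := hz
  obtain ⟨hb0, hb1⟩ := hb
  have hR0 : 0 ≤ R := by linarith
  have hK : 0 ≤ K := (abs_nonneg _).trans hz'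
  have hT : 0 ≤ 2 * T := (abs_nonneg _).trans hB
  have hangular : |z' * (B * y)| ≤ K * (2 * T * 1) := by
    rw [abs_mul, abs_mul]
    gcongr
  have hbulk : |r * z * (2 * H * B)| ≤ 2 * T := by
    have hr' : 0 ≤ r := by linarith
    rw [abs_mul, abs_mul, abs_mul, abs_of_nonneg hr', abs_of_nonneg hz0,
      abs_of_nonneg (by positivity : 0 ≤ 2 * H)]
    calc r * z * (2 * H * |B|) ≤ R * 1 * (2 * H * (2 * T)) := by gcongr
      _ = 2 * T := by linear_combination 2 * T * hR
  have harea : R / 2 * (z * (b * W)) ≤ r * z * (b * g) + R / 2 := by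
    have hgrad : R / 2 * (z * (b * (W - 1))) ≤ r * (z * (b * g)) := by
      calc R / 2 * (z * (b * (W - 1))) ≤ R / 2 * (z * (b * g)) := by gcongr
        _ ≤ r * (z * (b * g)) := by gcongr
    have hone : R / 2 * (z * b) ≤ R / 2 * (1 * 1) := by gcongr
    linarith
  linarith [neg_abs_le (z' * (B * y)), neg_abs_le (r * z * (2 * H * B))]

namespace Strip

variable {H : ℝ} {Ω : Set (ℝ × ℝ)} (S : Strip H Ω) {u : ℝ × ℝ → ℝ} {T : ℝ}

/-- Area of the graph over the circle at depth `t`, cut off at height of order `T`. -/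
def weightedArea (u : ℝ × ℝ → ℝ) (T t : ℝ) : ℝ :=
  ∫ θ in S.c..S.d,
    S.ζ θ * (lowWeight T (u (S.F.point 1 t θ)) * Wgraph u (S.F.point 1 t θ))

lemma continuousOn_ζ_snd {s : Set (ℝ × ℝ)} : ContinuousOn (fun x : ℝ × ℝ => S.ζ x.2) s :=
  (S.contDiff_ζ.continuous.comp continuous_snd).continuousOn

lemma continuousOn_weightedArea_integrand (hu : IsCMCSolution H Ω u) {a b : ℝ}
    (hab : Icc a b ⊆ Icc (-S.s₀) S.s₀) :
    ContinuousOn (fun x : ℝ × ℝ => S.ζ x.2 * (lowWeight T (u (S.F.point 1 x.1 x.2)) *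
      Wgraph u (S.F.point 1 x.1 x.2))) (Icc a b ×ˢ Icc S.c S.d) :=
  S.continuousOn_ζ_snd.mul ((S.continuousOn_comp_solution hu (one_pow 2)
    (continuous_lowWeight T) hab).mul (S.continuousOn_Wgraph hu (one_pow 2) hab))

lemma continuousOn_weightedArea (hu : IsCMCSolution H Ω u) :
    ContinuousOn (S.weightedArea u T) (Icc (-S.s₀) S.s₀) :=
  continuousOn_integral_slice
    (g := fun t θ => S.ζ θ * (lowWeight T (u (S.F.point 1 t θ)) * Wgraph u (S.F.point 1 t θ)))
    (by linarith [S.s₀_pos]) S.c_le_d (S.continuousOn_weightedArea_integrand hu subset_rfl)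

lemma abs_integral_lowPrimitive_flux_le (u : ℝ × ℝ → ℝ) (hT : 0 ≤ T) (t : ℝ) :
    |∫ θ in S.c..S.d, S.ζ θ * (lowPrimitive T (u (S.F.point 1 t θ)) * S.F.Xr u 1 t θ)|
      ≤ 2 * T * (S.d - S.c) := by
  rw [← norm_eq_abs, ← abs_of_nonneg (sub_nonneg.2 S.c_le_d)]
  refine intervalIntegral.norm_integral_le_of_norm_le_const fun θ hθ => ?_
  rw [uIoc_of_le S.c_le_d] at hθ
  have hζ := S.ζ_nonneg θ (Ioc_subset_Icc_self hθ)
  rw [norm_eq_abs, abs_mul, abs_mul, abs_of_nonneg hζ]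
  calc _ ≤ 1 * (2 * T * 1) := by
        gcongr
        · exact S.ζ_le_one θ (Ioc_subset_Icc_self hθ)
        · exact abs_lowPrimitive_le hT _
        · exact S.F.abs_Xr_le_one u 1 t θ
    _ = 2 * T := by ring

/-- Integrand in polar coordinates of the divergence of `ζ B(u) X` with `B = lowPrimitive T`. -/
def lowDivergence (u : ℝ × ℝ → ℝ) (T t θ : ℝ) : ℝ :=
  (S.F.R + t) * S.ζ θ * (2 * H * lowPrimitive T (u (S.F.point 1 t θ)) +
      lowWeight T (u (S.F.point 1 t θ)) *
        (planeGrad u (S.F.point 1 t θ) ⬝ slopeField u (S.F.point 1 t θ)))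
    + deriv S.ζ θ * (lowPrimitive T (u (S.F.point 1 t θ)) * S.F.Xt u 1 t θ)

lemma continuousOn_lowDivergence (hu : IsCMCSolution H Ω u) {a b : ℝ}
    (hab : Icc a b ⊆ Icc (-S.s₀) S.s₀) :
    ContinuousOn (fun x : ℝ × ℝ => S.lowDivergence u T x.1 x.2) (Icc a b ×ˢ Icc S.c S.d) := by
  have hlow' := S.continuousOn_comp_solution hu (one_pow 2) (contDiff_lowPrimitive T).continuous hab
  have hlow := S.continuousOn_comp_solution hu (one_pow 2) (continuous_lowWeight T) hab
  have hgrad := S.continuousOn_grad_dot_slope hu (one_pow 2) hab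
  have hXt := S.continuousOn_Xt hu (one_pow 2) hab
  have hζ' := S.continuous_deriv_ζ
  refine ((ContinuousOn.mul ?_ S.continuousOn_ζ_snd).mul ((continuousOn_const.mul hlow').add
    (hlow.mul hgrad))).add (ContinuousOn.mul ?_ (hlow'.mul hXt)) <;> fun_prop

lemma integral_lowDivergence (hu : IsCMCSolution H Ω u) (hT : T ≠ 0) {a b : ℝ} (hle : a ≤ b)
    (hab : Icc a b ⊆ Icc (-S.s₀) S.s₀) :
    (∫ t in a..b, ∫ θ in S.c..S.d, S.lowDivergence u T t θ)
      = (S.F.R + b) *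
          (∫ θ in S.c..S.d, S.ζ θ * (lowPrimitive T (u (S.F.point 1 b θ)) * S.F.Xr u 1 b θ))
        - (S.F.R + a) *
          (∫ θ in S.c..S.d, S.ζ θ * (lowPrimitive T (u (S.F.point 1 a θ)) * S.F.Xr u 1 a θ)) := by
  have hdiv := S.integral_divergence hu (one_pow 2) (κ := fun _ => 1) contDiff_const
    (contDiff_lowPrimitive T) hle hab
  simpa only [lowDivergence, deriv_const, mul_one, one_mul, zero_mul, mul_zero, add_zero,
    deriv_lowPrimitive hT] using hdiv

lemma half_mul_weightedArea_integrand_le (u : ℝ × ℝ → ℝ) (hT : 0 ≤ T) {t θ : ℝ}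
    (ht : t ∈ Icc (-S.s₀) 0) (hθ : θ ∈ Icc S.c S.d) :
    S.F.R / 2 * (S.ζ θ * (lowWeight T (u (S.F.point 1 t θ)) * Wgraph u (S.F.point 1 t θ)))
      ≤ S.lowDivergence u T t θ + (S.F.R / 2 + 2 * T + (1 + S.K) * (2 * T)) :=
  half_mul_area_le S.H_pos.le S.two_mul_H_mul_R
    ⟨by linarith [ht.1, S.s₀_le], by linarith [ht.2]⟩
    ⟨S.ζ_nonneg θ hθ, S.ζ_le_one θ hθ⟩ (S.abs_deriv_ζ_le hθ)
    ⟨lowWeight_nonneg T _, lowWeight_le_one T _⟩ (abs_lowPrimitive_le hT _)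
    (Wgraph_sub_one_le u _) (planeGrad_dot_slopeField_nonneg u _) (S.F.abs_Xt_le_one u 1 t θ)

lemma half_mul_integral_weightedArea_le (hu : IsCMCSolution H Ω u) (hT : 0 < T) {σ s : ℝ}
    (hσ : 0 ≤ σ) (hσs : σ ≤ s) (hs : s ≤ S.s₀) :
    S.F.R / 2 * (∫ t in (-s)..(-σ), S.weightedArea u T t)
      ≤ (S.F.R - σ) * (2 * T * (S.d - S.c)) + (S.F.R - s) * (2 * T * (S.d - S.c))
        + (s - σ) * (S.d - S.c) * (S.F.R / 2 + 2 * T + (1 + S.K) * (2 * T)) := by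
  have hle : -s ≤ -σ := neg_le_neg hσs
  have hsub : Icc (-s) (-σ) ⊆ Icc (-S.s₀) S.s₀ :=
    Icc_subset_Icc (neg_le_neg hs) (by linarith [S.s₀_pos])
  have hcont := S.continuousOn_lowDivergence (T := T) hu hsub
  have hmono := iteratedIntegral_mono
    (f := fun t θ => S.F.R / 2 *
      (S.ζ θ * (lowWeight T (u (S.F.point 1 t θ)) * Wgraph u (S.F.point 1 t θ))))
    (g := fun t θ => S.lowDivergence u T t θ + (S.F.R / 2 + 2 * T + (1 + S.K) * (2 * T)))
    hle S.c_le_d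
    (continuousOn_const.mul (S.continuousOn_weightedArea_integrand hu hsub))
    (hcont.add continuousOn_const) fun t ht θ hθ =>
      S.half_mul_weightedArea_integrand_le u hT.le ⟨(hsub ht).1, by linarith [ht.2]⟩ hθ
  rw [iteratedIntegral_add hle S.c_le_d hcont continuousOn_const,
    S.integral_lowDivergence hu hT.ne' hle hsub] at hmono
  simp only [intervalIntegral.integral_const_mul, intervalIntegral.integral_const,
    smul_eq_mul] at hmono
  have houter := (abs_le.1 (S.abs_integral_lowPrimitive_flux_le u hT.le (-σ))).2
  have hinner := (abs_le.1 (S.abs_integral_lowPrimitive_flux_le u hT.le (-s))).1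
  have hR := S.s₀_le
  have hs₀ := S.s₀_pos
  unfold weightedArea
  linarith [mul_le_mul_of_nonneg_left houter (by linarith : 0 ≤ S.F.R - σ),
    mul_le_mul_of_nonneg_left hinner (by linarith : 0 ≤ S.F.R - s)]

/-- Bound for the weighted area of the inner half of the strip relative to `T + 1`. -/
def areaConst : ℝ :=
  2 / S.F.R * ((S.d - S.c) * (4 * S.F.R + S.s₀ * (S.F.R / 2 + 2 + (1 + S.K) * 2)))

lemma areaConst_nonneg : 0 ≤ S.areaConst := by
  have := S.s₀_pos
  have := S.F.R_pos
  have := S.K_pos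
  have := sub_nonneg.2 S.c_le_d
  unfold areaConst
  positivity

lemma integral_weightedArea_le (hu : IsCMCSolution H Ω u) (hT : 0 < T) {σ s : ℝ}
    (hσ : 0 ≤ σ) (hσs : σ ≤ s) (hs : s ≤ S.s₀) :
    (∫ t in (-s)..(-σ), S.weightedArea u T t) ≤ S.areaConst * (T + 1) := by
  have hR := S.F.R_pos
  have hK := S.K_pos
  have hcd := sub_nonneg.2 S.c_le_d
  have hs₀ := S.s₀_pos
  rw [areaConst, div_mul_eq_mul_div, div_mul_eq_mul_div, le_div_iff₀ hR]
  have hside {x : ℝ} (hx : 0 ≤ x) :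
      (S.F.R - x) * (2 * T * (S.d - S.c)) ≤ S.F.R * (2 * (T + 1) * (S.d - S.c)) := by
    gcongr <;> linarith
  have hbulk : (s - σ) * (S.d - S.c) * (S.F.R / 2 + 2 * T + (1 + S.K) * (2 * T))
      ≤ S.s₀ * (S.d - S.c) * ((S.F.R / 2 + 2 + (1 + S.K) * 2) * (T + 1)) := by
    gcongr
    · linarith
    · have : 0 ≤ S.F.R / 2 * T + 2 + (1 + S.K) * 2 := by positivity
      linarith
  linarith [S.half_mul_integral_weightedArea_le hu hT hσ hσs hs, hside hσ, hside (hσ.trans hσs)]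

/-! ### Logarithmic divergence of the area -/

/-- Part of the mass of `ζ` on the circle at depth `t` where `u` is large compared with `T`. -/
def largeMass (u : ℝ × ℝ → ℝ) (T t : ℝ) : ℝ :=
  ∫ θ in S.c..S.d, S.ζ θ * (1 - lowWeight T (u (S.F.point 1 t θ)))

lemma intervalIntegrable_ζ_mul_comp (hu : IsCMCSolution H Ω u) {β : ℝ → ℝ} (hβ : Continuous β)
    {t : ℝ} (ht : t ∈ Icc (-S.s₀) S.s₀) :
    IntervalIntegrable (fun θ => S.ζ θ * β (u (S.F.point 1 t θ))) volume S.c S.d :=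
  intervalIntegrable_slice (g := fun t θ => S.ζ θ * β (u (S.F.point 1 t θ))) S.c_le_d
    (S.continuousOn_ζ_snd.mul (S.continuousOn_comp_solution hu (one_pow 2) hβ subset_rfl)) ht

lemma intervalIntegrable_largeMass_integrand (hu : IsCMCSolution H Ω u) {t : ℝ}
    (ht : t ∈ Icc (-S.s₀) S.s₀) :
    IntervalIntegrable (fun θ => S.ζ θ * (1 - lowWeight T (u (S.F.point 1 t θ)))) volume S.c S.d :=
  S.intervalIntegrable_ζ_mul_comp hu (β := fun v => 1 - lowWeight T v)
    (continuous_const.sub (continuous_lowWeight T)) ht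

lemma intervalIntegrable_ζ : IntervalIntegrable S.ζ volume S.c S.d :=
  S.contDiff_ζ.continuous.intervalIntegrable _ _

lemma tangent_line_le_weightedArea (hu : IsCMCSolution H Ω u) {t h : ℝ} (hh : 0 < h)
    (ht : t ∈ Icc (-S.s₀) S.s₀) :
    3 / (2 * h) * (S.mass - S.largeMass u T t) - 1 / h ^ 3 * S.deficit u t
      ≤ S.weightedArea u T t := by
  have hζ := S.intervalIntegrable_ζ
  have hlarge := S.intervalIntegrable_largeMass_integrand (T := T) hu ht
  have hdeficit := S.intervalIntegrable_deficit_integrand hu ht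
  rw [mass, largeMass, deficit, ← intervalIntegral.integral_sub hζ hlarge,
    ← intervalIntegral.integral_const_mul, ← intervalIntegral.integral_const_mul,
    ← intervalIntegral.integral_sub ((hζ.sub hlarge).const_mul _) (hdeficit.const_mul _)]
  refine intervalIntegral.integral_mono_on S.c_le_d
    (((hζ.sub hlarge).const_mul _).sub (hdeficit.const_mul _))
    (intervalIntegrable_slice (g := fun t θ => S.ζ θ * (lowWeight T (u (S.F.point 1 t θ)) *
      Wgraph u (S.F.point 1 t θ))) S.c_le_d
      (S.continuousOn_weightedArea_integrand hu subset_rfl) ht) fun θ hθ => ?_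
  have hζ0 := S.ζ_nonneg θ hθ
  have hlow0 := lowWeight_nonneg T (u (S.F.point 1 t θ))
  have hlow1 := lowWeight_le_one T (u (S.F.point 1 t θ))
  have hXr := S.F.Xr_le_one u 1 t θ
  have harea : S.ζ θ * (lowWeight T (u (S.F.point 1 t θ)) *
      (3 / (2 * h) - (1 - S.F.Xr u 1 t θ) / h ^ 3))
      ≤ S.ζ θ * (lowWeight T (u (S.F.point 1 t θ)) * Wgraph u (S.F.point 1 t θ)) := by
    gcongr
    exact S.F.tangent_line_le_Wgraph u 1 t θ hh
  have hlost : 0 ≤ S.ζ θ * ((1 - lowWeight T (u (S.F.point 1 t θ))) *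
      ((1 - S.F.Xr u 1 t θ) / h ^ 3)) :=
    mul_nonneg hζ0 (mul_nonneg (by linarith) (div_nonneg (by linarith) (by positivity)))
  rw [one_div_mul_eq_div] at *
  linear_combination harea + hlost

lemma mul_inv_le_weightedArea (hu : IsCMCSolution H Ω u) {l x Γ : ℝ} (hl : 0 < l)
    (hx : x ∈ Ioc 0 S.s₀) (hΓ : l ^ 2 * Γ ≤ S.mass / 4) (hdeficit : S.deficit u (-x) ≤ Γ * x ^ 2)
    (hlarge : S.largeMass u T (-x) ≤ S.mass / 2) :
    l * S.mass / 2 * x⁻¹ ≤ S.weightedArea u T (-x) := by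
  have hx0 := hx.1
  have harea := S.tangent_line_le_weightedArea (T := T) hu (div_pos hx0 hl)
    ⟨neg_le_neg hx.2, by linarith [S.s₀_pos]⟩
  refine le_trans ?_ harea
  have hquad : 1 / (x / l) ^ 3 * S.deficit u (-x) ≤ l * x⁻¹ * (S.mass / 4) := by
    calc 1 / (x / l) ^ 3 * S.deficit u (-x) ≤ 1 / (x / l) ^ 3 * (Γ * x ^ 2) := by gcongr
      _ = l * x⁻¹ * (l ^ 2 * Γ) := by field_simp
      _ ≤ l * x⁻¹ * (S.mass / 4) := by gcongr
  have hlin : 3 / (2 * (x / l)) * (S.mass / 2)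
      ≤ 3 / (2 * (x / l)) * (S.mass - S.largeMass u T (-x)) := by
    gcongr
    linarith
  have hcoef : 3 / (2 * (x / l)) = 3 / 2 * (l * x⁻¹) := by field_simp
  rw [hcoef] at hlin ⊢
  linarith

lemma largeMass_le (hu : IsCMCSolution H Ω u) (m : ℝ) (hT : 0 < T) {t : ℝ}
    (ht : t ∈ Icc (-S.s₀) S.s₀) :
    S.largeMass u T t ≤ 4 * (∫ θ in S.c..S.d, S.ζ θ * levelStep 1 m T (u (S.F.point 1 t θ)))
      + 4 * (∫ θ in S.c..S.d, S.ζ θ * levelStep (-1) m T (u (S.F.point 1 t θ)))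
      + 4 * m ^ 2 / T ^ 2 * S.mass := by
  have hstep (ς : ℝ) :=
    (S.intervalIntegrable_ζ_mul_comp hu (contDiff_levelStep ς m T).continuous ht).const_mul 4
  have hζ := S.intervalIntegrable_ζ.const_mul (4 * m ^ 2 / T ^ 2)
  rw [mass, largeMass]
  simp only [← intervalIntegral.integral_const_mul]
  rw [← intervalIntegral.integral_add (hstep 1) (hstep (-1)),
    ← intervalIntegral.integral_add ((hstep 1).add (hstep (-1))) hζ]
  refine intervalIntegral.integral_mono_on S.c_le_d
    (S.intervalIntegrable_largeMass_integrand hu ht) (((hstep 1).add (hstep (-1))).add hζ)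
    fun θ hθ => ?_
  have := mul_le_mul_of_nonneg_left (one_sub_lowWeight_le_levelStep (m := m) hT
    (u (S.F.point 1 t θ))) (S.ζ_nonneg θ hθ)
  linarith

lemma integral_ζ_mul_levelStep_le (hu : IsCMCSolution H Ω u) {ς m s t : ℝ} (hς : ς ^ 2 = 1)
    (hT : 0 < T) (hs : s ≤ S.s₀ / 2) (ht : t ∈ Icc (-s) s) :
    (∫ θ in S.c..S.d, S.ζ θ * levelStep ς m T (u (S.F.point 1 t θ)))
      ≤ S.massConst * (s * (S.d - S.c) + S.bandMass (levelStep ς m T) u ς 0 S.s₀)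
        + S.deficit u t := by
  have hmono (v : ℝ) : 0 ≤ ς * deriv (levelStep ς m T) v := by
    rw [(hasDerivAt_levelStep ς m T v).deriv]
    calc 0 ≤ deriv softStep ((ς * v - m) / T) * (1 / T) :=
          mul_nonneg (deriv_softStep_nonneg _) (by positivity)
      _ = _ := by linear_combination -deriv softStep ((ς * v - m) / T) * (1 / T) * hς
  have hinv : ς * (ς * t) = t := by linear_combination t * hς
  have hbound := S.integral_ζ_mul_comp_le_bandMass hu hς (contDiff_levelStep ς m T)
    (fun v => softStep_nonneg _) (fun v => softStep_le_one _) hmono hs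
    (mul_mem_Icc_neg_of_sq_eq_one hς ht)
  simpa only [S.F.point_eq_point_one ς (ς * t), hinv] using hbound

/-- Growth rate of the deficit with the square of the depth. -/
def growthConst : ℝ := 4 + 8 * S.K * (S.d - S.c) / S.F.R ^ 2

lemma growthConst_pos : 0 < S.growthConst := by
  have := S.F.R_pos
  have := S.K_pos
  have := sub_nonneg.2 S.c_le_d
  unfold growthConst
  positivity

lemma deficit_neg_le_growthConst_mul (hu : IsCMCSolution H Ω u) {x : ℝ} (hx : x ∈ Ioc 0 S.s₀)
    (hdeficit : S.deficit u 0 ≤ x ^ 2) : S.deficit u (-x) ≤ S.growthConst * x ^ 2 := by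
  have := S.deficit_neg_le hu hx.1 hx.2 ⟨hx.1.le, le_rfl⟩
  unfold growthConst
  linarith

lemma largeMass_le_half_mass (hu : IsCMCSolution H Ω u) {m s x : ℝ} (hm : 0 ≤ m)
    (hT : 6 * m + 1 ≤ T) (hs : s ≤ S.s₀ / 2) (hs₁ : 64 * S.massConst * (S.d - S.c) * s ≤ S.mass)
    (hs₂ : 64 * S.growthConst * s ^ 2 ≤ S.mass) (hx : x ∈ Ioc 0 s)
    (hband : ∀ ς : ℝ, ς ^ 2 = 1 →
      S.bandMass (levelStep ς m T) u ς 0 S.s₀ ≤ S.mass / (64 * S.massConst))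
    (hdeficit : S.deficit u (-x) ≤ S.growthConst * x ^ 2) :
    S.largeMass u T (-x) ≤ S.mass / 2 := by
  have hx0 := hx.1
  have hT0 : 0 < T := by linarith
  have hmass : 0 < S.mass := S.integral_ζ_pos
  have hmassConst := S.massConst_pos
  have hgrowth := S.growthConst_pos
  have hstep {ς : ℝ} (hς : ς ^ 2 = 1) :
      (∫ θ in S.c..S.d, S.ζ θ * levelStep ς m T (u (S.F.point 1 (-x) θ))) ≤ 3 / 64 * S.mass := by
    have hgrow : S.growthConst * x ^ 2 ≤ S.growthConst * s ^ 2 := by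
      gcongr
      exact hx.2
    have hmul : S.massConst * S.bandMass (levelStep ς m T) u ς 0 S.s₀ ≤ S.mass / 64 := by
      calc _ ≤ S.massConst * (S.mass / (64 * S.massConst)) := by
            gcongr
            exact hband ς hς
        _ = S.mass / 64 := by field_simp
    have hbound := S.integral_ζ_mul_levelStep_le hu (m := m) hς hT0 hs (t := -x)
      ⟨neg_le_neg hx.2, by linarith [hx.2]⟩
    linarith
  have hlevel : 4 * m ^ 2 / T ^ 2 * S.mass ≤ 1 / 8 * S.mass := by
    refine mul_le_mul_of_nonneg_right ?_ hmass.le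
    rw [div_le_div_iff₀ (by positivity) (by norm_num)]
    nlinarith
  have hlarge := S.largeMass_le hu m hT0 (t := -x)
    ⟨by linarith [hx.2, S.s₀_pos], by linarith [S.s₀_pos]⟩
  linarith [hstep (one_pow 2), hstep neg_one_sq]

lemma mul_log_le_areaConst_mul (hu : IsCMCSolution H Ω u) (hT : 0 < T) {σ s a : ℝ} (hσ : 0 < σ)
    (hσs : σ ≤ s) (hs : s ≤ S.s₀) (h : ∀ x ∈ Icc σ s, a * x⁻¹ ≤ S.weightedArea u T (-x)) :
    a * log (s / σ) ≤ S.areaConst * (T + 1) := by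
  have hinv : ContinuousOn (fun x : ℝ => a * x⁻¹) (Icc σ s) :=
    continuousOn_const.mul (continuousOn_id.inv₀ fun x hx => (hσ.trans_le hx.1).ne')
  have harea : ContinuousOn (fun x => S.weightedArea u T (-x)) (Icc σ s) :=
    (S.continuousOn_weightedArea hu).comp (by fun_prop) fun x hx =>
      ⟨by linarith [hx.2], by linarith [hx.1]⟩
  calc a * log (s / σ) = ∫ x in σ..s, a * x⁻¹ := by
        rw [intervalIntegral.integral_const_mul, integral_inv_of_pos hσ (hσ.trans_le hσs)]
    _ ≤ ∫ x in σ..s, S.weightedArea u T (-x) :=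
        intervalIntegral.integral_mono_on hσs (hinv.intervalIntegrable_of_Icc hσs)
          (harea.intervalIntegrable_of_Icc hσs) h
    _ = ∫ t in (-s)..(-σ), S.weightedArea u T t := intervalIntegral.integral_comp_neg _
    _ ≤ S.areaConst * (T + 1) := S.integral_weightedArea_le hu hT hσ.le hσs hs

end Strip

lemma exists_pos_mul_le_and_mul_sq_le {a z : ℝ} (ha : 0 < a) (hz : 0 < z) (b c : ℝ) :
    ∃ s : ℝ, 0 < s ∧ s ≤ a ∧ b * s ≤ z ∧ c * s ^ 2 ≤ z := by
  have hlin : ∀ᶠ s in nhdsWithin (0 : ℝ) (Ioi 0), b * s < z :=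
    nhdsWithin_le_nhds ((by fun_prop : Continuous fun s : ℝ => b * s).continuousAt.eventually_lt
      continuousAt_const (by simpa))
  have hsq : ∀ᶠ s in nhdsWithin (0 : ℝ) (Ioi 0), c * s ^ 2 < z :=
    nhdsWithin_le_nhds ((by fun_prop : Continuous fun s : ℝ => c * s ^ 2).continuousAt.eventually_lt
      continuousAt_const (by simpa))
  obtain ⟨s, h₁, h₂, hs⟩ := (hlin.and (hsq.and (Ioc_mem_nhdsGT ha))).exists
  exact ⟨s, hs.1, hs.2, h₁.le, h₂.le⟩

/-- The weighted area between depths `σ` and `s` is at least a constant times `log (s / σ)`, but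
bounded independently of `σ`. -/
lemma Strip.exists_lt_deficit_zero {H : ℝ} {Ω : Set (ℝ × ℝ)} (S : Strip H Ω) {m : ℝ}
    (hm : 0 ≤ m) : ∃ ε : ℝ, 0 < ε ∧ ∀ᶠ T in atTop, ∃ η : ℝ, 0 < η ∧ ∀ u,
      IsCMCSolution H Ω u →
      (∀ ς : ℝ, ς ^ 2 = 1 → S.bandMass (levelStep ς m T) u ς 0 S.s₀ ≤ ε) → η < S.deficit u 0 := by
  have hmass : 0 < S.mass := S.integral_ζ_pos
  have hs₀ := S.s₀_pos
  have hgrowth := S.growthConst_pos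
  obtain ⟨s, hs, hs', hs₁, hs₂⟩ := exists_pos_mul_le_and_mul_sq_le (half_pos hs₀) hmass
    (64 * S.massConst * (S.d - S.c)) (64 * S.growthConst)
  obtain ⟨l, hl, -, -, hlΓ⟩ := exists_pos_mul_le_and_mul_sq_le one_pos
    (by positivity : 0 < S.mass / 4) 0 S.growthConst
  refine ⟨S.mass / (64 * S.massConst), div_pos hmass (mul_pos (by norm_num) S.massConst_pos), ?_⟩
  filter_upwards [eventually_ge_atTop (6 * m + 1)] with T hT
  have hT0 : 0 < T := by linarith
  set a := l * S.mass / 2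
  have ha0 : 0 < a := by positivity
  set E := S.areaConst * (T + 1) / a + 1 with hE
  have hE0 : 0 ≤ E := by
    have := S.areaConst_nonneg
    positivity
  set σ := s * exp (-E) with hσ
  have hσs : σ ≤ s := mul_le_of_le_one_right hs.le (exp_le_one_iff.2 (neg_nonpos.2 hE0))
  have hσ0 : 0 < σ := by positivity
  refine ⟨σ ^ 2, by positivity, fun u hu hband => not_le.1 fun hsmall => ?_⟩
  have hlower : ∀ x ∈ Icc σ s, a * x⁻¹ ≤ S.weightedArea u T (-x) := fun x hx => by
    have hx' : x ∈ Ioc 0 S.s₀ := ⟨hσ0.trans_le hx.1, by linarith [hx.2]⟩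
    have hdeficit := S.deficit_neg_le_growthConst_mul hu hx'
      (hsmall.trans (pow_le_pow_left₀ hσ0.le hx.1 2))
    exact S.mul_inv_le_weightedArea hu hl hx' (by linarith) hdeficit
      (S.largeMass_le_half_mass hu hm hT hs' hs₁ hs₂ ⟨hx'.1, hx.2⟩ hband hdeficit)
  have hlog : log (s / σ) = E := by
    rw [hσ, div_mul_cancel_left₀ hs.ne', ← exp_neg, neg_neg, log_exp]
  have hupper := S.mul_log_le_areaConst_mul hu hT0 hσ0 hσs (by linarith) hlower
  rw [hlog, hE, mul_add, mul_div_cancel₀ _ ha0.ne'] at hupper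
  linarith

/-! ### The test field at a corner -/

lemma le_one_of_sq_eq_one {ς : ℝ} (hς : ς ^ 2 = 1) : ς ≤ 1 := by
  rcases sq_eq_one_iff.1 hς with rfl | rfl <;> norm_num

lemma neg_one_le_of_sq_eq_one {ς : ℝ} (hς : ς ^ 2 = 1) : -1 ≤ ς := by
  rcases sq_eq_one_iff.1 hς with rfl | rfl <;> norm_num

/-- Squared Euclidean distance to `A`. -/
def sqDist (A x : ℝ × ℝ) : ℝ := (x - A) ⬝ (x - A)

lemma sqDist_nonneg (A x : ℝ × ℝ) : 0 ≤ sqDist A x := planeDot_self_nonneg _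

lemma contDiff_sqDist (A : ℝ × ℝ) : ContDiff ℝ 1 (sqDist A) := by
  unfold sqDist planeDot
  fun_prop

lemma continuous_sqDist (A : ℝ × ℝ) : Continuous (sqDist A) := (contDiff_sqDist A).continuous

lemma differentiableAt_sqDist (A q : ℝ × ℝ) : DifferentiableAt ℝ (sqDist A) q :=
  (contDiff_sqDist A).differentiable one_ne_zero q

lemma planeGrad_sqDist (A q : ℝ × ℝ) : planeGrad (sqDist A) q = (2 : ℝ) • (q - A) := by
  have hfst : HasFDerivAt (fun x : ℝ × ℝ => x.1 - A.1) (ContinuousLinearMap.fst ℝ ℝ ℝ) q :=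
    hasFDerivAt_fst.sub_const _
  have hsnd : HasFDerivAt (fun x : ℝ × ℝ => x.2 - A.2) (ContinuousLinearMap.snd ℝ ℝ ℝ) q :=
    hasFDerivAt_snd.sub_const _
  have h : fderiv ℝ (sqDist A) q = _ := ((hfst.mul hfst).add (hsnd.mul hsnd)).fderiv
  ext <;> simp [planeGrad, pdx, pdy, h, two_mul]

/-- The radial cut-off `((|x - A|² - e)⁺)²`. -/
def radialCutoff (A : ℝ × ℝ) (e : ℝ) (x : ℝ × ℝ) : ℝ := max (sqDist A x - e) 0 ^ 2

lemma contDiff_radialCutoff (A : ℝ × ℝ) (e : ℝ) : ContDiff ℝ 1 (radialCutoff A e) :=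
  contDiff_max_zero_sq.comp ((contDiff_sqDist A).sub contDiff_const)

lemma radialCutoff_nonneg (A : ℝ × ℝ) (e : ℝ) (x : ℝ × ℝ) : 0 ≤ radialCutoff A e x := sq_nonneg _

lemma planeGrad_radialCutoff (A : ℝ × ℝ) (e : ℝ) (q : ℝ × ℝ) :
    planeGrad (radialCutoff A e) q = (4 * max (sqDist A q - e) 0) • (q - A) := by
  have hcutoff : HasDerivAt (fun s : ℝ => max (s - e) 0 ^ 2) (2 * max (sqDist A q - e) 0)
      (sqDist A q) :=
    ((hasDerivAt_max_zero_sq _).comp _ ((hasDerivAt_id _).sub_const e)).congr_deriv (mul_one _)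
  have h := planeGrad_comp (differentiableAt_sqDist A q) hcutoff.differentiableAt
  rw [hcutoff.deriv, planeGrad_sqDist, smul_smul] at h
  rw [show 4 * max (sqDist A q - e) 0 = 2 * max (sqDist A q - e) 0 * 2 by ring]
  exact h

/-- The unit radial vector field from `A`. -/
def unitField (A x : ℝ × ℝ) : ℝ × ℝ := (√(sqDist A x))⁻¹ • (x - A)

section UnitField

variable {A q : ℝ × ℝ}

lemma sqrt_smul_unitField (hq : 0 < sqDist A q) : √(sqDist A q) • unitField A q = q - A :=
  smul_inv_smul₀ (Real.sqrt_pos.2 hq).ne' _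

lemma unitField_dot_self (hq : 0 < sqDist A q) : unitField A q ⬝ unitField A q = 1 := by
  have hρ := Real.sqrt_pos.2 hq
  have h : √(sqDist A q) ^ 2 = (q - A) ⬝ (q - A) := Real.sq_sqrt hq.le
  rw [unitField, planeDot_smul_left, planeDot_smul_right, ← h]
  field_simp

lemma unitField_dot_self_le_one (A q : ℝ × ℝ) : unitField A q ⬝ unitField A q ≤ 1 := by
  rcases (sqDist_nonneg A q).eq_or_lt with hq | hq
  · simp [unitField, ← hq, planeDot]
  · exact (unitField_dot_self hq).le

lemma neg_one_le_mul_unitField_dot {ς : ℝ} {w : ℝ × ℝ} (hς : ς ^ 2 = 1) (hw : w ⬝ w ≤ 1)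
    (A q : ℝ × ℝ) : -1 ≤ ς * (unitField A q ⬝ w) := by
  refine (abs_le_of_sq_le_sq' ?_ zero_le_one).1
  rw [mul_pow, hς, one_mul, one_pow]
  exact (planeDot_sq_le _ _).trans
    (mul_le_one₀ (unitField_dot_self_le_one A q) (planeDot_self_nonneg _) hw)

lemma contDiffAt_inv_sqrt_sqDist (hq : 0 < sqDist A q) :
    ContDiffAt ℝ 1 (fun x => (√(sqDist A x))⁻¹) q :=
  ((contDiff_sqDist A).contDiffAt.sqrt hq.ne').inv (Real.sqrt_pos.2 hq).ne'

lemma contDiffAt_unitField (hq : 0 < sqDist A q) : ContDiffAt ℝ 1 (unitField A) q :=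
  (contDiffAt_inv_sqrt_sqDist hq).smul (by fun_prop)

lemma planeDiv_unitField (hq : 0 < sqDist A q) : planeDiv (unitField A) q = 1 / √(sqDist A q) := by
  have hρ := Real.sqrt_pos.2 hq
  have hinv : HasDerivAt (fun s => (√s)⁻¹) _ (sqDist A q) :=
    (Real.hasDerivAt_sqrt hq.ne').inv hρ.ne'
  have hgrad := planeGrad_comp (differentiableAt_sqDist A q) hinv.differentiableAt
  have hid : planeDiv (fun x => x - A) q = 2 := by
    simp only [planeDiv, fderiv_sub_const, fderiv_fun_id, ContinuousLinearMap.id_apply]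
    norm_num
  have hdiv := planeDiv_smul ((contDiffAt_inv_sqrt_sqDist hq).differentiableAt one_ne_zero)
    (by fun_prop : DifferentiableAt ℝ (fun x => x - A) q)
  have hsq : (q - A) ⬝ (q - A) = √(sqDist A q) ^ 2 := (Real.sq_sqrt hq.le).symm
  rw [hgrad, hinv.deriv, planeGrad_sqDist, planeDot_smul_left, planeDot_smul_left, hid, hsq] at hdiv
  refine hdiv.trans ?_
  field_simp
  ring

end UnitField

/-- The direction `e + ς X` of the test field, where `e` is the unit radial field from `A` and `X`
the slope field of `u`. -/
def testDirection (A : ℝ × ℝ) (ς : ℝ) (u : ℝ × ℝ → ℝ) (x : ℝ × ℝ) : ℝ × ℝ :=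
  unitField A x + ς • slopeField u x

section TestDirection

variable {H : ℝ} {Ω : Set (ℝ × ℝ)} {u : ℝ × ℝ → ℝ} {q A : ℝ × ℝ} {ς : ℝ}

lemma contDiffAt_testDirection (hu : IsCMCSolution H Ω u) (hΩ : IsOpen Ω) (hq : q ∈ Ω) (ς : ℝ)
    (hA : 0 < sqDist A q) : ContDiffAt ℝ 1 (testDirection A ς u) q :=
  (contDiffAt_unitField hA).add ((hu.contDiffAt_slopeField hΩ hq).const_smul ς)

lemma planeDiv_testDirection (hu : IsCMCSolution H Ω u) (hΩ : IsOpen Ω) (hq : q ∈ Ω) (ς : ℝ)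
    (hA : 0 < sqDist A q) :
    planeDiv (testDirection A ς u) q = 1 / √(sqDist A q) + ς * (2 * H) := by
  have hX := (hu.contDiffAt_slopeField hΩ hq).differentiableAt one_ne_zero
  have hς : DifferentiableAt ℝ (fun _ : ℝ × ℝ => ς) q := differentiableAt_const ς
  have h := planeDiv_add ((contDiffAt_unitField hA).differentiableAt one_ne_zero) (hς.smul hX)
  refine h.trans ?_
  rw [planeDiv_unitField hA]
  congr 1
  refine (planeDiv_smul hς hX).trans ?_
  rw [hu.planeDiv_slopeField hΩ hq]
  simp [planeGrad, pdx, pdy, planeDot]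

lemma unitField_dot_testDirection_nonneg (hς : ς ^ 2 = 1) (hA : 0 < sqDist A q) :
    0 ≤ unitField A q ⬝ testDirection A ς u q := by
  rw [testDirection, planeDot_add_right, planeDot_smul_right, unitField_dot_self hA]
  linarith [neg_one_le_mul_unitField_dot hς (slopeField_dot_self_lt_one u q).le A q]

/-- The slope field compensates the radial field, since `∇u ⬝ X ≥ W - 1` and `|∇u| ≤ W`. -/
lemma neg_one_le_mul_planeGrad_dot_testDirection (hς : ς ^ 2 = 1) (hA : 0 < sqDist A q) :
    -1 ≤ ς * (planeGrad u q ⬝ testDirection A ς u q) := by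
  rw [testDirection, planeDot_add_right, planeDot_smul_right]
  have hsq : (ς * (planeGrad u q ⬝ unitField A q)) ^ 2 ≤ Wgraph u q ^ 2 := by
    rw [mul_pow, hς, one_mul, Wgraph_sq]
    have h := planeDot_sq_le (planeGrad u q) (unitField A q)
    rw [unitField_dot_self hA] at h
    linarith
  have hradial := (abs_le_of_sq_le_sq' hsq (Wgraph_pos u q).le).1
  have hslope : ς * (ς * (planeGrad u q ⬝ slopeField u q)) = planeGrad u q ⬝ slopeField u q := by
    linear_combination (planeGrad u q ⬝ slopeField u q) * hς
  rw [mul_add, hslope]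
  linarith [Wgraph_sub_one_le u q]

lemma planeDiv_cutoff_smul_testDirection (hu : IsCMCSolution H Ω u) (hΩ : IsOpen Ω) (hq : q ∈ Ω)
    (hA : 0 < sqDist A q) {β : ℝ → ℝ} (hβ : ContDiff ℝ 1 β) (e ς : ℝ) :
    planeDiv (fun x => (radialCutoff A e x * β (u x)) • testDirection A ς u x) q
      = radialCutoff A e q * β (u q) * (1 / √(sqDist A q) + ς * (2 * H))
        + radialCutoff A e q * deriv β (u q) * (planeGrad u q ⬝ testDirection A ς u q)
        + 4 * max (sqDist A q - e) 0 * √(sqDist A q) * β (u q)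
          * (unitField A q ⬝ testDirection A ς u q) := by
  have hud := (hu.contDiffAt hΩ hq).differentiableAt two_ne_zero
  have hχ : DifferentiableAt ℝ (radialCutoff A e) q :=
    (contDiff_radialCutoff A e).differentiable one_ne_zero q
  have hβd : DifferentiableAt ℝ β (u q) := hβ.differentiable one_ne_zero _
  have hβu : DifferentiableAt ℝ (fun x => β (u x)) q := hβd.comp q hud
  have hχβ : DifferentiableAt ℝ (fun x => radialCutoff A e x * β (u x)) q := hχ.mul hβu
  rw [planeDiv_smul hχβ
    ((contDiffAt_testDirection hu hΩ hq ς hA).differentiableAt one_ne_zero),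
    planeDiv_testDirection hu hΩ hq ς hA, planeGrad_mul hχ hβu, planeGrad_comp hud hβd,
    planeGrad_radialCutoff, ← sqrt_smul_unitField hA]
  simp only [planeDot_add_left, planeDot_smul_left]
  ring

lemma two_mul_le_one_div_sqrt_add (hH : 0 ≤ H) (hς : ς ^ 2 = 1) (hA : 0 < sqDist A q)
    (hρ : 4 * H * √(sqDist A q) ≤ 1) : 2 * H ≤ 1 / √(sqDist A q) + ς * (2 * H) := by
  have hinv : 4 * H ≤ 1 / √(sqDist A q) := by rwa [le_div_iff₀ (Real.sqrt_pos.2 hA)]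
  linarith [mul_le_mul_of_nonneg_right (neg_one_le_of_sq_eq_one hς) (by linarith : 0 ≤ 2 * H)]

/-- Close to `A` the divergence of the radial field dominates that of the slope field; the gradient
of the cut-off contributes with the right sign, and that of `u` by at most `1 / T`. -/
lemma le_planeDiv_cutoff_smul_testDirection (hu : IsCMCSolution H Ω u) (hΩ : IsOpen Ω)
    (hq : q ∈ Ω) (hH : 0 ≤ H) {m T e Θ : ℝ} (hς : ς ^ 2 = 1) (hT : 0 < T)
    (hA : 0 < sqDist A q) (hΘ : max (sqDist A q - e) 0 ≤ Θ) (hρ : 4 * H * √(sqDist A q) ≤ 1) :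
    2 * H * (radialCutoff A e q * levelStep ς m T (u q)) - Θ ^ 2 / T
      ≤ planeDiv (fun x => (radialCutoff A e x * levelStep ς m T (u x)) • testDirection A ς u x)
          q := by
  have hβ0 : 0 ≤ levelStep ς m T (u q) := softStep_nonneg _
  have hχ0 := radialCutoff_nonneg A e q
  have hχ : radialCutoff A e q ≤ Θ ^ 2 := pow_le_pow_left₀ (le_max_right _ _) hΘ 2
  have hp0 := deriv_softStep_nonneg ((ς * u q - m) / T)
  have hp1 := deriv_softStep_le_one ((ς * u q - m) / T)
  have hbulk := mul_le_mul_of_nonneg_left (two_mul_le_one_div_sqrt_add hH hς hA hρ)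
    (mul_nonneg hχ0 hβ0)
  have hcutoff : 0 ≤ 4 * max (sqDist A q - e) 0 * √(sqDist A q) * levelStep ς m T (u q)
      * (unitField A q ⬝ testDirection A ς u q) := by
    have := unitField_dot_testDirection_nonneg (u := u) hς hA
    positivity
  have hgrad : -(Θ ^ 2 / T) ≤ radialCutoff A e q * (deriv softStep ((ς * u q - m) / T) * (ς / T))
      * (planeGrad u q ⬝ testDirection A ς u q) := by
    have hcoef0 : 0 ≤ radialCutoff A e q * (deriv softStep ((ς * u q - m) / T) * (1 / T)) := by
      positivity
    calc -(Θ ^ 2 / T) = Θ ^ 2 * (1 * (1 / T)) * -1 := by ring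
      _ ≤ radialCutoff A e q * (deriv softStep ((ς * u q - m) / T) * (1 / T)) * -1 := by
          refine mul_le_mul_of_nonpos_right ?_ (by norm_num)
          gcongr
      _ ≤ radialCutoff A e q * (deriv softStep ((ς * u q - m) / T) * (1 / T))
            * (ς * (planeGrad u q ⬝ testDirection A ς u q)) :=
          mul_le_mul_of_nonneg_left (neg_one_le_mul_planeGrad_dot_testDirection hς hA) hcoef0
      _ = _ := by ring
  rw [planeDiv_cutoff_smul_testDirection hu hΩ hq hA (contDiff_levelStep ς m T),
    (hasDerivAt_levelStep ς m T (u q)).deriv]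
  linarith

end TestDirection

/-! ### Geometry of the corner -/

lemma sqDist_add (A v x : ℝ × ℝ) : sqDist (A + v) x = sqDist A x - 2 * (v ⬝ (x - A)) + v ⬝ v := by
  simp only [sqDist, planeDot, Prod.fst_sub, Prod.snd_sub, Prod.fst_add, Prod.snd_add]
  ring

namespace Frame

variable (F : Frame)

/-- The point at angle `0` of the reference circle. -/
def vertex : ℝ × ℝ := F.z + F.R • F.e₁

/-- Radial coordinate at the vertex. -/
def coord₁ (x : ℝ × ℝ) : ℝ := F.e₁ ⬝ (x - F.vertex)

/-- Angular coordinate at the vertex. -/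
def coord₂ (x : ℝ × ℝ) : ℝ := F.e₂ ⬝ (x - F.vertex)

lemma continuous_coord₁ : Continuous F.coord₁ := by unfold coord₁ planeDot; fun_prop

lemma continuous_coord₂ : Continuous F.coord₂ := by unfold coord₂ planeDot; fun_prop

lemma coord₁_vertex : F.coord₁ F.vertex = 0 := by simp [coord₁, planeDot]

lemma coord₂_vertex : F.coord₂ F.vertex = 0 := by simp [coord₂, planeDot]

lemma sub_vertex_dot_sub_vertex (x y : ℝ × ℝ) :
    (x - F.vertex) ⬝ (y - F.vertex) = F.coord₁ x * F.coord₁ y + F.coord₂ x * F.coord₂ y := by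
  rw [planeDot_eq_add_of_orthonormal _ _ F.e₁_dot_self F.e₂_dot_self F.e₁_dot_e₂]
  simp only [coord₁, coord₂, planeDot_comm]

lemma sqDist_vertex (x : ℝ × ℝ) : sqDist F.vertex x = F.coord₁ x ^ 2 + F.coord₂ x ^ 2 := by
  rw [sqDist, sub_vertex_dot_sub_vertex, sq, sq]

lemma sqDist_eq_sqDist_vertex (y x : ℝ × ℝ) :
    sqDist y x = sqDist F.vertex x - 2 * (F.coord₁ y * F.coord₁ x + F.coord₂ y * F.coord₂ x)
      + sqDist F.vertex y := by
  have h := sqDist_add F.vertex (y - F.vertex) x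
  rw [add_sub_cancel, sub_vertex_dot_sub_vertex] at h
  exact h

/-- The point with coordinates `a` and `b` at the vertex. -/
def ofCoords (a b : ℝ) : ℝ × ℝ := F.vertex + (a • F.e₁ + b • F.e₂)

lemma coord₁_ofCoords (a b : ℝ) : F.coord₁ (F.ofCoords a b) = a := by
  simp only [coord₁, ofCoords, add_sub_cancel_left, planeDot_add_right, planeDot_smul_right,
    F.e₁_dot_self, F.e₁_dot_e₂]
  ring

lemma coord₂_ofCoords (a b : ℝ) : F.coord₂ (F.ofCoords a b) = b := by
  simp only [coord₂, ofCoords, add_sub_cancel_left, planeDot_add_right, planeDot_smul_right,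
    F.e₂_dot_self, planeDot_comm F.e₂ F.e₁, F.e₁_dot_e₂]
  ring

lemma ofCoords_coord (x : ℝ × ℝ) : F.ofCoords (F.coord₁ x) (F.coord₂ x) = x := by
  have h : sqDist (F.ofCoords (F.coord₁ x) (F.coord₂ x)) x = 0 := by
    rw [F.sqDist_eq_sqDist_vertex, sqDist_vertex, sqDist_vertex, coord₁_ofCoords, coord₂_ofCoords]
    ring
  simp only [sqDist, planeDot] at h
  obtain ⟨h₁, h₂⟩ := (add_eq_zero_iff_of_nonneg (mul_self_nonneg _) (mul_self_nonneg _)).1 h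
  exact (sub_eq_zero.1 (Prod.ext (mul_self_eq_zero.1 h₁) (mul_self_eq_zero.1 h₂))).symm

lemma point_eq_ofCoords (ς t θ : ℝ) :
    F.point ς t θ = F.ofCoords ((F.R + ς * t) * cos θ - F.R) ((F.R + ς * t) * sin θ) := by
  simp only [point, radial, ofCoords, vertex, smul_add, sub_smul, mul_smul]
  abel

lemma coord₁_point (ς t θ : ℝ) : F.coord₁ (F.point ς t θ) = (F.R + ς * t) * cos θ - F.R := by
  rw [point_eq_ofCoords, coord₁_ofCoords]

lemma coord₂_point (ς t θ : ℝ) : F.coord₂ (F.point ς t θ) = (F.R + ς * t) * sin θ := by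
  rw [point_eq_ofCoords, coord₂_ofCoords]

lemma point_zero_zero (ς : ℝ) : F.point ς 0 0 = F.vertex := by
  simp [point, radial, vertex]

lemma point_zero (ς θ : ℝ) : F.point ς 0 θ = F.point 1 0 θ := by
  rw [F.point_eq_point_one, mul_zero]

lemma sqDist_z (x : ℝ × ℝ) : sqDist F.z x = sqDist F.vertex x + 2 * F.R * F.coord₁ x + F.R ^ 2 := by
  have hz : F.z = F.ofCoords (-F.R) 0 := by
    simp only [ofCoords, vertex, zero_smul, add_zero, neg_smul, add_neg_cancel_right]
  rw [hz, F.sqDist_eq_sqDist_vertex, F.sqDist_vertex (F.ofCoords _ _), coord₁_ofCoords,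
    coord₂_ofCoords]
  ring

lemma sqDist_z_point (ς t θ : ℝ) : sqDist F.z (F.point ς t θ) = (F.R + ς * t) ^ 2 := by
  rw [sqDist, point, add_sub_cancel_left, planeDot_smul_left, planeDot_smul_right,
    radial_dot_radial]
  ring

lemma sqDist_vertex_point (ς t θ : ℝ) : sqDist F.vertex (F.point ς t θ)
    = (ς * t) ^ 2 + 2 * F.R * (F.R + ς * t) * (1 - cos θ) := by
  have h := F.sqDist_z (F.point ς t θ)
  rw [sqDist_z_point, coord₁_point] at h
  linear_combination -h

/-- The closed exterior (`ς = 1`) or interior (`ς = -1`) of the reference circle. -/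
def side (ς : ℝ) : Set (ℝ × ℝ) := {x | 0 ≤ ς * (sqDist F.z x - F.R ^ 2)}

variable {F} {ς t : ℝ}

lemma half_R_le (hς : ς ^ 2 = 1) (ht : t ∈ Icc 0 (F.R / 2)) : F.R / 2 ≤ F.R + ς * t := by
  rcases sq_eq_one_iff.1 hς with rfl | rfl <;> linarith [ht.1, ht.2]

lemma le_three_half_R (hς : ς ^ 2 = 1) (ht : t ∈ Icc 0 (F.R / 2)) :
    F.R + ς * t ≤ 3 * F.R / 2 := by
  rcases sq_eq_one_iff.1 hς with rfl | rfl <;> linarith [ht.1, ht.2]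

lemma point_mem_side (hς : ς ^ 2 = 1) (ht : t ∈ Icc 0 (F.R / 2)) (θ : ℝ) :
    F.point ς t θ ∈ F.side ς := by
  have h : ς * ((F.R + ς * t) ^ 2 - F.R ^ 2) = t * (F.R + (F.R + ς * t)) := by
    linear_combination (2 * F.R * t + ς * t ^ 2) * hς
  rw [side, mem_ofPred_eq, sqDist_z_point, h]
  exact mul_nonneg ht.1 (by linarith [F.R_pos, half_R_le hς ht])

end Frame

lemma le_add_abs_of_sq_eq {r x y c : ℝ} (hc : |c| ≤ 1) (hx : 0 ≤ x)
    (hr : r ^ 2 = x ^ 2 + y ^ 2 - 2 * (c * (x * y))) : r ≤ x + |y| := by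
  refine le_of_sq_le_sq ?_ (by positivity)
  have h : -(c * (x * y)) ≤ x * |y| := by
    calc -(c * (x * y)) ≤ |c * (x * y)| := neg_le_abs _
      _ = |c| * (x * |y|) := by rw [abs_mul c, abs_mul x, abs_of_nonneg hx]
      _ ≤ x * |y| := mul_le_of_le_one_left (by positivity) hc
  rw [hr, add_sq, sq_abs]
  linarith

/-- Here `r` is the distance to the vertex of the point with coordinates `a` and `b`; the oblique
coordinates `x`, `y` along the two sides of the corner are nonnegative up to a small error. -/
lemma mul_le_of_mem_corner {a b n₁ n₂ R r ς : ℝ} (hn : n₁ ^ 2 + n₂ ^ 2 = 1) (hn₂ : 0 < n₂)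
    (hR : 0 < R) (hς : ς ^ 2 = 1) (hr₀ : 0 ≤ r) (hr : r ^ 2 = a ^ 2 + b ^ 2)
    (hrR : 50 * r ≤ R * n₂) (hdisc : 0 ≤ n₁ * a + n₂ * b) (hside : 0 ≤ ς * (2 * R * a + r ^ 2)) :
    (1 - ς * n₁) * (0.98 * r) ≤ ς * n₂ * a + (1 - ς * n₁) * b := by
  obtain ⟨x, hx⟩ : ∃ x, x = (n₁ * a + n₂ * b) / n₂ := ⟨_, rfl⟩
  obtain ⟨y, hy⟩ : ∃ y, y = ς * a / n₂ := ⟨_, rfl⟩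
  have hx₀ : 0 ≤ x := hx ▸ div_nonneg hdisc hn₂.le
  rw [eq_div_iff hn₂.ne'] at hx hy
  have ha : a = ς * n₂ * y := by linear_combination (-ς) * hy - a * hς
  have hb : b = x - ς * n₁ * y := by
    apply mul_left_cancel₀ hn₂.ne'
    linear_combination (-1) * hx + ς * n₁ * hy + n₁ * a * hς
  have hςn : |ς * n₁| ≤ 1 := by
    rw [← sq_le_one_iff_abs_le_one, mul_pow, hς]
    linarith [sq_nonneg n₂]
  have hrxy : r ≤ x + |y| := le_add_abs_of_sq_eq hςn hx₀ (by
    rw [hr, ha, hb]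
    linear_combination y ^ 2 * (n₂ ^ 2 + n₁ ^ 2) * hς + y ^ 2 * hn)
  have hy₀ : -(r / 100) ≤ y := by
    have hς1 := mul_le_mul_of_nonneg_right (le_one_of_sq_eq_one hς) (sq_nonneg r)
    have hry : -(r * (R * n₂ / 50)) ≤ 2 * R * (y * n₂) := by
      have := mul_le_mul_of_nonneg_left hrR hr₀
      rw [hy]
      linarith
    refine le_of_mul_le_mul_left ?_ (by positivity : 0 < 2 * R * n₂)
    linarith
  have habs : |y| ≤ y + r / 50 := abs_le.2 ⟨by linarith, by linarith⟩
  have hσ : ς * n₂ * a + (1 - ς * n₁) * b = (1 - ς * n₁) * (x + y) := by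
    rw [hb, ha]
    linear_combination (n₂ ^ 2 + n₁ ^ 2) * y * hς + y * hn
  rw [hσ]
  exact mul_le_mul_of_nonneg_left (by linarith) (by linarith [le_of_abs_le hςn])

/-- The corner of `Ω` at the vertex of `F`, where the reference circle has radius `1 / (2 H)`: near
the vertex, `Ω` lies inside the circle of the same radius about `center`, which passes through the
vertex, and the frontier of `Ω` lies in `C`. The number `ε` is the scale of the test field. -/
structure Corner (H : ℝ) (Ω C : Set (ℝ × ℝ)) where
  F : Frame
  center : ℝ × ℝ
  ρ₀ : ℝ
  ε : ℝ
  isOpen : IsOpen Ω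
  two_mul_H_mul_R : 2 * H * F.R = 1
  sqDist_vertex_center : sqDist F.vertex center = F.R ^ 2
  coord₂_center_pos : 0 < F.coord₂ center
  ρ₀_le : 50 * ρ₀ ≤ F.coord₂ center
  ε_pos : 0 < ε
  ε_lt : 2.1 * ε < ρ₀
  sqDist_center_le : ∀ x ∈ closure Ω, sqDist F.vertex x ≤ ρ₀ ^ 2 → sqDist center x ≤ F.R ^ 2
  mem_of_mem_frontier : ∀ x ∈ frontier Ω, sqDist F.vertex x ≤ ρ₀ ^ 2 → x ∈ C

namespace Corner

variable {H : ℝ} {Ω C : Set (ℝ × ℝ)} (K : Corner H Ω C) {ς : ℝ} {x : ℝ × ℝ}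

/-- Radial component of the unit vector from the vertex to `center`. -/
def n₁ : ℝ := K.F.coord₁ K.center / K.F.R

/-- Angular component of the unit vector from the vertex to `center`. -/
def n₂ : ℝ := K.F.coord₂ K.center / K.F.R

/-- The constant `1 - ς n₁ ∈ (0, 2)`. -/
def k (ς : ℝ) : ℝ := 1 - ς * K.n₁

/-- The linear form cutting the corner. -/
def cutForm (ς : ℝ) (x : ℝ × ℝ) : ℝ := ς * K.n₂ * K.F.coord₁ x + K.k ς * K.F.coord₂ x

/-- The piece of `Ω` cut off at the corner, where the test field lives. -/
def piece (ς : ℝ) : Set (ℝ × ℝ) :=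
  Ω ∩ {x | sqDist K.F.vertex x < K.ρ₀ ^ 2 ∧ K.cutForm ς x < K.ε * K.k ς ^ 2}

/-- The centre of the radial part of the test field. -/
def A (ς : ℝ) : ℝ × ℝ := K.F.ofCoords (K.ε * (ς * K.n₂)) (K.ε * K.k ς)

/-- The squared radius of the disc about `A` on which the cut-off vanishes: it is chosen so that,
on the line bounding `piece`, the disc contains every point at distance at most `1.1 ε k` of the
vertex. -/
def e (ς : ℝ) : ℝ := K.ε ^ 2 * (2 * K.k ς - 3 / 4 * K.k ς ^ 2)

lemma R_mul_n₁ : K.F.R * K.n₁ = K.F.coord₁ K.center := mul_div_cancel₀ _ K.F.R_pos.ne'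

lemma R_mul_n₂ : K.F.R * K.n₂ = K.F.coord₂ K.center := mul_div_cancel₀ _ K.F.R_pos.ne'

lemma n₁_sq_add_n₂_sq : K.n₁ ^ 2 + K.n₂ ^ 2 = 1 := by
  have hR := K.F.R_pos.ne'
  rw [n₁, n₂, div_pow, div_pow, ← add_div, ← Frame.sqDist_vertex, K.sqDist_vertex_center]
  field_simp

lemma n₂_pos : 0 < K.n₂ := div_pos K.coord₂_center_pos K.F.R_pos

lemma ρ₀_pos : 0 < K.ρ₀ := by linarith [K.ε_pos, K.ε_lt]

lemma ρ₀_le_R : 50 * K.ρ₀ ≤ K.F.R := by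
  refine K.ρ₀_le.trans (abs_le_of_sq_le_sq' ?_ K.F.R_pos.le).2
  rw [← K.sqDist_vertex_center, Frame.sqDist_vertex]
  linarith [sq_nonneg (K.F.coord₁ K.center)]

lemma abs_ς_mul_n₁_lt (hς : ς ^ 2 = 1) : |ς * K.n₁| < 1 := by
  rw [← sq_lt_one_iff_abs_lt_one, mul_pow, hς]
  linarith [K.n₁_sq_add_n₂_sq, pow_pos K.n₂_pos 2]

lemma k_pos (hς : ς ^ 2 = 1) : 0 < K.k ς := sub_pos.2 (lt_of_abs_lt (K.abs_ς_mul_n₁_lt hς))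

lemma k_lt_two (hς : ς ^ 2 = 1) : K.k ς < 2 := by
  have := neg_lt_of_abs_lt (K.abs_ς_mul_n₁_lt hς)
  unfold k
  linarith

lemma ε_mul_k_sq_pos (hς : ς ^ 2 = 1) : 0 < (K.ε * K.k ς) ^ 2 :=
  pow_pos (mul_pos K.ε_pos (K.k_pos hς)) 2

lemma ε_mul_k_sq_le (hς : ς ^ 2 = 1) : (K.ε * K.k ς) ^ 2 ≤ 4 * K.ε ^ 2 := by
  have h : K.k ς ^ 2 ≤ 2 ^ 2 := pow_le_pow_left₀ (K.k_pos hς).le (K.k_lt_two hς).le 2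
  rw [mul_pow]
  linarith [mul_le_mul_of_nonneg_left h (sq_nonneg K.ε)]

lemma e_pos (hς : ς ^ 2 = 1) : 0 < K.e ς := by
  have hk := K.k_pos hς
  have h : 0 < K.k ς * (2 - 3 / 4 * K.k ς) := mul_pos hk (by linarith [K.k_lt_two hς])
  exact mul_pos (pow_pos K.ε_pos 2) (by linarith)

lemma e_le (hς : ς ^ 2 = 1) : K.e ς ≤ 4 * K.ε ^ 2 := by
  unfold e
  linarith [K.ε_mul_k_sq_pos hς, mul_le_mul_of_nonneg_left (K.k_lt_two hς).le (sq_nonneg K.ε)]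

lemma sqDist_A_sub_e (hς : ς ^ 2 = 1) (x : ℝ × ℝ) :
    sqDist (K.A ς) x - K.e ς
      = sqDist K.F.vertex x - 2 * K.ε * K.cutForm ς x + 3 / 4 * (K.ε * K.k ς) ^ 2 := by
  rw [K.F.sqDist_eq_sqDist_vertex, K.F.sqDist_vertex (K.A ς), A, Frame.coord₁_ofCoords,
    Frame.coord₂_ofCoords, e, cutForm, k]
  linear_combination K.ε ^ 2 * (K.n₁ ^ 2 + K.n₂ ^ 2) * hς + K.ε ^ 2 * K.n₁_sq_add_n₂_sq

lemma continuous_cutForm (ς : ℝ) : Continuous (K.cutForm ς) :=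
  (continuous_const.mul K.F.continuous_coord₁).add (continuous_const.mul K.F.continuous_coord₂)

lemma isOpen_piece (ς : ℝ) : IsOpen (K.piece ς) :=
  K.isOpen.inter ((isOpen_lt (continuous_sqDist _) continuous_const).inter
    (isOpen_lt (K.continuous_cutForm ς) continuous_const))

lemma closure_piece_subset (ς : ℝ) : closure (K.piece ς) ⊆
    closure Ω ∩ {x | sqDist K.F.vertex x ≤ K.ρ₀ ^ 2 ∧ K.cutForm ς x ≤ K.ε * K.k ς ^ 2} :=
  closure_minimal (fun _ hx => ⟨subset_closure hx.1, hx.2.1.le, hx.2.2.le⟩) <|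
    isClosed_closure.inter ((isClosed_le (continuous_sqDist _) continuous_const).inter
      (isClosed_le (K.continuous_cutForm ς) continuous_const))

lemma sqDist_vertex_le_of_mem_closure (hx : x ∈ closure Ω) (hρ : sqDist K.F.vertex x ≤ K.ρ₀ ^ 2) :
    sqDist K.F.vertex x
      ≤ 2 * K.F.R * (K.n₁ * K.F.coord₁ x + K.n₂ * K.F.coord₂ x) := by
  have h := K.sqDist_center_le x hx hρ
  rw [K.F.sqDist_eq_sqDist_vertex, K.sqDist_vertex_center, ← K.R_mul_n₁, ← K.R_mul_n₂] at h
  linarith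

lemma k_mul_sqrt_sqDist_le_cutForm (hς : ς ^ 2 = 1) (hx : x ∈ closure (K.piece ς))
    (hside : x ∈ K.F.side ς) :
    K.k ς * (0.98 * √(sqDist K.F.vertex x)) ≤ K.cutForm ς x := by
  obtain ⟨hΩ, hρ, -⟩ := K.closure_piece_subset ς hx
  have hr : √(sqDist K.F.vertex x) ^ 2 = sqDist K.F.vertex x := Real.sq_sqrt (sqDist_nonneg _ _)
  refine mul_le_of_mem_corner K.n₁_sq_add_n₂_sq K.n₂_pos K.F.R_pos hς (Real.sqrt_nonneg _)
    (hr.trans (K.F.sqDist_vertex x)) ?_ ?_ ?_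
  · rw [R_mul_n₂]
    linarith [K.ρ₀_le, (Real.sqrt_le_left K.ρ₀_pos.le).2 hρ]
  · have h := (sqDist_nonneg _ _).trans (K.sqDist_vertex_le_of_mem_closure hΩ hρ)
    exact nonneg_of_mul_nonneg_right h (by linarith [K.F.R_pos])
  · rw [hr]
    rwa [Frame.side, mem_ofPred_eq, Frame.sqDist_z, add_sub_cancel_right, add_comm] at hside

lemma cutForm_nonneg (hς : ς ^ 2 = 1) (hx : x ∈ closure (K.piece ς)) (hside : x ∈ K.F.side ς) :
    0 ≤ K.cutForm ς x := by
  have := K.k_pos hς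
  exact (by positivity : (0 : ℝ) ≤ _).trans (K.k_mul_sqrt_sqDist_le_cutForm hς hx hside)

lemma sqDist_vertex_le (hς : ς ^ 2 = 1) (hx : x ∈ closure (K.piece ς)) (hside : x ∈ K.F.side ς) :
    sqDist K.F.vertex x ≤ 1.1 * (K.ε * K.k ς) ^ 2 := by
  have hk := K.k_pos hς
  have hcut := (K.k_mul_sqrt_sqDist_le_cutForm hς hx hside).trans
    (K.closure_piece_subset ς hx).2.2
  have hr : 0.98 * √(sqDist K.F.vertex x) ≤ K.ε * K.k ς := le_of_mul_le_mul_left (by linarith) hk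
  have hsq := pow_le_pow_left₀ (by positivity) hr 2
  rw [mul_pow, Real.sq_sqrt (sqDist_nonneg _ _)] at hsq
  linarith [sqDist_nonneg K.F.vertex x]

lemma mem_piece_of_mem_closure (hς : ς ^ 2 = 1) (hx : x ∈ closure (K.piece ς))
    (hside : x ∈ K.F.side ς) (he : K.e ς ≤ sqDist (K.A ς) x) (hΩ : x ∈ Ω) : x ∈ K.piece ς := by
  have hsmall := K.sqDist_vertex_le hς hx hside
  refine ⟨hΩ, ?_, (K.closure_piece_subset ς hx).2.2.lt_of_ne fun hcut => ?_⟩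
  · have hερ : (2.1 * K.ε) ^ 2 < K.ρ₀ ^ 2 :=
      pow_lt_pow_left₀ K.ε_lt (by linarith [K.ε_pos]) two_ne_zero
    have hε : 0 < K.ε ^ 2 := pow_pos K.ε_pos 2
    rw [mul_pow] at hερ
    change sqDist K.F.vertex x < _
    linarith [K.ε_mul_k_sq_le hς]
  · have h := K.sqDist_A_sub_e hς x
    have hpos := K.ε_mul_k_sq_pos hς
    rw [hcut, show 2 * K.ε * (K.ε * K.k ς ^ 2) = 2 * (K.ε * K.k ς) ^ 2 by ring] at h
    linarith

lemma max_sqDist_A_sub_e_le (hς : ς ^ 2 = 1) (hx : x ∈ closure (K.piece ς))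
    (hside : x ∈ K.F.side ς) : max (sqDist (K.A ς) x - K.e ς) 0 ≤ 8 * K.ε ^ 2 := by
  have hε := K.ε_pos
  refine max_le ?_ (by positivity)
  rw [K.sqDist_A_sub_e hς]
  linarith [K.sqDist_vertex_le hς hx hside, K.ε_mul_k_sq_le hς, sq_nonneg K.ε,
    mul_nonneg hε.le (K.cutForm_nonneg hς hx hside)]

end Corner

/-! ### Flux of the test field -/

/-- A solution on `Ω`, continuous up to `C`, with boundary values in `(-m, m)`. -/
structure IsBoundedOnBoundary (H : ℝ) (Ω C : Set (ℝ × ℝ)) (m : ℝ) (u : ℝ × ℝ → ℝ) : Prop where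
  isCMCSolution : IsCMCSolution H Ω u
  continuousOn : ContinuousOn u (Ω ∪ C)
  abs_lt : ∀ x ∈ C, |u x| < m

lemma levelStep_of_abs_le {ς m T v : ℝ} (hς : ς ^ 2 = 1) (hT : 0 ≤ T) (hv : |v| ≤ m) :
    levelStep ς m T v = 0 := by
  refine softStep_of_nonpos (div_nonpos_of_nonpos_of_nonneg (sub_nonpos.2 ?_) hT)
  rcases sq_eq_one_iff.1 hς with rfl | rfl
  · linarith [le_abs_self v]
  · linarith [neg_abs_le v]

lemma planeDiv_congr {Y Z : ℝ × ℝ → ℝ × ℝ} {q : ℝ × ℝ} (h : Y =ᶠ[nhds q] Z) :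
    planeDiv Y q = planeDiv Z q := by
  rw [planeDiv, planeDiv, h.fderiv_eq]

lemma continuousAt_planeDiv {Y : ℝ × ℝ → ℝ × ℝ} {q : ℝ × ℝ} (hY : ContDiffAt ℝ 1 Y q) :
    ContinuousAt (planeDiv Y) q := by
  have h := hY.continuousAt_fderiv one_ne_zero
  exact (h.clm_apply continuousAt_const).fst.add (h.clm_apply continuousAt_const).snd

namespace Corner

variable {H : ℝ} {Ω C : Set (ℝ × ℝ)} (K : Corner H Ω C) {ς m T t : ℝ} {u : ℝ × ℝ → ℝ} {x : ℝ × ℝ}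

/-- A soft indicator of `{m < ς u}` near the corner. -/
def weight (ς m T : ℝ) (u : ℝ × ℝ → ℝ) : ℝ × ℝ → ℝ :=
  indicator (K.piece ς) fun y => radialCutoff (K.A ς) (K.e ς) y * levelStep ς m T (u y)

/-- The vector field whose flux through the reference circle bounds the integral of the weight. -/
def testField (ς m T : ℝ) (u : ℝ × ℝ → ℝ) (x : ℝ × ℝ) : ℝ × ℝ :=
  K.weight ς m T u x • testDirection (K.A ς) ς u x

lemma weight_nonneg (ς m T : ℝ) (u : ℝ × ℝ → ℝ) (x : ℝ × ℝ) : 0 ≤ K.weight ς m T u x :=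
  indicator_nonneg (fun _ _ => mul_nonneg (radialCutoff_nonneg _ _ _) (softStep_nonneg _)) x

lemma weight_le (hς : ς ^ 2 = 1) (m T : ℝ) (u : ℝ × ℝ → ℝ) (hside : x ∈ K.F.side ς) :
    K.weight ς m T u x ≤ 64 * K.ε ^ 4 := by
  have hε := K.ε_pos
  refine indicator_apply_le' (fun hx => ?_) fun _ => by positivity
  have hcut : radialCutoff (K.A ς) (K.e ς) x ≤ (8 * K.ε ^ 2) ^ 2 :=
    pow_le_pow_left₀ (le_max_right _ _)
      (K.max_sqDist_A_sub_e_le hς (subset_closure hx) hside) 2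
  calc radialCutoff (K.A ς) (K.e ς) x * levelStep ς m T (u x) ≤ (8 * K.ε ^ 2) ^ 2 * 1 :=
        mul_le_mul hcut (softStep_le_one _) (softStep_nonneg _) (by positivity)
    _ = 64 * K.ε ^ 4 := by ring

lemma weight_eventuallyEq_of_mem_piece (m T : ℝ) (u : ℝ × ℝ → ℝ) (hx : x ∈ K.piece ς) :
    K.weight ς m T u =ᶠ[nhds x]
    fun y => radialCutoff (K.A ς) (K.e ς) y * levelStep ς m T (u y) :=
  (eventually_mem_nhds_iff.2 ((K.isOpen_piece ς).mem_nhds hx)).mono fun _ hy =>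
    indicator_of_mem (mem_of_mem_nhds hy) _

lemma weight_eventuallyEq_zero_of_notMem_closure (hx : x ∉ closure (K.piece ς)) :
    K.weight ς m T u =ᶠ[nhds x] 0 := by
  filter_upwards [isClosed_closure.isOpen_compl.mem_nhds hx] with y hy
  exact indicator_of_notMem (fun h => hy (subset_closure h)) _

lemma weight_eventuallyEq_zero_of_sqDist_lt (hx : sqDist (K.A ς) x < K.e ς) :
    K.weight ς m T u =ᶠ[nhds x] 0 := by
  filter_upwards [(continuous_sqDist (K.A ς)).continuousAt.eventually_lt continuousAt_const hx]
    with y hy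
  refine indicator_apply_eq_zero.2 fun _ => ?_
  rw [radialCutoff, max_eq_right (sub_nonpos.2 hy.le)]
  ring

lemma weight_eventuallyEq_zero_of_mem (hς : ς ^ 2 = 1) (hT : 0 ≤ T)
    (hu : IsBoundedOnBoundary H Ω C m u) (hx : x ∈ C) : K.weight ς m T u =ᶠ[nhds x] 0 := by
  have hlt : ∀ᶠ y in nhdsWithin x (Ω ∪ C), |u y| < m :=
    (hu.continuousOn x (Or.inr hx)).abs.eventually_lt continuousWithinAt_const (hu.abs_lt x hx)
  filter_upwards [eventually_nhdsWithin_iff.1 hlt] with y hy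
  refine indicator_apply_eq_zero.2 fun hpiece => ?_
  rw [levelStep_of_abs_le hς hT (hy (Or.inl hpiece.1)).le, mul_zero]

lemma weight_eventuallyEq_zero_or_mem_piece (hς : ς ^ 2 = 1) (hT : 0 ≤ T)
    (hu : IsBoundedOnBoundary H Ω C m u) (hside : x ∈ K.F.side ς) :
    K.weight ς m T u =ᶠ[nhds x] 0 ∨ x ∈ K.piece ς ∧ K.e ς ≤ sqDist (K.A ς) x := by
  by_cases hx : x ∈ closure (K.piece ς)
  swap
  · exact Or.inl (K.weight_eventuallyEq_zero_of_notMem_closure hx)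
  rcases lt_or_ge (sqDist (K.A ς) x) (K.e ς) with he | he
  · exact Or.inl (K.weight_eventuallyEq_zero_of_sqDist_lt he)
  by_cases hxΩ : x ∈ Ω
  · exact Or.inr ⟨K.mem_piece_of_mem_closure hς hx hside he hxΩ, he⟩
  · obtain ⟨hclosure, hρ, -⟩ := K.closure_piece_subset ς hx
    have hfrontier : x ∈ frontier Ω := K.isOpen.frontier_eq ▸ ⟨hclosure, hxΩ⟩
    exact Or.inl (K.weight_eventuallyEq_zero_of_mem hς hT hu (K.mem_of_mem_frontier x hfrontier hρ))

lemma contDiffAt_weight_smul (hς : ς ^ 2 = 1) (hT : 0 ≤ T) (hu : IsBoundedOnBoundary H Ω C m u)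
    (hside : x ∈ K.F.side ς) {E : Type*} [NormedAddCommGroup E] [NormedSpace ℝ E]
    {g : ℝ × ℝ → E} (hg : ∀ y ∈ Ω, 0 < sqDist (K.A ς) y → ContDiffAt ℝ 1 g y) :
    ContDiffAt ℝ 1 (fun y => K.weight ς m T u y • g y) x := by
  rcases K.weight_eventuallyEq_zero_or_mem_piece hς hT hu hside with h | ⟨hx, he⟩
  · refine contDiffAt_const (c := 0).congr_of_eventuallyEq (h.mono fun y hy => ?_)
    simp only [hy, Pi.zero_apply, zero_smul]
  · have hlevel : ContDiffAt ℝ 1 (fun y => levelStep ς m T (u y)) x :=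
      (contDiff_levelStep ς m T).contDiffAt.comp x
        ((hu.isCMCSolution.contDiffAt K.isOpen hx.1).of_le one_le_two)
    have hsmul := ((contDiff_radialCutoff (K.A ς) (K.e ς)).contDiffAt.mul hlevel).smul
      (hg x hx.1 ((K.e_pos hς).trans_le he))
    refine hsmul.congr_of_eventuallyEq ((K.weight_eventuallyEq_of_mem_piece m T u hx).mono
      fun y hy => ?_)
    simp only [hy, Pi.smul_apply']

lemma contDiffAt_testField (hς : ς ^ 2 = 1) (hT : 0 ≤ T) (hu : IsBoundedOnBoundary H Ω C m u)
    (hside : x ∈ K.F.side ς) : ContDiffAt ℝ 1 (K.testField ς m T u) x :=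
  K.contDiffAt_weight_smul hς hT hu hside fun _ hy hA =>
    contDiffAt_testDirection hu.isCMCSolution K.isOpen hy ς hA

lemma H_nonneg (K : Corner H Ω C) : 0 ≤ H := by
  have h : 0 < 2 * H := pos_of_mul_pos_left (K.two_mul_H_mul_R ▸ one_pos) K.F.R_pos.le
  linarith

lemma hundred_mul_ε_le : 100 * K.ε ≤ K.F.R := by linarith [K.ρ₀_le_R, K.ε_lt, K.ε_pos]

lemma le_planeDiv_testField (hς : ς ^ 2 = 1) (hT : 0 < T)
    (hu : IsBoundedOnBoundary H Ω C m u) (hside : x ∈ K.F.side ς) :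
    2 * H * K.weight ς m T u x - 64 * K.ε ^ 4 / T ≤ planeDiv (K.testField ς m T u) x := by
  have hε := K.ε_pos
  rcases K.weight_eventuallyEq_zero_or_mem_piece hς hT.le hu hside with h | ⟨hx, he⟩
  · have hzero : K.testField ς m T u =ᶠ[nhds x] fun _ => 0 :=
      h.mono fun y hy => by simp only [testField, hy, Pi.zero_apply, zero_smul]
    have herror : 0 ≤ 64 * K.ε ^ 4 / T := by positivity
    rw [planeDiv_congr hzero, h.self_of_nhds]
    simpa [planeDiv] using herror
  · have hmax := K.max_sqDist_A_sub_e_le hς (subset_closure hx) hside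
    have hdist : √(sqDist (K.A ς) x) ≤ 4 * K.ε := by
      rw [Real.sqrt_le_left (by positivity), mul_pow]
      linarith [(le_max_left _ _).trans hmax, K.e_le hς, sq_nonneg K.ε]
    have hsmall : 4 * H * √(sqDist (K.A ς) x) ≤ 1 := by
      have h₁ := mul_le_mul_of_nonneg_left hdist (by linarith [K.H_nonneg] : 0 ≤ 4 * H)
      have h₂ := mul_le_mul_of_nonneg_left K.hundred_mul_ε_le K.H_nonneg
      linarith [K.two_mul_H_mul_R, mul_nonneg K.H_nonneg hε.le]
    have hlower := le_planeDiv_cutoff_smul_testDirection (m := m) (e := K.e ς) hu.isCMCSolution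
      K.isOpen hx.1 K.H_nonneg hς hT ((K.e_pos hς).trans_le he) hmax hsmall
    have hweight := K.weight_eventuallyEq_of_mem_piece m T u hx
    rw [planeDiv_congr (Z := fun y => _) (hweight.mono fun y hy => by rw [testField, hy]),
      hweight.self_of_nhds]
    refine le_trans (le_of_eq ?_) hlower
    ring

lemma weight_eq_zero_of_le (m T : ℝ) (u : ℝ × ℝ → ℝ) (hx : K.ρ₀ ^ 2 ≤ sqDist K.F.vertex x) :
    K.weight ς m T u x = 0 :=
  indicator_of_notMem (fun h => hx.not_gt h.2.1) _

lemma ρ₀_sq_le : K.ρ₀ ^ 2 ≤ K.F.R ^ 2 / 2500 := by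
  have h := pow_le_pow_left₀ (by linarith [K.ρ₀_pos]) K.ρ₀_le_R 2
  rw [mul_pow] at h
  linarith

lemma weight_point_far_side (hς : ς ^ 2 = 1) (m T : ℝ) (u : ℝ × ℝ → ℝ) (θ : ℝ) :
    K.weight ς m T u (K.F.point ς (K.F.R / 2) θ) = 0 := by
  have hR := K.F.R_pos
  refine K.weight_eq_zero_of_le m T u (K.ρ₀_sq_le.trans ?_)
  have hpos : 0 ≤ 2 * K.F.R * (K.F.R + ς * (K.F.R / 2)) * (1 - cos θ) :=
    mul_nonneg (mul_nonneg (by positivity) (by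
      linarith [Frame.half_R_le hς (right_mem_Icc.2 (by positivity : (0 : ℝ) ≤ K.F.R / 2))]))
      (sub_nonneg.2 (cos_le_one θ))
  rw [Frame.sqDist_vertex_point, mul_pow, hς]
  linarith [pow_pos hR 2]

lemma weight_point_far_end (hς : ς ^ 2 = 1) (m T : ℝ) (u : ℝ × ℝ → ℝ)
    (ht : t ∈ Icc 0 (K.F.R / 2)) {θ : ℝ} (hθ : cos θ = cos 1) :
    K.weight ς m T u (K.F.point ς t θ) = 0 := by
  have hR := K.F.R_pos
  refine K.weight_eq_zero_of_le m T u (K.ρ₀_sq_le.trans ?_)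
  have hprod : K.F.R / 2 * (4 / 9) ≤ (K.F.R + ς * t) * (1 - cos 1) :=
    mul_le_mul (Frame.half_R_le hς ht) (by linarith [Real.cos_one_le]) (by norm_num)
      (by linarith [Frame.half_R_le hς ht])
  rw [Frame.sqDist_vertex_point, hθ]
  linarith [mul_le_mul_of_nonneg_left hprod hR.le, sq_nonneg (ς * t), pow_pos hR 2]

/-- On the polar rectangle only the side on the reference circle carries flux. -/
lemma integral_planeDiv_testField (hς : ς ^ 2 = 1) (hT : 0 ≤ T)
    (hu : IsBoundedOnBoundary H Ω C m u) :
    (∫ t in (0)..(K.F.R / 2), ∫ θ in (-1)..1,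
        (K.F.R + ς * t) * planeDiv (K.testField ς m T u) (K.F.point ς t θ))
      = ∫ θ in (-1)..1,
        K.F.R * -(ς * (K.testField ς m T u (K.F.point ς 0 θ) ⬝ K.F.radial θ)) := by
  have hab : (0 : ℝ) ≤ K.F.R / 2 := by linarith [K.F.R_pos]
  have hdiv := K.F.integral_polar_divergence hς (Y := K.testField ς m T u) (κ := fun _ => 1)
    (ζ := fun _ => 1) contDiff_const contDiff_const (a := 0) (b := K.F.R / 2) (c := -1) (d := 1)
    fun t ht θ _ => K.contDiffAt_testField hς hT hu
      (Frame.point_mem_side hς (uIcc_of_le hab ▸ ht) θ)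
  have hend : ∀ θ, cos θ = cos 1 → (∫ t in (0)..(K.F.R / 2),
      K.testField ς m T u (K.F.point ς t θ) ⬝ K.F.angular θ) = 0 := fun θ hθ => by
    refine (intervalIntegral.integral_congr fun t ht => ?_).trans intervalIntegral.integral_zero
    rw [uIcc_of_le hab] at ht
    simp only [testField, K.weight_point_far_end hς m T u ht hθ, planeDot_smul_left, zero_mul]
  have hside (θ : ℝ) : K.testField ς m T u (K.F.point ς (K.F.R / 2) θ) ⬝ K.F.radial θ = 0 := by
    rw [testField, K.weight_point_far_side hς, planeDot_smul_left, zero_mul]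
  simp only [deriv_const, mul_one, mul_zero, zero_mul, add_zero, one_mul, hend 1 rfl,
    hend (-1) (cos_neg 1), hside, intervalIntegral.integral_zero, sub_self, zero_sub] at hdiv
  simpa only [mul_neg, intervalIntegral.integral_neg] using hdiv

lemma continuousOn_weight_smul_point (hς : ς ^ 2 = 1) (hT : 0 ≤ T)
    (hu : IsBoundedOnBoundary H Ω C m u) {E : Type*} [NormedAddCommGroup E] [NormedSpace ℝ E]
    {g : ℝ × ℝ → E} (hg : ∀ y ∈ Ω, 0 < sqDist (K.A ς) y → ContDiffAt ℝ 1 g y) :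
    ContinuousOn (fun x : ℝ × ℝ => K.weight ς m T u (K.F.point ς x.1 x.2) • g (K.F.point ς x.1 x.2))
      (Icc 0 (K.F.R / 2) ×ˢ Icc (-1) 1) := fun x hx =>
  ((K.contDiffAt_weight_smul hς hT hu (Frame.point_mem_side hς hx.1 x.2) hg).continuousAt.comp
    (f := fun x : ℝ × ℝ => K.F.point ς x.1 x.2)
    (K.F.continuous_point ς).continuousAt).continuousWithinAt

lemma continuousOn_weight_point (hς : ς ^ 2 = 1) (hT : 0 ≤ T)
    (hu : IsBoundedOnBoundary H Ω C m u) :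
    ContinuousOn (fun x : ℝ × ℝ => K.weight ς m T u (K.F.point ς x.1 x.2))
      (Icc 0 (K.F.R / 2) ×ˢ Icc (-1) 1) := by
  simpa only [smul_eq_mul, mul_one] using
    K.continuousOn_weight_smul_point hς hT hu (g := fun _ => (1 : ℝ)) fun _ _ _ => contDiffAt_const

lemma zero_prodMk_mapsTo : MapsTo (fun θ : ℝ => ((0 : ℝ), θ)) (Icc (-1) 1)
    (Icc 0 (K.F.R / 2) ×ˢ Icc (-1) 1) :=
  fun _ hθ => ⟨left_mem_Icc.2 (by linarith [K.F.R_pos]), hθ⟩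

lemma continuousOn_weight_mul_one_sub_Xr (hς : ς ^ 2 = 1) (hT : 0 ≤ T)
    (hu : IsBoundedOnBoundary H Ω C m u) :
    ContinuousOn (fun θ => K.weight ς m T u (K.F.point ς 0 θ) * (1 - K.F.Xr u ς 0 θ))
      (Icc (-1) 1) := by
  have hslice : ContinuousOn (fun θ : ℝ => ((0 : ℝ), θ)) (Icc (-1) 1) := by fun_prop
  have hweight := (K.continuousOn_weight_point hς hT hu).comp hslice K.zero_prodMk_mapsTo
  have hflux := (K.continuousOn_weight_smul_point hς hT hu fun _ hy _ =>
    hu.isCMCSolution.contDiffAt_slopeField K.isOpen hy).comp hslice K.zero_prodMk_mapsTo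
  refine (hweight.sub (continuousOn_planeDot hflux K.F.continuous_radial.continuousOn)).congr
    fun θ _ => ?_
  simp only [Function.comp_apply, Pi.sub_apply, planeDot_smul_left, Frame.Xr, mul_sub, mul_one]

lemma neg_testField_dot_radial_le (hς : ς ^ 2 = 1) (m T : ℝ) (u : ℝ × ℝ → ℝ) (θ : ℝ) :
    -(ς * (K.testField ς m T u (K.F.point ς 0 θ) ⬝ K.F.radial θ))
      ≤ K.weight ς m T u (K.F.point ς 0 θ) * (1 - K.F.Xr u ς 0 θ) := by
  have hunit := neg_one_le_mul_unitField_dot hς (K.F.radial_dot_radial θ).le (K.A ς)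
    (K.F.point ς 0 θ)
  have hmul := mul_le_mul_of_nonneg_left hunit (K.weight_nonneg ς m T u (K.F.point ς 0 θ))
  have hXr : ς * (ς * K.F.Xr u ς 0 θ) = K.F.Xr u ς 0 θ := by
    linear_combination K.F.Xr u ς 0 θ * hς
  rw [testField, testDirection, planeDot_smul_left, planeDot_add_left, planeDot_smul_left,
    ← Frame.Xr, mul_left_comm, mul_add, hXr]
  linarith

lemma le_mul_planeDiv_testField (hς : ς ^ 2 = 1) (hT : 0 < T)
    (hu : IsBoundedOnBoundary H Ω C m u) (ht : t ∈ Icc 0 (K.F.R / 2)) (θ : ℝ) :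
    1 / 2 * K.weight ς m T u (K.F.point ς t θ) + -(96 * K.F.R * K.ε ^ 4 / T)
      ≤ (K.F.R + ς * t) * planeDiv (K.testField ς m T u) (K.F.point ς t θ) := by
  have hε := K.ε_pos
  have hH := K.H_nonneg
  have hweight := K.weight_nonneg ς m T u (K.F.point ς t θ)
  have hlo := Frame.half_R_le hς ht
  calc 1 / 2 * K.weight ς m T u (K.F.point ς t θ) + -(96 * K.F.R * K.ε ^ 4 / T)
      = K.F.R / 2 * (2 * H * K.weight ς m T u (K.F.point ς t θ))
          - 3 * K.F.R / 2 * (64 * K.ε ^ 4 / T) := by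
        linear_combination (-K.weight ς m T u (K.F.point ς t θ) / 2) * K.two_mul_H_mul_R
    _ ≤ (K.F.R + ς * t) * (2 * H * K.weight ς m T u (K.F.point ς t θ))
          - (K.F.R + ς * t) * (64 * K.ε ^ 4 / T) := by
        gcongr
        exact Frame.le_three_half_R hς ht
    _ = (K.F.R + ς * t) * (2 * H * K.weight ς m T u (K.F.point ς t θ) - 64 * K.ε ^ 4 / T) := by
        ring
    _ ≤ _ := mul_le_mul_of_nonneg_left
        (K.le_planeDiv_testField hς hT hu (Frame.point_mem_side hς ht θ))
        (by linarith [K.F.R_pos])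

lemma integral_neg_testField_dot_radial_le (hς : ς ^ 2 = 1) (hT : 0 ≤ T)
    (hu : IsBoundedOnBoundary H Ω C m u) :
    (∫ θ in (-1)..1, K.F.R * -(ς * (K.testField ς m T u (K.F.point ς 0 θ) ⬝ K.F.radial θ)))
      ≤ K.F.R * ∫ θ in (-1)..1,
          K.weight ς m T u (K.F.point ς 0 θ) * (1 - K.F.Xr u ς 0 θ) := by
  have hcd : (-1 : ℝ) ≤ 1 := by norm_num
  have hfield : ContinuousOn (fun θ => K.testField ς m T u (K.F.point ς 0 θ)) (Icc (-1) 1) :=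
    (K.continuousOn_weight_smul_point hς hT hu fun _ hy hA =>
      contDiffAt_testDirection hu.isCMCSolution K.isOpen hy ς hA).comp
      (f := fun θ : ℝ => ((0 : ℝ), θ)) (by fun_prop) K.zero_prodMk_mapsTo
  rw [← intervalIntegral.integral_const_mul]
  exact intervalIntegral.integral_mono_on hcd
    (ContinuousOn.intervalIntegrable_of_Icc hcd (continuousOn_const.mul (continuousOn_const.mul
      (continuousOn_planeDot hfield K.F.continuous_radial.continuousOn)).neg))
    (ContinuousOn.intervalIntegrable_of_Icc hcd
      (continuousOn_const.mul (K.continuousOn_weight_mul_one_sub_Xr hς hT hu)))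
    fun θ _ => mul_le_mul_of_nonneg_left (K.neg_testField_dot_radial_le hς m T u θ) K.F.R_pos.le

lemma integral_weight_le (hς : ς ^ 2 = 1) (hT : 0 < T)
    (hu : IsBoundedOnBoundary H Ω C m u) :
    1 / 2 * (∫ t in (0)..(K.F.R / 2), ∫ θ in (-1)..1, K.weight ς m T u (K.F.point ς t θ))
      ≤ K.F.R * (∫ θ in (-1)..1,
          K.weight ς m T u (K.F.point ς 0 θ) * (1 - K.F.Xr u ς 0 θ))
        + 96 * K.F.R ^ 2 * K.ε ^ 4 / T := by
  have hab : (0 : ℝ) ≤ K.F.R / 2 := by linarith [K.F.R_pos]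
  have hcd : (-1 : ℝ) ≤ 1 := by norm_num
  have hweight := continuousOn_const (c := (1 / 2 : ℝ)).mul
    (K.continuousOn_weight_point hς hT.le hu)
  have hdiv : ContinuousOn (fun x : ℝ × ℝ => (K.F.R + ς * x.1)
      * planeDiv (K.testField ς m T u) (K.F.point ς x.1 x.2))
      (Icc 0 (K.F.R / 2) ×ˢ Icc (-1) 1) := by
    refine ContinuousOn.mul (by fun_prop) fun x hx => ?_
    exact ((continuousAt_planeDiv (K.contDiffAt_testField hς hT.le hu
      (Frame.point_mem_side hς hx.1 x.2))).comp (f := fun x : ℝ × ℝ => K.F.point ς x.1 x.2)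
      (K.F.continuous_point ς).continuousAt).continuousWithinAt
  have hlower := iteratedIntegral_mono hab hcd
    (f := fun t θ => 1 / 2 * K.weight ς m T u (K.F.point ς t θ) + -(96 * K.F.R * K.ε ^ 4 / T))
    (g := fun t θ => (K.F.R + ς * t) * planeDiv (K.testField ς m T u) (K.F.point ς t θ))
    (hweight.add continuousOn_const) hdiv
    fun t ht θ _ => K.le_mul_planeDiv_testField hς hT hu ht θ
  have hupper := K.integral_neg_testField_dot_radial_le hς hT.le hu
  rw [K.integral_planeDiv_testField hς hT.le hu,
    iteratedIntegral_add hab hcd hweight continuousOn_const] at hlower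
  simp only [intervalIntegral.integral_const_mul, intervalIntegral.integral_const, smul_eq_mul]
    at hlower hupper
  have herror : (1 - -1) * ((K.F.R / 2 - 0) * -(96 * K.F.R * K.ε ^ 4 / T))
      = -(96 * K.F.R ^ 2 * K.ε ^ 4 / T) := by ring
  linarith

end Corner

/-! ### The contradiction at a corner -/

lemma tendsto_integral_mul_one_sub {c d B : ℝ} {g x : ℕ → ℝ → ℝ} (hcd : c ≤ d)
    (hcont : ∀ n, ContinuousOn (fun θ => g n θ * (1 - x n θ)) (Icc c d))
    (hg : ∀ n, ∀ θ ∈ Icc c d, |g n θ| ≤ B) (hx : ∀ n, ∀ θ ∈ Icc c d, |x n θ| ≤ 1)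
    (hlim : ∀ θ ∈ Icc c d, (∀ n, g n θ = 0) ∨ Tendsto (fun n => x n θ) atTop (nhds 1)) :
    Tendsto (fun n => ∫ θ in c..d, g n θ * (1 - x n θ)) atTop (nhds 0) := by
  have hbound (n : ℕ) (θ : ℝ) (hθ : θ ∈ Icc c d) :
      ‖g n θ * (1 - x n θ)‖ ≤ B * (1 - x n θ) := by
    have hx1 : 0 ≤ 1 - x n θ := sub_nonneg.2 (le_of_abs_le (hx n θ hθ))
    rw [Real.norm_eq_abs, abs_mul, abs_of_nonneg hx1]
    exact mul_le_mul_of_nonneg_right (hg n θ hθ) hx1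
  have h := intervalIntegral.tendsto_integral_filter_of_dominated_convergence (μ := volume)
    (a := c) (b := d) (l := atTop) (F := fun n θ => g n θ * (1 - x n θ)) (f := fun _ => (0 : ℝ))
    (fun _ => B * 2) ?_ ?_ intervalIntegrable_const ?_
  · simpa only [intervalIntegral.integral_zero] using h
  all_goals rw [uIoc_of_le hcd]
  · exact Eventually.of_forall fun n =>
      ((hcont n).mono Ioc_subset_Icc_self).aestronglyMeasurable measurableSet_Ioc
  · refine Eventually.of_forall fun n => Eventually.of_forall fun θ hθ => ?_
    have hθ' := Ioc_subset_Icc_self hθ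
    refine (hbound n θ hθ').trans (mul_le_mul_of_nonneg_left ?_ ((abs_nonneg _).trans (hg n θ hθ')))
    linarith [neg_le_of_abs_le (hx n θ hθ')]
  · refine Eventually.of_forall fun θ hθ => ?_
    have hθ' := Ioc_subset_Icc_self hθ
    rcases hlim θ hθ' with hzero | htendsto
    · simp only [hzero, zero_mul, tendsto_const_nhds]
    · refine squeeze_zero_norm (hbound · θ hθ') ?_
      simpa only [sub_self, mul_zero] using (htendsto.const_sub 1).const_mul B

lemma Frame.exists_polarRect (F : Frame) {Ω O : Set (ℝ × ℝ)} {θ₁ b : ℝ} (hΩ : IsOpen Ω)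
    (hO : IsOpen O) (hvertex : F.vertex ∈ O) (hθ₁ : 0 < θ₁)
    (harc : ∀ θ ∈ Ioo 0 θ₁, F.point 1 0 θ ∈ Ω) (hb : 0 < b) :
    ∃ θ₀ w : ℝ, 0 < w ∧ w ≤ b ∧ Icc (θ₀ - w) (θ₀ + w) ⊆ Ioo 0 θ₁ ∧
      ∀ t ∈ Icc (-w) w, ∀ θ ∈ Icc (θ₀ - w) (θ₀ + w), F.point 1 t θ ∈ Ω ∩ O := by
  have hpoint := F.continuous_point 1
  have hnear : ∀ᶠ θ in nhdsWithin (0 : ℝ) (Ioi 0), F.point 1 0 θ ∈ O :=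
    ((hpoint.comp (Continuous.prodMk_right 0)).continuousAt.eventually
      (hO.mem_nhds (by rwa [Function.comp_apply, F.point_zero_zero]))).filter_mono
      nhdsWithin_le_nhds
  obtain ⟨θ₀, hθ₀O, hθ₀⟩ := (hnear.and (Ioo_mem_nhdsGT hθ₁)).exists
  have hnhds : {x : ℝ × ℝ | F.point 1 x.1 x.2 ∈ Ω ∩ O ∧ x.2 ∈ Ioo 0 θ₁} ∈ nhds (0, θ₀) :=
    (hpoint.continuousAt.eventually ((hΩ.inter hO).mem_nhds ⟨harc θ₀ hθ₀, hθ₀O⟩)).and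
      (continuousAt_snd.eventually (Ioo_mem_nhds hθ₀.1 hθ₀.2))
  obtain ⟨w, hball, hw⟩ := (((eventually_closedBall_subset hnhds).filter_mono
    nhdsWithin_le_nhds).and (Ioc_mem_nhdsGT hb)).exists
  rw [← closedBall_prod_same, Real.closedBall_eq_Icc, Real.closedBall_eq_Icc, zero_sub,
    zero_add] at hball
  have hmem (t) (ht : t ∈ Icc (-w) w) (θ) (hθ : θ ∈ Icc (θ₀ - w) (θ₀ + w)) :
      F.point 1 t θ ∈ Ω ∩ O ∧ θ ∈ Ioo 0 θ₁ := @hball (t, θ) ⟨ht, hθ⟩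
  exact ⟨θ₀, w, hw.1, hw.2, fun θ hθ => (hmem 0 ⟨by linarith [hw.1], hw.1.le⟩ θ hθ).2,
    fun t ht θ hθ => (hmem t ht θ hθ).1⟩

/-- The quartic bump of half-width `w` centred at `θ₀`, used as the cut-off of a `Strip`. -/
def quarticBump (θ₀ w θ : ℝ) : ℝ := (w ^ 2 - (θ - θ₀) ^ 2) ^ 2

section quarticBump

variable {θ₀ w θ : ℝ}

lemma contDiff_quarticBump : ContDiff ℝ 1 (quarticBump θ₀ w) := by unfold quarticBump; fun_prop

lemma deriv_quarticBump :
    deriv (quarticBump θ₀ w) θ = -4 * (θ - θ₀) * (w ^ 2 - (θ - θ₀) ^ 2) := by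
  have h := ((((hasDerivAt_id θ).sub_const θ₀).pow 2).const_sub (w ^ 2)).pow 2
  refine (h.congr_deriv ?_).deriv
  simp only [id, Nat.cast_ofNat, Nat.add_one_sub_one, pow_one, Pi.pow_apply]
  ring

lemma sub_sq_le_of_mem_Icc (hθ : θ ∈ Icc (θ₀ - w) (θ₀ + w)) : (θ - θ₀) ^ 2 ≤ w ^ 2 :=
  sq_le_sq' (by linarith [hθ.1]) (by linarith [hθ.2])

lemma quarticBump_le_one (hw : 0 ≤ w) (hw₁ : w ≤ 1) (hθ : θ ∈ Icc (θ₀ - w) (θ₀ + w)) :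
    quarticBump θ₀ w θ ≤ 1 :=
  pow_le_one₀ (sub_nonneg.2 (sub_sq_le_of_mem_Icc hθ))
    (by linarith [sq_nonneg (θ - θ₀), pow_le_one₀ hw hw₁ (n := 2)])

lemma deriv_quarticBump_sq_le (hθ : θ ∈ Icc (θ₀ - w) (θ₀ + w)) :
    deriv (quarticBump θ₀ w) θ ^ 2 ≤ 16 * w ^ 2 * quarticBump θ₀ w θ := by
  rw [deriv_quarticBump, quarticBump]
  linarith [mul_le_mul_of_nonneg_right (sub_sq_le_of_mem_Icc hθ)
    (sq_nonneg (w ^ 2 - (θ - θ₀) ^ 2))]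

lemma integral_quarticBump_pos (hw : 0 < w) :
    0 < ∫ θ in (θ₀ - w)..(θ₀ + w), quarticBump θ₀ w θ := by
  refine intervalIntegral.intervalIntegral_pos_of_pos_on
    (contDiff_quarticBump.continuous.intervalIntegrable _ _) (fun θ hθ => ?_) (by linarith)
  have hlt : (θ - θ₀) ^ 2 < w ^ 2 := sq_lt_sq' (by linarith [hθ.1]) (by linarith [hθ.2])
  exact pow_pos (sub_pos.2 hlt) 2

end quarticBump

/-- The strip on a polar rectangle contained in `Ω`, with the quartic bump as cut-off. -/
def Strip.ofRect {H : ℝ} {Ω : Set (ℝ × ℝ)} (F : Frame) (hΩ : IsOpen Ω) (hF : 2 * H * F.R = 1)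
    {θ₀ w : ℝ} (hw : 0 < w) (hw₁ : w ≤ 1) (hwR : w ≤ F.R / 2)
    (hmem : ∀ t ∈ Icc (-w) w, ∀ θ ∈ Icc (θ₀ - w) (θ₀ + w), F.point 1 t θ ∈ Ω) : Strip H Ω where
  F := F
  s₀ := w
  c := θ₀ - w
  d := θ₀ + w
  K := 16 * w ^ 2
  ζ := quarticBump θ₀ w
  isOpen := hΩ
  two_mul_H_mul_R := hF
  s₀_pos := hw
  s₀_le := hwR
  c_le_d := by linarith
  contDiff_ζ := contDiff_quarticBump
  ζ_nonneg _ _ := sq_nonneg _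
  ζ_le_one _ := quarticBump_le_one hw.le hw₁
  ζ_c := by rw [quarticBump]; ring
  ζ_d := by rw [quarticBump]; ring
  K_pos := by positivity
  deriv_ζ_sq_le _ := deriv_quarticBump_sq_le
  integral_ζ_pos := integral_quarticBump_pos hw
  point_one_mem := hmem

lemma Strip.tendsto_deficit_zero {H : ℝ} {Ω : Set (ℝ × ℝ)} (S : Strip H Ω)
    {v : ℕ → ℝ × ℝ → ℝ} (hv : ∀ n, IsCMCSolution H Ω (v n))
    (hlim : ∀ θ ∈ Icc S.c S.d, Tendsto (fun n => S.F.Xr (v n) 1 0 θ) atTop (nhds 1)) :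
    Tendsto (fun n => S.deficit (v n) 0) atTop (nhds 0) := by
  have hzero : (0 : ℝ) ∈ Icc (-S.s₀) S.s₀ := ⟨by linarith [S.s₀_pos], S.s₀_pos.le⟩
  refine tendsto_integral_mul_one_sub S.c_le_d (B := 1) (fun n => ?_) (fun _ θ hθ => ?_)
    (fun _ _ _ => S.F.abs_Xr_le_one _ _ _ _) fun θ hθ => Or.inr (hlim θ hθ)
  · exact (S.continuousOn_deficit_integrand (hv n) (one_pow 2) subset_rfl).comp
      (f := fun θ : ℝ => ((0 : ℝ), θ)) (by fun_prop) fun θ hθ => ⟨hzero, hθ⟩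
  · rw [abs_of_nonneg (S.ζ_nonneg θ hθ)]
    exact S.ζ_le_one θ hθ

lemma iteratedIntegral_le_of_subset {a b b' c c' d d' : ℝ} {g : ℝ → ℝ → ℝ} (hab : a ≤ b)
    (hbb' : b ≤ b') (hc : c' ≤ c) (hcd : c ≤ d) (hd : d ≤ d') (hg₀ : ∀ t θ, 0 ≤ g t θ)
    (hg : ContinuousOn (fun x : ℝ × ℝ => g x.1 x.2) (Icc a b' ×ˢ Icc c' d')) :
    (∫ t in a..b, ∫ θ in c..d, g t θ) ≤ ∫ t in a..b', ∫ θ in c'..d', g t θ := by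
  have hcd' : c' ≤ d' := hc.trans (hcd.trans hd)
  have hb : Icc a b ⊆ Icc a b' := Icc_subset_Icc_right hbb'
  have hwide := hg.mono (prod_mono_left hb)
  calc (∫ t in a..b, ∫ θ in c..d, g t θ) ≤ ∫ t in a..b, ∫ θ in c'..d', g t θ :=
        intervalIntegral.integral_mono_on hab
          (intervalIntegrable_integral_slice hab hcd
            (hwide.mono (prod_mono_right (Icc_subset_Icc hc hd))))
          (intervalIntegrable_integral_slice hab hcd' hwide) fun t ht =>
          intervalIntegral.integral_mono_interval hc hcd hd (Eventually.of_forall (hg₀ t))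
            (intervalIntegrable_slice hcd' hwide ht)
    _ ≤ ∫ t in a..b', ∫ θ in c'..d', g t θ :=
        intervalIntegral.integral_mono_interval le_rfl hab hbb'
          (Eventually.of_forall fun t => intervalIntegral.integral_nonneg hcd' fun θ _ => hg₀ t θ)
          (intervalIntegrable_integral_slice (hab.trans hbb') hcd' hg)

lemma half_le_sin {θ : ℝ} (hθ₀ : 0 ≤ θ) (hθ₁ : θ ≤ 1) : θ / 2 ≤ sin θ := by
  have h : (1 / 2 : ℝ) ≤ 2 / π := by
    rw [div_le_div_iff₀ two_pos pi_pos]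
    linarith [pi_le_four]
  linarith [mul_le_mul_of_nonneg_right h hθ₀, mul_le_sin hθ₀ (by linarith [pi_gt_three])]

namespace Corner

variable {H : ℝ} {Ω C : Set (ℝ × ℝ)} (K : Corner H Ω C) {ς m T θ θ₁ : ℝ} {u : ℝ × ℝ → ℝ}
  {x : ℝ × ℝ} {v : ℕ → ℝ × ℝ → ℝ}

lemma sin_nonneg_of_point_mem_piece (h : K.F.point ς 0 θ ∈ K.piece ς) : 0 ≤ sin θ := by
  have hR := K.F.R_pos
  have hdisc := K.sqDist_vertex_le_of_mem_closure (subset_closure h.1) h.2.1.le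
  rw [K.F.sqDist_vertex_point, K.F.coord₁_point, K.F.coord₂_point] at hdisc
  have hn₁ : 0 ≤ 1 + K.n₁ := by
    linarith [neg_lt_of_abs_lt (K.abs_ς_mul_n₁_lt (one_pow 2))]
  have hscaled : 2 * K.F.R ^ 2 * ((1 + K.n₁) * (1 - cos θ))
      ≤ 2 * K.F.R ^ 2 * (K.n₂ * sin θ) := by linarith
  refine nonneg_of_mul_nonneg_right ?_ K.n₂_pos
  exact (mul_nonneg hn₁ (sub_nonneg.2 (cos_le_one θ))).trans
    (le_of_mul_le_mul_left hscaled (by positivity))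

lemma mem_Ioo_of_point_mem_piece (hvertex : K.F.vertex ∉ Ω) (hρθ : K.ρ₀ ≤ K.F.R * θ₁ / 4)
    (hθ : θ ∈ Icc (-1) 1) (h : K.F.point ς 0 θ ∈ K.piece ς) : θ ∈ Ioo 0 θ₁ := by
  have hsin := K.sin_nonneg_of_point_mem_piece h
  have hθ₀ : 0 < θ := by
    by_contra! hneg
    rcases hneg.lt_or_eq with hlt | rfl
    · linarith [sin_neg_of_neg_of_neg_pi_lt hlt (by linarith [hθ.1, pi_gt_three])]
    · exact hvertex (K.F.point_zero_zero ς ▸ h.1)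
  have hsq : (K.F.R * sin θ) ^ 2 ≤ K.ρ₀ ^ 2 := by
    have hρ : sqDist K.F.vertex (K.F.point ς 0 θ) < K.ρ₀ ^ 2 := h.2.1
    rw [K.F.sqDist_vertex, K.F.coord₂_point, mul_zero, add_zero] at hρ
    linarith [sq_nonneg (K.F.coord₁ (K.F.point ς 0 θ))]
  have hle : K.F.R * (θ / 2) ≤ K.F.R * (θ₁ / 4) :=
    calc K.F.R * (θ / 2) ≤ K.F.R * sin θ :=
          mul_le_mul_of_nonneg_left (half_le_sin hθ₀.le hθ.2) K.F.R_pos.le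
      _ ≤ K.ρ₀ := (abs_le_of_sq_le_sq' hsq K.ρ₀_pos.le).2
      _ ≤ K.F.R * (θ₁ / 4) := by linarith
  exact ⟨hθ₀, by linarith [le_of_mul_le_mul_left hle K.F.R_pos]⟩

lemma tendsto_flux (hvertex : K.F.vertex ∉ Ω) (hρθ : K.ρ₀ ≤ K.F.R * θ₁ / 4)
    (hv : ∀ n, IsBoundedOnBoundary H Ω C m (v n))
    (hlim : ∀ θ ∈ Ioo 0 θ₁, Tendsto (fun n => K.F.Xr (v n) 1 0 θ) atTop (nhds 1))
    (hς : ς ^ 2 = 1) (hT : 0 ≤ T) :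
    Tendsto (fun n => ∫ θ in (-1)..1, K.weight ς m T (v n) (K.F.point ς 0 θ)
      * (1 - K.F.Xr (v n) ς 0 θ)) atTop (nhds 0) := by
  refine tendsto_integral_mul_one_sub (B := 64 * K.ε ^ 4) (by norm_num)
    (fun n => K.continuousOn_weight_mul_one_sub_Xr hς hT (hv n)) (fun n θ _ => ?_)
    (fun n θ _ => K.F.abs_Xr_le_one _ _ _ _) fun θ hθ => ?_
  · rw [abs_of_nonneg (K.weight_nonneg _ _ _ _ _)]
    exact K.weight_le hς m T _
      (Frame.point_mem_side hς (left_mem_Icc.2 (by linarith [K.F.R_pos])) θ)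
  · by_cases h : K.F.point ς 0 θ ∈ K.piece ς
    · right
      simp only [Frame.Xr, K.F.point_zero ς]
      exact hlim θ (K.mem_Ioo_of_point_mem_piece hvertex hρθ hθ h)
    · exact Or.inl fun n => indicator_of_notMem h _

/-- A lower bound for `sqDist A - e` near the vertex. -/
def minCutoff (ς : ℝ) : ℝ := (K.ε * K.k ς) ^ 2 / 2

/-- A neighbourhood of the vertex where the weight is bounded below by the level step. -/
def cutNhd (ς : ℝ) : Set (ℝ × ℝ) :=
  {x | (sqDist K.F.vertex x < K.ρ₀ ^ 2 ∧ K.cutForm ς x < K.ε * K.k ς ^ 2) ∧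
    K.minCutoff ς < sqDist (K.A ς) x - K.e ς}

lemma isOpen_cutNhd (ς : ℝ) : IsOpen (K.cutNhd ς) :=
  ((isOpen_lt (continuous_sqDist _) continuous_const).inter
    (isOpen_lt (K.continuous_cutForm ς) continuous_const)).inter
    (isOpen_lt continuous_const ((continuous_sqDist _).sub continuous_const))

lemma minCutoff_pos (hς : ς ^ 2 = 1) : 0 < K.minCutoff ς := half_pos (K.ε_mul_k_sq_pos hς)

lemma vertex_mem_cutNhd (hς : ς ^ 2 = 1) : K.F.vertex ∈ K.cutNhd ς := by
  have hsq : sqDist K.F.vertex K.F.vertex = 0 := by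
    rw [K.F.sqDist_vertex, K.F.coord₁_vertex, K.F.coord₂_vertex]; ring
  have hcut : K.cutForm ς K.F.vertex = 0 := by
    rw [cutForm, K.F.coord₁_vertex, K.F.coord₂_vertex]; ring
  refine ⟨⟨?_, ?_⟩, ?_⟩
  · rw [hsq]; exact pow_pos K.ρ₀_pos 2
  · rw [hcut]; exact mul_pos K.ε_pos (pow_pos (K.k_pos hς) 2)
  · rw [K.sqDist_A_sub_e hς, hsq, hcut, minCutoff]
    linarith [K.ε_mul_k_sq_pos hς]

lemma minCutoff_sq_mul_levelStep_le (hς : ς ^ 2 = 1) (m T : ℝ) (u : ℝ × ℝ → ℝ) (hx : x ∈ Ω)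
    (hcut : x ∈ K.cutNhd ς) :
    K.minCutoff ς ^ 2 * levelStep ς m T (u x) ≤ K.weight ς m T u x := by
  have hpiece : x ∈ K.piece ς := ⟨hx, hcut.1⟩
  rw [weight, indicator_of_mem hpiece]
  exact mul_le_mul_of_nonneg_right (pow_le_pow_left₀ (K.minCutoff_pos hς).le
    (hcut.2.le.trans (le_max_left _ _)) 2) (softStep_nonneg _)

lemma exists_strip (hθ₁ : 0 < θ₁) (harc : ∀ θ ∈ Ioo 0 θ₁, K.F.point 1 0 θ ∈ Ω) :
    ∃ S : Strip H Ω, S.F = K.F ∧ Icc S.c S.d ⊆ Ioo 0 (min θ₁ 1) ∧ ∀ ς : ℝ, ς ^ 2 = 1 →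
      ∀ t ∈ Icc (-S.s₀) S.s₀, ∀ θ ∈ Icc S.c S.d, S.F.point 1 t θ ∈ K.cutNhd ς := by
  have hR := K.F.R_pos
  obtain ⟨θ₀, w, hw, hwb, hsub, hrect⟩ := K.F.exists_polarRect (θ₁ := min θ₁ 1)
    (b := min 1 (K.F.R / 2)) K.isOpen ((K.isOpen_cutNhd 1).inter (K.isOpen_cutNhd (-1)))
    ⟨K.vertex_mem_cutNhd (by norm_num), K.vertex_mem_cutNhd (by norm_num)⟩ (by positivity)
    (fun θ hθ => harc θ ⟨hθ.1, hθ.2.trans_le (min_le_left _ _)⟩) (by positivity)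
  refine ⟨.ofRect K.F K.isOpen K.two_mul_H_mul_R hw (hwb.trans (min_le_left _ _))
    (hwb.trans (min_le_right _ _)) fun t ht θ hθ => (hrect t ht θ hθ).1, rfl, hsub,
    fun ς hς t ht θ hθ => ?_⟩
  rcases sq_eq_one_iff.1 hς with rfl | rfl
  exacts [(hrect t ht θ hθ).2.1, (hrect t ht θ hθ).2.2]

lemma minCutoff_sq_mul_bandMass_le (S : Strip H Ω) (hF : S.F = K.F)
    (hS : Icc S.c S.d ⊆ Icc (-1) 1) (hς : ς ^ 2 = 1)
    (hcut : ∀ t ∈ Icc (-S.s₀) S.s₀, ∀ θ ∈ Icc S.c S.d, S.F.point 1 t θ ∈ K.cutNhd ς)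
    (hT : 0 ≤ T) (hu : IsBoundedOnBoundary H Ω C m u) :
    K.minCutoff ς ^ 2 * S.bandMass (levelStep ς m T) u ς 0 S.s₀
      ≤ ∫ t in (0)..(K.F.R / 2), ∫ θ in (-1)..1, K.weight ς m T u (K.F.point ς t θ) := by
  have hs₀ := S.s₀_pos.le
  have hsR : S.s₀ ≤ K.F.R / 2 := hF ▸ S.s₀_le
  have hc := (hS (left_mem_Icc.2 S.c_le_d)).1
  have hd := (hS (right_mem_Icc.2 S.c_le_d)).2
  have hdepth : Icc 0 S.s₀ ⊆ Icc (-S.s₀) S.s₀ := Icc_subset_Icc_left (by linarith)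
  have hweight := K.continuousOn_weight_point hς hT hu
  refine le_trans ?_ (iteratedIntegral_le_of_subset (g := fun t θ => K.weight ς m T u
    (K.F.point ς t θ)) hs₀ hsR hc S.c_le_d hd (fun _ _ => K.weight_nonneg ς m T u _) hweight)
  rw [Strip.bandMass]
  simp only [← intervalIntegral.integral_const_mul]
  refine iteratedIntegral_mono
    (f := fun t θ => K.minCutoff ς ^ 2 * levelStep ς m T (u (S.F.point ς t θ)))
    (g := fun t θ => K.weight ς m T u (K.F.point ς t θ)) hs₀ S.c_le_d
    (continuousOn_const.mul (S.continuousOn_comp_solution hu.isCMCSolution hς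
      (contDiff_levelStep ς m T).continuous hdepth))
    (hweight.mono (prod_mono (Icc_subset_Icc_right hsR) (Icc_subset_Icc hc hd)))
    fun t ht θ hθ => ?_
  rw [← hF]
  refine K.minCutoff_sq_mul_levelStep_le hς m T u (S.point_mem hς (hdepth ht) hθ) ?_
  rw [S.F.point_eq_point_one]
  exact hcut _ (mul_mem_Icc_neg_of_sq_eq_one hς (hdepth ht)) θ hθ

lemma eventually_bandMass_le (S : Strip H Ω) (hF : S.F = K.F)
    (hS : Icc S.c S.d ⊆ Icc (-1) 1) (hς : ς ^ 2 = 1)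
    (hcut : ∀ t ∈ Icc (-S.s₀) S.s₀, ∀ θ ∈ Icc S.c S.d, S.F.point 1 t θ ∈ K.cutNhd ς)
    (hvertex : K.F.vertex ∉ Ω) (hρθ : K.ρ₀ ≤ K.F.R * θ₁ / 4)
    (hv : ∀ n, IsBoundedOnBoundary H Ω C m (v n))
    (hlim : ∀ θ ∈ Ioo 0 θ₁, Tendsto (fun n => K.F.Xr (v n) 1 0 θ) atTop (nhds 1))
    {ε₀ : ℝ} (hε₀ : 0 < ε₀) :
    ∀ᶠ T in atTop, ∀ᶠ n in atTop, S.bandMass (levelStep ς m T) (v n) ς 0 S.s₀ ≤ ε₀ := by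
  have hgoal : 0 < K.minCutoff ς ^ 2 * ε₀ / 4 := by have := K.minCutoff_pos hς; positivity
  have herror : Tendsto (fun T : ℝ => 96 * K.F.R ^ 2 * K.ε ^ 4 / T) atTop (nhds 0) :=
    tendsto_const_nhds.div_atTop tendsto_id
  filter_upwards [eventually_gt_atTop 0, herror.eventually_lt_const hgoal] with T hT hTerror
  have hflux := (K.tendsto_flux hvertex hρθ hv hlim hς hT.le).const_mul K.F.R
  rw [mul_zero] at hflux
  filter_upwards [hflux.eventually_lt_const hgoal] with n hn
  refine le_of_mul_le_mul_left ?_ (pow_pos (K.minCutoff_pos hς) 2)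
  linarith [K.minCutoff_sq_mul_bandMass_le S hF hS hς hcut hT.le (hv n),
    K.integral_weight_le hς hT (hv n)]

/-- The test field makes the band masses small on both sides of the arc, which the strip forbids. -/
theorem not_forall_tendsto_Xr (hm : 0 ≤ m) (hθ₁ : 0 < θ₁) (hvertex : K.F.vertex ∉ Ω)
    (hρθ : K.ρ₀ ≤ K.F.R * θ₁ / 4) (harc : ∀ θ ∈ Ioo 0 θ₁, K.F.point 1 0 θ ∈ Ω)
    (hv : ∀ n, IsBoundedOnBoundary H Ω C m (v n)) :
    ¬∀ θ ∈ Ioo 0 θ₁, Tendsto (fun n => K.F.Xr (v n) 1 0 θ) atTop (nhds 1) := by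
  intro hlim
  obtain ⟨S, hF, hS, hcut⟩ := K.exists_strip hθ₁ harc
  obtain ⟨ε₀, hε₀, hlower⟩ := S.exists_lt_deficit_zero hm
  have hS₁ : Icc S.c S.d ⊆ Icc (-1) 1 := fun θ hθ =>
    ⟨by linarith [(hS hθ).1], (hS hθ).2.le.trans (min_le_right _ _)⟩
  have hupper (ς : ℝ) (hς : ς ^ 2 = 1) :=
    K.eventually_bandMass_le S hF hS₁ hς (hcut ς hς) hvertex hρθ hv hlim hε₀
  obtain ⟨T, ⟨houter, hinner⟩, η, hη, hdeficit⟩ := (((hupper 1 (by norm_num)).and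
    (hupper (-1) (by norm_num))).and hlower).exists
  have hzero := S.tendsto_deficit_zero (fun n => (hv n).isCMCSolution) fun θ hθ => by
    rw [hF]
    exact hlim θ ⟨(hS hθ).1, (hS hθ).2.trans_le (min_le_left _ _)⟩
  obtain ⟨n, ⟨hn₁, hn₂⟩, hn⟩ :=
    ((houter.and hinner).and (hzero.eventually_lt_const hη)).exists
  refine (hdeficit (v n) (hv n).isCMCSolution fun ς hς => ?_).not_gt hn
  rcases sq_eq_one_iff.1 hς with rfl | rfl
  exacts [hn₁, hn₂]

end Corner

/-! ### The end of a connected subset of a circle -/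

lemma exists_angle {x y : ℝ} (h : x ^ 2 + y ^ 2 = 1) :
    ∃ θ ∈ Ioc 0 (2 * π), cos θ = x ∧ sin θ = y := by
  have hnorm : ‖(⟨-x, -y⟩ : ℂ)‖ = 1 := by
    rw [Complex.norm_def, Complex.normSq_mk, neg_mul_neg, neg_mul_neg, ← sq, ← sq, h, sqrt_one]
  have hne : (⟨-x, -y⟩ : ℂ) ≠ 0 := norm_ne_zero_iff.1 (by rw [hnorm]; exact one_ne_zero)
  refine ⟨Complex.arg ⟨-x, -y⟩ + π, ⟨?_, ?_⟩, ?_, ?_⟩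
  · linarith [Complex.neg_pi_lt_arg ⟨-x, -y⟩]
  · linarith [Complex.arg_le_pi ⟨-x, -y⟩]
  · rw [cos_add_pi, Complex.cos_arg hne, hnorm, div_one, neg_neg]
  · rw [sin_add_pi, Complex.sin_arg, hnorm, div_one, neg_neg]

namespace Frame

variable (F : Frame) {L : Set (ℝ × ℝ)} {x : ℝ × ℝ} {a b c θ : ℝ}

lemma point_two_pi : F.point 1 0 (2 * π) = F.vertex := by
  simp [point, radial, vertex]

lemma exists_point_of_sqDist_eq (hx : sqDist F.z x = F.R ^ 2) (hvertex : x ≠ F.vertex) :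
    ∃ θ ∈ Ioo 0 (2 * π), x = F.point 1 0 θ := by
  have hR := F.R_pos.ne'
  have hcoord : ((F.coord₁ x + F.R) / F.R) ^ 2 + (F.coord₂ x / F.R) ^ 2 = 1 := by
    rw [sqDist_z, sqDist_vertex] at hx
    rw [div_pow, div_pow, ← add_div, div_eq_one_iff_eq (pow_ne_zero 2 hR)]
    linear_combination hx
  obtain ⟨θ, hθ, hcos, hsin⟩ := exists_angle hcoord
  have hpoint : x = F.point 1 0 θ := by
    rw [point_eq_ofCoords, hcos, hsin, mul_zero, add_zero, mul_div_cancel₀ _ hR,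
      mul_div_cancel₀ _ hR, add_sub_cancel_right, ofCoords_coord]
  exact ⟨θ, ⟨hθ.1, hθ.2.lt_of_ne fun h => hvertex (by rw [hpoint, h, point_two_pi])⟩, hpoint⟩

/-- The linear form vanishing on the chord from the vertex to the point at angle `c`. -/
def chordForm (c : ℝ) (x : ℝ × ℝ) : ℝ := F.coord₁ x * sin c - F.coord₂ x * (cos c - 1)

lemma continuous_chordForm (c : ℝ) : Continuous (F.chordForm c) :=
  (F.continuous_coord₁.mul continuous_const).sub (F.continuous_coord₂.mul continuous_const)

lemma chordForm_point (c θ : ℝ) : F.chordForm c (F.point 1 0 θ)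
    = 4 * F.R * (sin (c / 2) * sin (θ / 2)) * sin ((c - θ) / 2) := by
  obtain ⟨r, rfl⟩ : ∃ r, c = 2 * r := ⟨c / 2, by ring⟩
  obtain ⟨s, rfl⟩ : ∃ s, θ = 2 * s := ⟨θ / 2, by ring⟩
  rw [chordForm, coord₁_point, coord₂_point, ← mul_sub, mul_div_cancel_left₀ _ two_ne_zero,
    mul_div_cancel_left₀ _ two_ne_zero, mul_div_cancel_left₀ _ two_ne_zero, sin_sub,
    sin_two_mul, sin_two_mul, cos_two_mul, cos_two_mul]
  linear_combination (4 * F.R * sin r * cos r) * sin_sq_add_cos_sq s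
    - 4 * F.R * sin s * cos s * sin_sq_add_cos_sq r

lemma sign_chordForm_point (hc : c ∈ Ioo 0 (2 * π)) (hθ : θ ∈ Ioo 0 (2 * π)) :
    SignType.sign (F.chordForm c (F.point 1 0 θ)) = SignType.sign (c - θ) := by
  have hhalf {s : ℝ} (hs : s ∈ Ioo 0 (2 * π)) : 0 < sin (s / 2) :=
    sin_pos_of_pos_of_lt_pi (by linarith [hs.1]) (by linarith [hs.2])
  have hR := F.R_pos
  have hfactor : 0 < 4 * F.R * (sin (c / 2) * sin (θ / 2)) := by
    have := hhalf hc
    have := hhalf hθ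
    positivity
  rw [chordForm_point, sign_mul, sign_pos hfactor, one_mul]
  rcases lt_trichotomy θ c with h | rfl | h
  · rw [sign_pos (hhalf ⟨sub_pos.2 h, by linarith [hc.2, hθ.1]⟩), sign_pos (sub_pos.2 h)]
  · rw [sub_self, zero_div, sin_zero]
  · rw [← neg_sub θ c, neg_div, sin_neg, Left.sign_neg, Left.sign_neg,
      sign_pos (hhalf ⟨sub_pos.2 h, by linarith [hc.1, hθ.2]⟩), sign_pos (sub_pos.2 h)]

/-- The chord from the vertex to the point at angle `c` separates the two given points. -/
lemma point_mem_of_mem_Ioo (hL : IsPreconnected L) (hcirc : ∀ x ∈ L, sqDist F.z x = F.R ^ 2)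
    (hvertex : F.vertex ∉ L) (ha : 0 < a) (hb : b < 2 * π) (hc : c ∈ Ioo a b)
    (haL : F.point 1 0 a ∈ L) (hbL : F.point 1 0 b ∈ L) : F.point 1 0 c ∈ L := by
  have hc' : c ∈ Ioo 0 (2 * π) := ⟨ha.trans hc.1, hc.2.trans hb⟩
  have hpos : 0 < F.chordForm c (F.point 1 0 a) := by
    rw [← sign_eq_one_iff, F.sign_chordForm_point hc' ⟨ha, hc.1.trans hc'.2⟩]
    exact sign_pos (sub_pos.2 hc.1)
  have hneg : F.chordForm c (F.point 1 0 b) < 0 := by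
    rw [← sign_eq_neg_one_iff, F.sign_chordForm_point hc' ⟨hc'.1.trans hc.2, hb⟩]
    exact sign_neg (sub_neg.2 hc.2)
  obtain ⟨x, hxL, hx⟩ := hL.intermediate_value hbL haL (F.continuous_chordForm c).continuousOn
    ⟨hneg.le, hpos.le⟩
  obtain ⟨θ, hθ, rfl⟩ := F.exists_point_of_sqDist_eq (hcirc x hxL)
    (ne_of_mem_of_not_mem hxL hvertex)
  have hθc : c - θ = 0 := by
    rw [← _root_.sign_eq_zero_iff, ← F.sign_chordForm_point hc' hθ, hx, _root_.sign_zero]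
  rwa [sub_eq_zero.1 hθc]

lemma exists_point_mem_near_vertex (hcirc : ∀ x ∈ L, sqDist F.z x = F.R ^ 2)
    (hvertex : F.vertex ∉ L) (hclosure : F.vertex ∈ closure L) {δ : ℝ} (hδ : δ ∈ Ioo 0 π) :
    ∃ θ ∈ Ioo 0 (2 * π), F.point 1 0 θ ∈ L ∧ (θ < δ ∨ 2 * π - δ < θ) := by
  by_contra! hfar
  have hsub : L ⊆ {x | F.coord₁ x ≤ F.R * cos δ - F.R} := by
    intro x hx
    obtain ⟨θ, hθ, rfl⟩ := F.exists_point_of_sqDist_eq (hcirc x hx)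
      (ne_of_mem_of_not_mem hx hvertex)
    obtain ⟨hδθ, hθδ⟩ := hfar θ hθ hx
    have hcos : cos θ ≤ cos δ := by
      rcases le_total θ π with h | h
      · exact cos_le_cos_of_nonneg_of_le_pi hδ.1.le h hδθ
      · rw [← cos_two_pi_sub θ]
        exact cos_le_cos_of_nonneg_of_le_pi hδ.1.le (by linarith) (by linarith)
    rw [mem_ofPred_eq, coord₁_point, mul_zero, add_zero]
    exact sub_le_sub_right (mul_le_mul_of_nonneg_left hcos F.R_pos.le) _
  have hle : F.coord₁ F.vertex ≤ F.R * cos δ - F.R :=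
    closure_minimal hsub (isClosed_le F.continuous_coord₁ continuous_const) hclosure
  have hcos : cos δ < 1 := by
    rw [← cos_zero]
    exact cos_lt_cos_of_nonneg_of_le_pi le_rfl hδ.2.le hδ.1
  rw [coord₁_vertex] at hle
  linarith [mul_lt_of_lt_one_right F.R_pos hcos]

/-- The same polar coordinates with angles measured in the opposite sense. -/
def reverse : Frame where
  __ := F
  e₂ := -F.e₂
  e₂_dot_self := by
    rw [← neg_one_smul ℝ F.e₂, planeDot_smul_left, planeDot_smul_right, F.e₂_dot_self]; norm_num
  e₁_dot_e₂ := by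
    rw [← neg_one_smul ℝ F.e₂, planeDot_smul_right, F.e₁_dot_e₂, mul_zero]

lemma point_reverse (θ : ℝ) : F.reverse.point 1 0 θ = F.point 1 0 (2 * π - θ) := by
  simp only [point, radial, reverse, cos_two_pi_sub, sin_two_pi_sub, smul_neg, neg_smul]

lemma exists_arc_subset (hL : IsPreconnected L) (hcirc : ∀ x ∈ L, sqDist F.z x = F.R ^ 2)
    (hvertex : F.vertex ∉ L) (hclosure : F.vertex ∈ closure L) :
    ∃ θ₁ > 0, (∀ θ ∈ Ioo 0 θ₁, F.point 1 0 θ ∈ L) ∨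
      ∀ θ ∈ Ioo 0 θ₁, F.reverse.point 1 0 θ ∈ L := by
  have hpi := pi_pos
  have hnear {δ : ℝ} (hδ : δ ∈ Ioo 0 π) := F.exists_point_mem_near_vertex hcirc hvertex hclosure hδ
  obtain ⟨θ₀, hθ₀, hθ₀L, -⟩ := hnear (δ := π / 2) ⟨by linarith, by linarith⟩
  by_cases hsmall : ∀ δ > 0, ∃ a ∈ Ioo 0 δ, F.point 1 0 a ∈ L
  · refine ⟨θ₀, hθ₀.1, .inl fun θ hθ => ?_⟩
    obtain ⟨a, ha, haL⟩ := hsmall θ hθ.1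
    exact F.point_mem_of_mem_Ioo hL hcirc hvertex ha.1 hθ₀.2 ⟨ha.2, hθ.2⟩ haL hθ₀L
  · push Not at hsmall
    obtain ⟨δ₀, hδ₀, hδ₀L⟩ := hsmall
    refine ⟨2 * π - θ₀, sub_pos.2 hθ₀.2, .inr fun θ hθ => ?_⟩
    obtain ⟨δ, hδ, hδθ⟩ := exists_between (lt_min (lt_min hθ.1 hδ₀) hpi)
    obtain ⟨hδθδ₀, hδπ⟩ := lt_min_iff.1 hδθ
    obtain ⟨hδθ, hδδ₀⟩ := lt_min_iff.1 hδθδ₀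
    obtain ⟨b, hb, hbL, hb'⟩ := hnear ⟨hδ, hδπ⟩
    rw [point_reverse]
    have hδb : 2 * π - δ < b :=
      hb'.resolve_left fun h => hδ₀L b ⟨hb.1, h.trans hδδ₀⟩ hbL
    exact F.point_mem_of_mem_Ioo hL hcirc hvertex hθ₀.1 hb.2
      ⟨by linarith [hθ.2], by linarith⟩ hθ₀L hbL

/-- The arc issued from the vertex enters the disc about `y`. -/
lemma coord₂_pos_of_arc_subset {Ω V : Set (ℝ × ℝ)} {y : ℝ × ℝ} {θ₁ : ℝ} (hθ₁ : 0 < θ₁)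
    (hV : IsOpen V) (hvertex : F.vertex ∈ V) (hy : sqDist F.vertex y = F.R ^ 2)
    (harc : ∀ θ ∈ Ioo 0 θ₁, F.point 1 0 θ ∈ Ω)
    (hdisc : ∀ x ∈ Ω ∩ V, sqDist y x < F.R ^ 2) : 0 < F.coord₂ y := by
  have hR := F.R_pos
  have hcont : Continuous fun θ => F.point 1 0 θ :=
    (F.continuous_point 1).comp (Continuous.prodMk_right 0)
  rw [← F.point_zero_zero 1] at hvertex
  have hnear : ∀ᶠ θ in nhdsWithin 0 (Ioi 0), F.point 1 0 θ ∈ V :=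
    (hcont.continuousAt.eventually (hV.mem_nhds hvertex)).filter_mono nhdsWithin_le_nhds
  obtain ⟨θ, hθV, hθ, hθmin⟩ := (hnear.and (Ioo_mem_nhdsGT (lt_min hθ₁ pi_pos))).exists
  obtain ⟨hθθ₁, hθπ⟩ := lt_min_iff.1 hθmin
  have hsin : 0 < sin θ := sin_pos_of_pos_of_lt_pi hθ hθπ
  have hlt := hdisc _ ⟨harc θ ⟨hθ, hθθ₁⟩, hθV⟩
  rw [sqDist_eq_sqDist_vertex, hy, sqDist_vertex_point, coord₁_point, coord₂_point, mul_zero,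
    add_zero] at hlt
  have hcoord₁ : 0 ≤ F.coord₁ y + F.R := by
    rw [sqDist_vertex] at hy
    linarith [(abs_le_of_sq_le_sq' (by linarith [sq_nonneg (F.coord₂ y)]) hR.le :
      -F.R ≤ F.coord₁ y ∧ F.coord₁ y ≤ F.R).1]
  have hmul : (1 - cos θ) * (F.coord₁ y + F.R) < F.coord₂ y * sin θ := by
    refine lt_of_mul_lt_mul_left ?_ (by positivity : (0 : ℝ) ≤ 2 * F.R)
    linarith
  exact pos_of_mul_pos_left
    ((mul_nonneg (sub_nonneg.2 (cos_le_one θ)) hcoord₁).trans_lt hmul) hsin.le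

end Frame

/-! ### Divergence lines ending on the boundary -/

lemma sqDist_eq_enorm2_sq (y x : ℝ × ℝ) : sqDist y x = enorm2 (x - y) ^ 2 := (enorm2_sq _).symm

lemma sqDist_comm (x y : ℝ × ℝ) : sqDist x y = sqDist y x := by
  simp only [sqDist, planeDot, Prod.fst_sub, Prod.snd_sub]
  ring

lemma exists_sqDist_le_subset {P : ℝ × ℝ} {O : Set (ℝ × ℝ)} (hO : O ∈ nhds P) {s : ℝ}
    (hs : 0 < s) : ∃ ρ ∈ Ioc 0 s, ∀ x, sqDist P x ≤ ρ ^ 2 → x ∈ O := by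
  obtain ⟨ρ, hball, hρ⟩ := (((eventually_closedBall_subset hO).filter_mono
    nhdsWithin_le_nhds).and (Ioc_mem_nhdsGT hs)).exists
  refine ⟨ρ, hρ, fun x hx => hball ?_⟩
  rw [sqDist, planeDot, ← sq, ← sq, Prod.fst_sub, Prod.snd_sub] at hx
  rw [Metric.mem_closedBall, Prod.dist_eq, Real.dist_eq, Real.dist_eq]
  exact max_le (abs_le_of_sq_le_sq (by linarith [sq_nonneg (x.2 - P.2)]) hρ.1.le)
    (abs_le_of_sq_le_sq (by linarith [sq_nonneg (x.1 - P.1)]) hρ.1.le)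

namespace Frame

variable {F : Frame} {H : ℝ}

lemma exists_corner {Ω U V : Set (ℝ × ℝ)} {y : ℝ × ℝ} {s : ℝ} (hΩ : IsOpen Ω)
    (hHR : 2 * H * F.R = 1) (hU : U ∈ nhds F.vertex) (hV : IsOpen V) (hvertex : F.vertex ∈ V)
    (hy : sqDist F.vertex y = F.R ^ 2) (hy₂ : 0 < F.coord₂ y)
    (hdisc : ∀ x ∈ Ω ∩ V, sqDist y x < F.R ^ 2) (hs : 0 < s) :
    ∃ K : Corner H Ω (frontier Ω ∩ U), K.F = F ∧ K.ρ₀ ≤ s := by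
  obtain ⟨ρ, ⟨hρ, hρs⟩, hnear⟩ := exists_sqDist_le_subset
    (Filter.inter_mem hU (hV.mem_nhds hvertex)) (lt_min hs (div_pos hy₂ (by norm_num : (0:ℝ) < 50)))
  have hclosure : closure (Ω ∩ V) ⊆ {x | sqDist y x ≤ F.R ^ 2} :=
    closure_minimal (fun x hx => (hdisc x hx).le)
      (isClosed_le (continuous_sqDist y) continuous_const)
  exact ⟨{ F := F, center := y, ρ₀ := ρ, ε := ρ / 3, isOpen := hΩ, two_mul_H_mul_R := hHR
           sqDist_vertex_center := hy
           coord₂_center_pos := hy₂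
           ρ₀_le := by linarith [hρs.trans (min_le_right _ _)]
           ε_pos := by positivity
           ε_lt := by linarith
           sqDist_center_le := fun x hx hxρ =>
             hclosure (inter_comm V Ω ▸ hV.inter_closure ⟨(hnear x hxρ).2, hx⟩)
           mem_of_mem_frontier := fun x hx hxρ => ⟨hx, (hnear x hxρ).1⟩ },
    rfl, hρs.trans (min_le_left _ _)⟩

lemma exists_frame {z P : ℝ × ℝ} {R : ℝ} (hR : 0 < R) (hP : sqDist z P = R ^ 2) :
    ∃ F : Frame, F.z = z ∧ F.R = R ∧ F.vertex = P := by
  have hunit : (R⁻¹ • (P - z)) ⬝ (R⁻¹ • (P - z)) = 1 := by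
    rw [planeDot_smul_left, planeDot_smul_right, ← sqDist, hP]
    field_simp
  obtain ⟨e, he⟩ : ∃ e, e = R⁻¹ • (P - z) := ⟨_, rfl⟩
  have hvertex : z + R • e = P := by rw [he, smul_inv_smul₀ hR.ne', add_sub_cancel]
  rw [← he] at hunit
  refine ⟨⟨z, e, (-e.2, e.1), R, hunit, ?_, ?_, hR⟩, rfl, rfl, hvertex⟩
  · rw [← hunit]
    simp only [planeDot]
    ring
  · simp only [planeDot]
    ring

lemma tendsto_Xr_of_tendsto_normalVec {u : ℕ → ℝ × ℝ → ℝ} {θ : ℝ} (hHR : 2 * H * F.R = 1)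
    (h : Tendsto (fun n => normalVec (u n) (F.point 1 0 θ)) atTop
      (nhds (2 * H * (F.z.1 - (F.point 1 0 θ).1), 2 * H * (F.z.2 - (F.point 1 0 θ).2), 0))) :
    Tendsto (fun n => F.Xr (u n) 1 0 θ) atTop (nhds 1) := by
  have hsub : F.z - F.point 1 0 θ = -F.R • F.radial θ := by
    rw [point, mul_zero, add_zero, sub_add_cancel_left, neg_smul]
  have h₁ : F.z.1 - (F.point 1 0 θ).1 = -F.R * (F.radial θ).1 := congrArg Prod.fst hsub
  have h₂ : F.z.2 - (F.point 1 0 θ).2 = -F.R * (F.radial θ).2 := congrArg Prod.snd hsub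
  have hunit := F.radial_dot_radial θ
  convert (h.fst_nhds.mul_const (-(F.radial θ).1)).add
    (h.snd_nhds.fst_nhds.mul_const (-(F.radial θ).2)) using 2
  · simp only [Xr, slopeField, planeGrad, planeDot, normalVec, Prod.smul_fst, Prod.smul_snd,
      smul_eq_mul]
    ring
  · rw [h₁, h₂]
    rw [planeDot] at hunit
    linear_combination -hunit - ((F.radial θ).1 ^ 2 + (F.radial θ).2 ^ 2) * hHR

end Frame

lemma IsDivergenceLine.exists_arc {H : ℝ} {Ω L : Set (ℝ × ℝ)} {u : ℕ → ℝ × ℝ → ℝ} {P : ℝ × ℝ}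
    (hH : 0 < H) (hL : IsDivergenceLine H Ω u L)
    (hPL : P ∈ closure L) (hPΩ : P ∉ Ω) :
    ∃ (F : Frame) (θ₁ : ℝ) (φ : ℕ → ℕ), 0 < θ₁ ∧ 2 * H * F.R = 1 ∧ F.vertex = P ∧
      ∀ θ ∈ Ioo 0 θ₁, F.point 1 0 θ ∈ Ω ∧
        Tendsto (fun n => F.Xr (u (φ n)) 1 0 θ) atTop (nhds 1) := by
  obtain ⟨z, hLΩ, hLz, hLconn, -, φ, -, hφ⟩ := hL
  have hcirc (x) (hx : x ∈ L) : sqDist z x = (1 / (2 * H)) ^ 2 := by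
    rw [sqDist_eq_enorm2_sq, hLz x hx]
  obtain ⟨F, rfl, hFR, rfl⟩ := Frame.exists_frame (by positivity : 0 < 1 / (2 * H))
    (closure_minimal hcirc (isClosed_eq (continuous_sqDist z) continuous_const) hPL)
  have hHR : 2 * H * F.R = 1 := by rw [hFR, mul_one_div_cancel (by positivity)]
  rw [← hFR] at hcirc
  obtain ⟨θ₁, hθ₁, harc | harc⟩ := F.exists_arc_subset hLconn.isPreconnected hcirc
    (fun h => hPΩ (hLΩ h)) hPL
  · exact ⟨F, θ₁, φ, hθ₁, hHR, rfl, fun θ hθ => ⟨hLΩ (harc θ hθ),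
      Frame.tendsto_Xr_of_tendsto_normalVec hHR (hφ _ (harc θ hθ))⟩⟩
  · exact ⟨F.reverse, θ₁, φ, hθ₁, hHR, rfl, fun θ hθ => ⟨hLΩ (harc θ hθ),
      Frame.tendsto_Xr_of_tendsto_normalVec hHR (hφ _ (harc θ hθ))⟩⟩

theorem stmt_13_general {H M : ℝ} {Ω U L : Set (ℝ × ℝ)} {u : ℕ → ℝ × ℝ → ℝ} {P : ℝ × ℝ}
    (hH : 0 < H) (hΩ : IsOpen Ω)
    (hU : IsOpen U) (hP : P ∈ frontier Ω ∩ U)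
    (hcurv : ∃ z : ℝ × ℝ, enorm2 (P - z) = 1 / (2 * H) ∧
      ∃ V : Set (ℝ × ℝ), IsOpen V ∧ P ∈ V ∧
        Ω ∩ V ⊆ {q : ℝ × ℝ | enorm2 (q - z) < 1 / (2 * H)})
    (hu : ∀ n, IsCMCSolution H Ω (u n))
    (hcont : ∀ n, ContinuousOn (u n) (Ω ∪ (frontier Ω ∩ U)))
    (hM : ∀ n, ∀ Q ∈ frontier Ω ∩ U, |u n Q| ≤ M) (hL : IsDivergenceLine H Ω u L) :
    P ∉ closure L := by
  intro hPL
  have hPΩ : P ∉ Ω := (hΩ.frontier_eq ▸ hP.1).2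
  obtain ⟨F, θ₁, φ, hθ₁, hHR, rfl, harc⟩ := hL.exists_arc hH hPL hPΩ
  obtain ⟨y, hy, V, hV, hPV, hΩV⟩ := hcurv
  rw [← eq_one_div_of_mul_eq_one_right hHR] at hy hΩV
  have hy' : sqDist F.vertex y = F.R ^ 2 := by rw [sqDist_comm, sqDist_eq_enorm2_sq, hy]
  have hdisc (x) (hx : x ∈ Ω ∩ V) : sqDist y x < F.R ^ 2 := by
    rw [sqDist_eq_enorm2_sq]
    exact pow_lt_pow_left₀ (hΩV hx) (sqrt_nonneg _) two_ne_zero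
  have hy₂ := F.coord₂_pos_of_arc_subset hθ₁ hV hPV hy' (fun θ hθ => (harc θ hθ).1) hdisc
  obtain ⟨K, rfl, hKρ⟩ := Frame.exists_corner hΩ hHR (hU.mem_nhds hP.2) hV hPV hy' hy₂ hdisc
    (by have := F.R_pos; positivity : 0 < F.R * θ₁ / 4)
  have hM₀ : 0 ≤ M := (abs_nonneg _).trans (hM 0 _ hP)
  exact K.not_forall_tendsto_Xr (m := M + 1) (by linarith) hθ₁ hPΩ hKρ
    (fun θ hθ => (harc θ hθ).1)
    (fun n => ⟨hu (φ n), hcont (φ n), fun x hx => (hM _ x hx).trans_lt (lt_add_one M)⟩)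
    fun θ hθ => (harc θ hθ).2

/-- if the `u_n` are uniformly bounded on a boundary arc `C` of exterior
curvature at least `2H`, then no divergence line has an endpoint on `C`. -/
theorem stmt_13 (H : ℝ) (hH : 0 < H) (Ω : Set (ℝ × ℝ)) (hΩ : IsOpen Ω)
    (hΩconn : IsConnected Ω) (C : Set (ℝ × ℝ)) (hCne : C.Nonempty)
    (hCconn : IsPreconnected C)
    (hCopen : ∃ U : Set (ℝ × ℝ), IsOpen U ∧ C = frontier Ω ∩ U)
    (hcurv : ∀ P ∈ C, ∃ z : ℝ × ℝ, enorm2 (P - z) = 1 / (2 * H) ∧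
      ∃ V : Set (ℝ × ℝ), IsOpen V ∧ P ∈ V ∧
        Ω ∩ V ⊆ {q : ℝ × ℝ | enorm2 (q - z) < 1 / (2 * H)})
    (u : ℕ → ℝ × ℝ → ℝ) (hu : ∀ n, IsCMCSolution H Ω (u n))
    (hcont : ∀ n, ContinuousOn (u n) (Ω ∪ C))
    (M : ℝ) (hM : ∀ n, ∀ P ∈ C, |u n P| ≤ M) :
    ∀ L : Set (ℝ × ℝ), IsDivergenceLine H Ω u L → closure L ∩ C = ∅ := by
  obtain ⟨U, hU, rfl⟩ := hCopen
  exact fun L hL => eq_empty_iff_forall_notMem.2 fun P hP =>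
    stmt_13_general hH hΩ hU hP.2 (hcurv P hP.2) hu hcont hM hL hP.1
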